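/- Let t₁ < t₂, let c : ℝ × (t₁,t₂) → ℝ be bounded, and let v ≢ 0 be a bounded classical solution of v_t = v_xx + c(x,t)v on ℝ × (t₁,t₂). Then for each t ∈ (t₁,t₂) the zeros of v(·,t) do not accumulate in ℝ. Furthermore: (1) Z[v(·,t)] is nonincreasing in t on (t₁,t₂), and for any t'' < t' in (t₁,t₂), every sign pattern realized by v(·,t') is also realized by v(·,t''); (2) if there exist x' ∈ ℝ and t' ∈ (t₁,t₂) with v(x',t') = v_x(x',t') = 0, then Z[v(·,t)] − 2 ≥ Z[v(·,s)] ≥ 0 for all t ∈ (t₁,t') and s ∈ (t',t₂), whenever Z[v(·,t)] < ∞. -/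

import Mathlib

/-!
Throughout, only the inequality `|v_t - v_xx| ≤ C |v|` and the boundedness of `v` are used.

*Sign patterns.* From a point `(x, t')` where `v` has sign `ε` one can travel back to any earlier
time along a continuous curve `t ↦ γ(t)` on which `v` keeps the sign `ε` (`ZN.exists_path`); this is
the maximum principle on the set of points reachable in this way. Curves of opposite signs cannot
cross, so every sign pattern realized at time `t'` is realized at earlier times
(`ZN.pattern_mono`), and the zero number is nonincreasing.

*Local structure.* Fix `(x₀, t₀)` and let `u_ℓ(y) = v(x₀ + ℓ y, t₀ - ℓ²/2)`. The coefficients `c_j`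
of `u_ℓ` in the orthonormal basis of Hermite polynomials of `L²` of the standard Gaussian measure
satisfy `ℓ c_j' = j c_j - ℓ² φ_j` with `∑ φ_j² ≤ C² H`, where `H = ∑ c_j²` (`ZN.Sol.dyn`). Up to the
perturbation, `c_j² ∼ ℓ^{2j}`, so `(H - (1 + M) ∑_{j ≤ n} c_j²) / ℓ^{2n+1}` increases with `ℓ` at
small scales (`ZN.Dyn.growth`). It follows that one mode `n` asymptotically carries all the energy
as `ℓ → 0`, and that `H ≥ κ ℓ^{2n+1}` (`ZN.Dyn.dominant`); in particular `v` cannot vanish to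
infinite order.

*Values at time `t₀`.* The value `v(x₀ ± ℓ, t₀)` differs from the corresponding Gaussian average of
`v` at time `t₀ - ℓ²/2` by `O(ℓ²)` times the average of `|v|` (`ZN.value_avg`, which rests on Kato's
inequality), and the average is controlled by the dominant mode. Hence
`v(x₀ ± ℓ, t₀)² ≥ κ' ℓ^{2n+1}` (`ZN.Mode.value_lower`). So zeros are isolated, and a solution that
is nonzero at some time is nonzero at all later times (`ZN.ne_zero_all`).

*Multiple zeros.* If `v = v_x = 0` at `(x₀, t₀)`, then `v(x₀ + ℓ, t₀) = O(ℓ²)`, which forces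
`n ≥ 2`. The Hermite polynomial of degree `n ≥ 2` realizes both `(+,-)` and `(-,+)`
(`ZN.he_pattern`), hence so does `v` near `x₀` just before `t₀` (`ZN.Mode.pairs`). One of the two
pairs can be inserted into any alternating pattern realized at time `t₀`, which yields two more sign
changes at earlier times (`ZN.pattern_gain`).
-/

open Real Filter Topology Set
open scoped Classical

noncomputable section

def SignChanges (w : ℝ → ℝ) (m : ℕ) : Prop :=
  ∃ x : ℕ → ℝ, StrictMono x ∧ ∀ i < m, w (x i) * w (x (i + 1)) < 0

/-- The zero number `Z[w] ∈ {−1, 0, 1, …, ∞}` (Definition 2.1). -/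
noncomputable def zeroNumber (w : ℝ → ℝ) : WithBot ℕ∞ :=
  if w = 0 then ⊥
  else ((sSup {k : ℕ∞ | ∃ m : ℕ, k = (m : ℕ∞) ∧ 1 ≤ m ∧ SignChanges w m} : ℕ∞) : WithBot ℕ∞)

/-- `w` realizes the sign pattern `(ε 0, …, ε (m−1))`. -/
def RealizesPattern (w : ℝ → ℝ) (m : ℕ) (ε : ℕ → ℝ) : Prop :=
  ∃ x : ℕ → ℝ, StrictMono x ∧ ∀ i < m, 0 < ε i * w (x i)

/-! ### Gaussian measure and Hermite polynomials -/

namespace ZN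
open MeasureTheory ProbabilityTheory Polynomial

/-- The standard Gaussian measure on `ℝ`. -/
abbrev gam : Measure ℝ := gaussianReal 0 1

/-- The probabilists' Hermite polynomials, through `He_{n+1} = X He_n - He_n'`. -/
def He : ℕ → ℝ[X]
  | 0 => 1
  | n + 1 => X * He n - derivative (He n)

lemma derivative_He (n : ℕ) : derivative (He (n + 1)) = C ((n : ℝ) + 1) * He n := by
  induction n with
  | zero => simp [He]
  | succ n ih =>
    have h1 : He (n + 1 + 1) = X * He (n + 1) - derivative (He (n + 1)) := rfl
    rw [h1, derivative_sub, derivative_mul, ih]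
    have h2 : He (n + 1) = X * He n - derivative (He n) := rfl
    simp only [derivative_X, derivative_mul, derivative_C]
    push_cast
    simp only [map_add, map_one]
    linear_combination (-(C (n:ℝ)) - 1) * h2

lemma He_ode (n : ℕ) :
    derivative (derivative (He n)) - X * derivative (He n) = - (C (n : ℝ) * He n) := by
  have h := derivative_He n
  have h1 : He (n + 1) = X * He n - derivative (He n) := rfl
  rw [h1, derivative_sub, derivative_mul, derivative_X, map_add, map_one] at h
  linear_combination -h

lemma He_monic (n : ℕ) : (He n).natDegree = n ∧ (He n).Monic := by
  induction n with
  | zero => simp [He]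
  | succ n ih =>
    obtain ⟨h1, h2⟩ := ih
    have hm : (X * He n).Monic := monic_X.mul h2
    have hd : (X * He n).natDegree = n + 1 := by
      rw [Monic.natDegree_mul monic_X h2, h1]; simp; ring
    have hlt : (derivative (He n)).degree < (X * He n).degree := by
      rw [degree_eq_natDegree hm.ne_zero, hd]
      refine lt_of_le_of_lt degree_le_natDegree ?_
      have := natDegree_derivative_le (He n)
      rw [h1] at this
      exact_mod_cast (by omega : (derivative (He n)).natDegree < n + 1)
    refine ⟨?_, ?_⟩
    · show (X * He n - derivative (He n)).natDegree = n + 1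
      rw [natDegree_sub_eq_left_of_natDegree_lt, hd]
      rw [hd]
      have := natDegree_derivative_le (He n)
      omega
    · exact hm.sub_of_left hlt

lemma integrable_poly (q : ℝ[X]) : Integrable (fun y => q.eval y) gam := by
  induction q using Polynomial.induction_on' with
  | add p q hp hq => simp only [eval_add]; exact hp.add hq
  | monomial n a =>
    simp only [eval_monomial]
    refine Integrable.const_mul ?_ a
    have h0 : (0:ℝ) ∈ interior (integrableExpSet id gam) := by
      rw [integrableExpSet_id_gaussianReal]; simp
    exact integrable_pow_of_mem_interior_integrableExpSet h0 n

lemma memLp_poly (q : ℝ[X]) : MemLp (fun y => q.eval y) 2 gam := by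
  rw [memLp_two_iff_integrable_sq (by fun_prop)]
  exact (integrable_poly (q ^ 2)).congr (ae_of_all _ fun y => by simp)

lemma pdf_eq (y : ℝ) : gaussianPDFReal 0 1 y = (√(2 * π))⁻¹ * rexp (-(y ^ 2 / 2)) := by
  simp [gaussianPDFReal]; left; ring

lemma hasDerivAt_pdf (y : ℝ) :
    HasDerivAt (gaussianPDFReal 0 1) (-y * gaussianPDFReal 0 1 y) y := by
  have : gaussianPDFReal 0 1 = fun y => (√(2 * π))⁻¹ * rexp (-(y ^ 2 / 2)) := funext pdf_eq
  rw [pdf_eq, this]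
  have h : HasDerivAt (fun y : ℝ => -(y ^ 2 / 2)) (-y) y := by
    exact ((hasDerivAt_pow 2 y).div_const 2).neg.congr_deriv (by norm_num)
  exact ((h.exp).const_mul _).congr_deriv (by ring)

lemma continuous_pdf : Continuous (gaussianPDFReal 0 1) :=
  continuous_iff_continuousAt.2 fun y => (hasDerivAt_pdf y).continuousAt

lemma integrable_gam_iff (g : ℝ → ℝ) :
    Integrable g gam ↔ Integrable (fun y => gaussianPDFReal 0 1 y * g y) volume := by
  rw [gam, gaussianReal_of_var_ne_zero 0 one_ne_zero,
    integrable_withDensity_iff_integrable_smul' (measurable_gaussianPDF _ _)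
      (ae_of_all _ fun _ => gaussianPDF_lt_top)]
  simp [toReal_gaussianPDF]

lemma integral_gam (g : ℝ → ℝ) : ∫ y, g y ∂gam = ∫ y, gaussianPDFReal 0 1 y * g y := by
  rw [integral_gaussianReal_eq_integral_smul one_ne_zero]; rfl

/-- Gaussian integration by parts. -/
lemma stein (q : ℝ[X]) : ∫ y, (X * q - derivative q).eval y ∂gam = 0 := by
  rw [integral_gam]
  have h := integral_eq_zero_of_hasDerivAt_of_integrable
    (f := fun y => gaussianPDFReal 0 1 y * q.eval y)
    (f' := fun y => -(gaussianPDFReal 0 1 y * (X * q - derivative q).eval y))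
    (fun y => by
      exact ((hasDerivAt_pdf y).mul (q.hasDerivAt y)).congr_deriv (by simp; ring))
    ((integrable_gam_iff _).1 (integrable_poly _)).neg
    ((integrable_gam_iff _).1 (integrable_poly _))
  rw [integral_neg] at h
  linarith

lemma integral_He_succ_mul (n : ℕ) (q : ℝ[X]) :
    ∫ y, (He (n + 1) * q).eval y ∂gam = ∫ y, (He n * derivative q).eval y ∂gam := by
  have h := stein (He n * q)
  have h2 : He (n + 1) * q = (X * (He n * q) - derivative (He n * q)) + He n * derivative q := by
    show (X * He n - derivative (He n)) * q = _
    rw [derivative_mul]; ring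
  rw [h2]
  simp_rw [eval_add]
  rw [integral_add (integrable_poly _) (integrable_poly _), h, zero_add]

lemma integral_He_mul (n : ℕ) (q : ℝ[X]) :
    ∫ y, (He n * q).eval y ∂gam = ∫ y, (derivative^[n] q).eval y ∂gam := by
  induction n generalizing q with
  | zero => simp [He]
  | succ n ih => rw [integral_He_succ_mul, ih]; rfl

lemma integral_He_mul_of_lt {n : ℕ} {q : ℝ[X]} (h : q.natDegree < n) :
    ∫ y, (He n * q).eval y ∂gam = 0 := by
  rw [integral_He_mul, iterate_derivative_eq_zero h]; simp

lemma integral_He_sq (n : ℕ) : ∫ y, (He n * He n).eval y ∂gam = (n.factorial : ℝ) := by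
  rw [integral_He_mul]
  obtain ⟨h1, h2⟩ := He_monic n
  have : derivative^[n] (He n) = C ((n.factorial : ℝ)) := by
    rw [eq_C_of_natDegree_le_zero (p := derivative^[n] (He n))]
    · rw [coeff_iterate_derivative]
      have : (He n).coeff n = 1 := by rw [← h2.coeff_natDegree, h1]
      simp [this, Nat.descFactorial_self]
    · have := natDegree_iterate_derivative (He n) n
      omega
  rw [this]; simp

/-- The normalised Hermite polynomial `He_n / √(n!)`; these are orthonormal in `L²(gam)`. -/
def he (n : ℕ) : ℝ[X] := C (√(n.factorial : ℝ))⁻¹ * He n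

lemma fact_sqrt_pos (n : ℕ) : 0 < √(n.factorial : ℝ) :=
  Real.sqrt_pos.2 (by exact_mod_cast n.factorial_pos)

lemma integral_he_mul_he (i j : ℕ) :
    ∫ y, (he i).eval y * (he j).eval y ∂gam = if i = j then 1 else 0 := by
  wlog hij : j ≤ i generalizing i j
  · have := this j i (by omega)
    simp_rw [mul_comm ((he i).eval _)]
    rw [this]; simp [eq_comm]
  have h : ∀ y, (he i).eval y * (he j).eval y
      = ((√(i.factorial : ℝ))⁻¹ * (√(j.factorial : ℝ))⁻¹) * (He i * He j).eval y := by
    intro y; simp [he]; ring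
  simp_rw [h]
  rw [integral_const_mul]
  rcases hij.eq_or_lt with rfl | hlt
  · rw [integral_He_sq]
    have := fact_sqrt_pos j
    have h2 := Real.mul_self_sqrt (show (0:ℝ) ≤ (j.factorial:ℝ) by positivity)
    simp; field_simp; nlinarith
  · rw [integral_He_mul_of_lt (by rw [(He_monic j).1]; exact hlt)]
    simp [ne_of_gt hlt]

/-- `he_n` is an eigenfunction, with eigenvalue `-n`, of the Ornstein–Uhlenbeck operator
`q ↦ q'' - y q'`. -/
lemma he_ode (n : ℕ) (y : ℝ) :
    (derivative (derivative (he n)) - X * derivative (he n)).eval y = - (n : ℝ) * (he n).eval y := by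
  have h := congrArg (eval y) (He_ode n)
  simp [he] at h ⊢
  linear_combination (√(n.factorial : ℝ))⁻¹ * h

lemma integral_He_shift (n : ℕ) (η : ℝ) : ∫ y, (He n).eval (y + η) ∂gam = η ^ n := by
  induction n with
  | zero => simp [He]
  | succ n ih =>
    have h := stein ((He n).comp (X + C η))
    have h2 : ∀ y, (He (n + 1)).eval (y + η)
        = (X * (He n).comp (X + C η) - derivative ((He n).comp (X + C η))).eval y
          + η * ((He n).comp (X + C η)).eval y := by
      intro y
      show (X * He n - derivative (He n)).eval (y + η) = _
      simp [derivative_comp]; ring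
    simp_rw [h2]
    rw [integral_add (integrable_poly _) ((integrable_poly _).const_mul _), h, integral_const_mul]
    simp [ih]; ring

end ZN

/-! ### Hermite expansions in `L²` -/

namespace ZN
open MeasureTheory ProbabilityTheory Polynomial

/-- Two measures with everywhere finite exponential moments and equal moments have the same moment
generating function, since both functions are analytic on `ℝ` with the same Taylor series at `0`. -/
lemma mgf_eq_of_moments {μ ν : Measure ℝ}
    (hμ : integrableExpSet id μ = univ) (hν : integrableExpSet id ν = univ)
    (h : ∀ n : ℕ, ∫ y, y ^ n ∂μ = ∫ y, y ^ n ∂ν) : mgf id μ = mgf id ν := by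
  have aμ : AnalyticOnNhd ℝ (mgf id μ) univ := by
    have := analyticOnNhd_mgf (X := id) (μ := μ); rwa [hμ, interior_univ] at this
  have aν : AnalyticOnNhd ℝ (mgf id ν) univ := by
    have := analyticOnNhd_mgf (X := id) (μ := ν); rwa [hν, interior_univ] at this
  refine aμ.eq_of_eventuallyEq aν (z₀ := 0) ?_
  have p1 := (aμ 0 (mem_univ _)).hasFPowerSeriesAt
  have p2 := (aν 0 (mem_univ _)).hasFPowerSeriesAt
  have hd : ∀ n, iteratedDeriv n (mgf id μ) 0 = iteratedDeriv n (mgf id ν) 0 := by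
    intro n
    rw [iteratedDeriv_mgf_zero (by rw [hμ]; simp), iteratedDeriv_mgf_zero (by rw [hν]; simp)]
    exact h n
  simp_rw [hd] at p1
  have := p1.sub p2
  rw [sub_self] at this
  filter_upwards [this.eventually_eq_zero] with z hz
  simpa [sub_eq_zero] using hz

/-- `gam.withDensity (ofReal ∘ w)` is the measure whose density is the positive part of `w`. -/
lemma integral_wd {w : ℝ → ℝ} (hw : Measurable w) (g : ℝ → ℝ) :
    ∫ y, g y ∂(gam.withDensity fun y => ENNReal.ofReal (w y)) = ∫ y, max (w y) 0 * g y ∂gam := by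
  rw [integral_withDensity_eq_integral_toReal_smul (by fun_prop)
    (ae_of_all _ fun _ => ENNReal.ofReal_lt_top)]
  simp [ENNReal.toReal_ofReal']

lemma integrable_wd {w : ℝ → ℝ} (hw : Measurable w) (g : ℝ → ℝ) :
    Integrable g (gam.withDensity fun y => ENNReal.ofReal (w y)) ↔
      Integrable (fun y => max (w y) 0 * g y) gam := by
  rw [integrable_withDensity_iff_integrable_smul' (by fun_prop)
    (ae_of_all _ fun _ => ENNReal.ofReal_lt_top)]
  simp [ENNReal.toReal_ofReal']

lemma memLp_exp (t : ℝ) : MemLp (fun y => rexp (t * y)) 2 gam := by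
  rw [memLp_two_iff_integrable_sq (by fun_prop)]
  refine (integrable_exp_mul_gaussianReal (2 * t)).congr (ae_of_all _ fun y => ?_)
  simp only
  rw [← Real.exp_nat_mul]; congr 1; push_cast; ring

lemma memLp_max {w : ℝ → ℝ} (hw2 : MemLp w 2 gam) : MemLp (fun y => max (w y) 0) 2 gam :=
  hw2.pos_part

lemma wd_expSet {w : ℝ → ℝ} (hw : Measurable w) (hw2 : MemLp w 2 gam) :
    integrableExpSet id (gam.withDensity fun y => ENNReal.ofReal (w y)) = univ := by
  refine eq_univ_of_forall fun t => ?_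
  show Integrable _ _
  rw [integrable_wd hw]
  exact (memLp_max hw2).integrable_mul (memLp_exp t)

/-- A function in `L²(gam)` orthogonal to all monomials vanishes: the measures with densities
`w⁺` and `w⁻` have the same moments, hence the same moment generating function. -/
lemma ae_zero_of_moments {w : ℝ → ℝ} (hw : Measurable w) (hw2 : MemLp w 2 gam)
    (h : ∀ n : ℕ, ∫ y, w y * y ^ n ∂gam = 0) : w =ᵐ[gam] 0 := by
  set μ := gam.withDensity fun y => ENNReal.ofReal (w y) with hμ
  set ν := gam.withDensity fun y => ENNReal.ofReal (-w y) with hν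
  have e1 := wd_expSet hw hw2
  have hwn : Measurable fun y => -w y := hw.neg
  have hw2n : MemLp (fun y => -w y) 2 gam := hw2.neg
  have e2 := wd_expSet hwn hw2n
  have hInt : ∀ (n : ℕ) {u : ℝ → ℝ}, MemLp u 2 gam → Integrable (fun y => max (u y) 0 * y ^ n) gam := by
    intro n u hu
    have := memLp_poly (X ^ n : ℝ[X])
    refine ((memLp_max hu).integrable_mul this).congr (ae_of_all _ fun y => by simp)
  have hmom : ∀ n : ℕ, ∫ y, y ^ n ∂μ = ∫ y, y ^ n ∂ν := by
    intro n
    rw [hμ, hν, integral_wd hw, integral_wd hwn, ← sub_eq_zero,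
      ← integral_sub (hInt n hw2) (hInt n hw2n)]
    refine Eq.trans ?_ (h n)
    congr 1; ext y
    have : max (w y) 0 - max (-w y) 0 = w y := by
      rcases le_total 0 (w y) with h | h
      · rw [max_eq_left h, max_eq_right (by linarith)]; ring
      · rw [max_eq_right h, max_eq_left (by linarith)]; ring
    show max (w y) 0 * y ^ n - max (-w y) 0 * y ^ n = _
    rw [← sub_mul, this]
  have hm := mgf_eq_of_moments e1 e2 hmom
  have fμ : IsFiniteMeasure μ := by
    have := (hw2.integrable (by norm_num)).lintegral_lt_top
    exact isFiniteMeasure_withDensity this.ne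
  have fν : IsFiniteMeasure ν := by
    have := (hw2.neg.integrable (by norm_num)).lintegral_lt_top
    exact isFiniteMeasure_withDensity this.ne
  have h0 : μ = 0 ↔ ν = 0 := by
    have h := hmom 0
    simp only [pow_zero, integral_const, smul_eq_mul, mul_one] at h
    rw [← Measure.measure_univ_eq_zero, ← Measure.measure_univ_eq_zero,
      ← measureReal_eq_zero_iff, ← measureReal_eq_zero_iff, h]
  have hc : complexMGF id μ = complexMGF id ν := by
    funext z
    refine eqOn_complexMGF_of_mgf' hm h0 ?_
    show _ ∈ interior _
    rw [e1]; simp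
  have heq : μ = ν := Measure.ext_of_complexMGF_id_eq hc
  have := (withDensity_eq_iff (μ := gam) (f := fun y => ENNReal.ofReal (w y))
    (g := fun y => ENNReal.ofReal (-w y)) (by fun_prop) (by fun_prop)
    ((hw2.integrable (by norm_num)).lintegral_lt_top).ne).1 heq
  filter_upwards [this] with y hy
  rcases lt_trichotomy (w y) 0 with h | h | h
  · rw [ENNReal.ofReal_of_nonpos h.le] at hy
    have := ENNReal.ofReal_eq_zero.1 hy.symm; linarith
  · exact h
  · rw [ENNReal.ofReal_of_nonpos (by linarith : -w y ≤ 0)] at hy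
    have := ENNReal.ofReal_eq_zero.1 hy; linarith

lemma span_He : Submodule.span ℝ (range He) = ⊤ := by
  let S : Polynomial.Sequence ℝ := ⟨He, fun i => by
    rw [degree_eq_natDegree (He_monic i).2.ne_zero, (He_monic i).1]⟩
  exact S.span (fun i => by
    show IsUnit (He i).leadingCoeff
    rw [(He_monic i).2.leadingCoeff]; exact isUnit_one)

lemma ortho_all {w : ℝ → ℝ} (hw2 : MemLp w 2 gam)
    (h : ∀ n : ℕ, ∫ y, w y * (he n).eval y ∂gam = 0) (q : ℝ[X]) :
    ∫ y, w y * q.eval y ∂gam = 0 := by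
  have hq : q ∈ Submodule.span ℝ (range He) := by rw [span_He]; trivial
  have hi : ∀ q : ℝ[X], Integrable (fun y => w y * q.eval y) gam := fun q =>
    hw2.integrable_mul (memLp_poly q)
  induction hq using Submodule.span_induction with
  | mem x hx =>
    obtain ⟨n, rfl⟩ := hx
    have h1 := h n
    have : ∀ y, w y * (he n).eval y = (√(n.factorial : ℝ))⁻¹ * (w y * (He n).eval y) := by
      intro y; simp [he]; ring
    simp_rw [this] at h1
    rw [integral_const_mul] at h1
    have := fact_sqrt_pos n
    rcases mul_eq_zero.1 h1 with h | h
    · exact absurd h (by positivity)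
    · exact h
  | zero => simp
  | add x y _ _ hx hy =>
    simp_rw [eval_add, mul_add]
    rw [integral_add (hi _) (hi _), hx, hy, add_zero]
  | smul a x _ hx =>
    have : ∀ y, w y * (a • x).eval y = a * (w y * x.eval y) := by
      intro y; simp; ring
    simp_rw [this]
    rw [integral_const_mul, hx, mul_zero]

/-- `he n` as an element of `L²(gam)`. -/
def heLp (n : ℕ) : Lp ℝ 2 gam := (memLp_poly (he n)).toLp _

lemma inner_toLp {u w : ℝ → ℝ} (hu : MemLp u 2 gam) (hw : MemLp w 2 gam) :
    inner ℝ (hu.toLp u) (hw.toLp w) = ∫ y, u y * w y ∂gam := by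
  rw [MeasureTheory.L2.inner_def]
  refine integral_congr_ae ?_
  filter_upwards [hu.coeFn_toLp, hw.coeFn_toLp] with y h1 h2
  simp [h1, h2, mul_comm]

lemma orthonormal_heLp : Orthonormal ℝ heLp := by
  rw [orthonormal_iff_ite]
  intro i j
  rw [heLp, heLp, inner_toLp, integral_he_mul_he]

lemma heLp_orthogonal : (Submodule.span ℝ (range heLp))ᗮ = ⊥ := by
  rw [Submodule.eq_bot_iff]
  intro w hw
  rw [Submodule.mem_orthogonal] at hw
  have hm : MemLp (w : ℝ → ℝ) 2 gam := Lp.memLp w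
  have h1 : ∀ n, ∫ y, w y * (he n).eval y ∂gam = 0 := by
    intro n
    rw [← inner_toLp hm (memLp_poly (he n)), Lp.toLp_coeFn, real_inner_comm]
    exact hw _ (Submodule.subset_span ⟨n, rfl⟩)
  have h2 := ae_zero_of_moments (Lp.stronglyMeasurable w).measurable hm
    (fun n => by simpa using ortho_all hm h1 (X ^ n))
  exact (Lp.eq_zero_iff_ae_eq_zero).2 h2

/-- Parseval's identity for the Hermite expansion. -/
lemma parseval {w : ℝ → ℝ} (hw : MemLp w 2 gam) :
    HasSum (fun j => (∫ y, w y * (he j).eval y ∂gam) ^ 2) (∫ y, w y ^ 2 ∂gam) := by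
  let b := HilbertBasis.mkOfOrthogonalEqBot orthonormal_heLp heLp_orthogonal
  have hb : ∀ n, b n = heLp n := fun n => by
    rw [HilbertBasis.coe_mkOfOrthogonalEqBot]
  have h := b.hasSum_inner_mul_inner (hw.toLp w) (hw.toLp w)
  simp_rw [hb, real_inner_comm _ (heLp _), heLp] at h
  simp_rw [inner_toLp] at h
  simpa only [sq] using h

lemma bessel {w : ℝ → ℝ} (hw : MemLp w 2 gam) (S : Finset ℕ) :
    ∑ j ∈ S, (∫ y, w y * (he j).eval y ∂gam) ^ 2 ≤ ∫ y, w y ^ 2 ∂gam :=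
  sum_le_hasSum S (fun _ _ => sq_nonneg _) (parseval hw)

/-- For `n ≥ 2`, `he n` takes the sign `e` somewhere to the left of a point where it has the sign
`-e`. Otherwise some affine function would have a one-signed product with `he n`, contradicting
orthogonality to the polynomials of degree at most one. -/
lemma he_pattern {n : ℕ} (hn : 2 ≤ n) (e : ℝ) (he1 : e = 1 ∨ e = -1) :
    ∃ a b : ℝ, a < b ∧ 0 < e * (he n).eval a ∧ e * (he n).eval b < 0 := by
  by_contra! hcon
  have hne : e ≠ 0 := by rcases he1 with h | h <;> rw [h] <;> norm_num
  -- orthogonality to affine functions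
  have horth : ∀ α β : ℝ, ∫ y, (α * y + β) * (e * (he n).eval y) ∂gam = 0 := by
    intro α β
    have h := integral_He_mul_of_lt (n := n) (q := C α * X + C β)
      (lt_of_le_of_lt (natDegree_linear_le) (by omega))
    have : ∀ y, (α * y + β) * (e * (he n).eval y)
        = (e * (√(n.factorial : ℝ))⁻¹) * (He n * (C α * X + C β)).eval y := by
      intro y; simp [he]; ring
    simp_rw [this]
    rw [integral_const_mul, h, mul_zero]
  -- an affine function with constant sign product
  have key : ∃ α β : ℝ, (α ≠ 0 ∨ β ≠ 0) ∧ ∀ y, 0 ≤ (α * y + β) * (e * (he n).eval y) := by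
    by_cases hA : ∃ a, 0 < e * (he n).eval a
    · by_cases hB : BddBelow {a | 0 < e * (he n).eval a}
      · refine ⟨1, -sInf {a | 0 < e * (he n).eval a}, Or.inl one_ne_zero, fun y => ?_⟩
        rcases le_or_gt y (sInf {a | 0 < e * (he n).eval a}) with hy | hy
        · rcases hy.eq_or_lt with hy | hy
          · rw [← hy]; simp
          have : ¬ (0 < e * (he n).eval y) := fun h => absurd (csInf_le hB h) (by linarith)
          push Not at this
          exact mul_nonneg_of_nonpos_of_nonpos (by linarith) this
        · obtain ⟨a, ha, hay⟩ := exists_lt_of_csInf_lt hA hy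
          exact mul_nonneg (by linarith) (hcon a y hay ha)
      · refine ⟨0, 1, Or.inr one_ne_zero, fun y => ?_⟩
        rw [not_bddBelow_iff] at hB
        obtain ⟨a, ha, hay⟩ := hB y
        simpa using hcon a y hay ha
    · push Not at hA
      exact ⟨0, -1, Or.inr (by norm_num), fun y => by have := hA y; linarith⟩
  obtain ⟨α, β, hαβ, hnn⟩ := key
  set q : ℝ[X] := (C α * X + C β) * (C e * he n) with hq
  have hqe : ∀ y, q.eval y = (α * y + β) * (e * (he n).eval y) := by intro y; simp [hq]
  have h0 := horth α β
  simp_rw [← hqe] at h0 hnn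
  rw [integral_eq_zero_iff_of_nonneg hnn (integrable_poly q)] at h0
  have h1 : (fun y => q.eval y) =ᵐ[volume] 0 :=
    (gaussianReal_absolutelyContinuous' 0 one_ne_zero) h0
  have h2 : (fun y => q.eval y) = 0 :=
    Continuous.ae_eq_iff_eq volume (by fun_prop) continuous_const |>.1 h1
  have h3 : q = 0 := Polynomial.funext fun y => by simpa using congrFun h2 y
  have h4 : he n ≠ 0 := by
    have := fact_sqrt_pos n
    exact mul_ne_zero (by rw [Ne, C_eq_zero]; positivity) (He_monic n).2.ne_zero
  rw [hq] at h3
  rcases mul_eq_zero.1 h3 with h | h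
  · have ha := congrArg (fun p => p.coeff 1) h
    have hb := congrArg (fun p => p.coeff 0) h
    simp at ha hb
    tauto
  · rcases mul_eq_zero.1 h with h | h
    · exact hne (C_eq_zero.1 h)
    · exact h4 h

/-- The Cameron–Martin formula for a translation. -/
lemma integral_shift {u : ℝ → ℝ} (η : ℝ) :
    ∫ y, u (y + η) ∂gam = ∫ y, u y * rexp (η * y - η ^ 2 / 2) ∂gam := by
  rw [integral_gam, integral_gam,
    ← integral_add_right_eq_self (fun y => gaussianPDFReal 0 1 y * (u y * rexp (η * y - η ^ 2 / 2))) η]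
  congr 1; ext y
  rw [pdf_eq, pdf_eq]
  have : rexp (-(y ^ 2 / 2)) = rexp (-((y + η) ^ 2 / 2)) * rexp (η * (y + η) - η ^ 2 / 2) := by
    rw [← Real.exp_add]; congr 1; ring
  rw [this]; ring

lemma cauchy_schwarz {u w : ℝ → ℝ} (hu : MemLp u 2 gam) (hw : MemLp w 2 gam) :
    (∫ y, u y * w y ∂gam) ^ 2 ≤ (∫ y, u y ^ 2 ∂gam) * ∫ y, w y ^ 2 ∂gam := by
  have := real_inner_mul_inner_self_le (hu.toLp u) (hw.toLp w)
  simp_rw [inner_toLp] at this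
  simpa only [sq] using this

lemma memLp_shiftexp (η : ℝ) : MemLp (fun y => rexp (η * y - η ^ 2 / 2)) 2 gam := by
  have := (memLp_exp η).mul_const (rexp (-(η ^ 2 / 2)))
  refine this.ae_eq (ae_of_all _ fun y => ?_)
  simp only
  rw [← Real.exp_add]; congr 1

lemma integral_shiftexp_sq (η : ℝ) :
    ∫ y, rexp (η * y - η ^ 2 / 2) ^ 2 ∂gam = rexp (η ^ 2) := by
  have h := integral_shift (u := fun y => rexp (η * y - η ^ 2 / 2)) η
  simp_rw [sq (rexp _)]
  rw [← h]
  have h2 := integral_shift (u := fun _ => (1:ℝ)) η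
  simp only [integral_const, probReal_univ, smul_eq_mul, mul_one, one_mul] at h2
  have : ∀ y, rexp (η * (y + η) - η ^ 2 / 2) = rexp (η ^ 2) * rexp (η * y - η ^ 2 / 2) := by
    intro y; rw [← Real.exp_add]; congr 1; ring
  simp_rw [this]
  rw [integral_const_mul, ← h2, mul_one]

end ZN

/-! ### Functions with continuous parabolic derivatives -/

namespace ZN

/-- `V` has continuous partial derivatives `V_t`, `V_x`, `V_xx` on `ℝ × (t₁,t₂)`. -/
structure C21 (V Vt Vx Vxx : ℝ → ℝ → ℝ) (t₁ t₂ : ℝ) : Prop where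
  dt : ∀ x : ℝ, ∀ t ∈ Ioo t₁ t₂, HasDerivAt (fun s => V x s) (Vt x t) t
  dx : ∀ x : ℝ, ∀ t ∈ Ioo t₁ t₂, HasDerivAt (fun y => V y t) (Vx x t) x
  dxx : ∀ x : ℝ, ∀ t ∈ Ioo t₁ t₂, HasDerivAt (fun y => Vx y t) (Vxx x t) x
  ct : ContinuousOn (fun p : ℝ × ℝ => Vt p.1 p.2) (univ ×ˢ Ioo t₁ t₂)
  cx : ContinuousOn (fun p : ℝ × ℝ => Vx p.1 p.2) (univ ×ˢ Ioo t₁ t₂)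
  cxx : ContinuousOn (fun p : ℝ × ℝ => Vxx p.1 p.2) (univ ×ˢ Ioo t₁ t₂)

/-- A bounded classical solution, with the zeroth order term recorded only through the
inequality `|v_t - v_xx| ≤ C |v|`. -/
structure Sol (v vt vx vxx : ℝ → ℝ → ℝ) (t₁ t₂ B C : ℝ) : Prop extends C21 v vt vx vxx t₁ t₂ where
  bd : ∀ x : ℝ, ∀ t ∈ Ioo t₁ t₂, |v x t| ≤ B
  hC : 0 ≤ C
  eq : ∀ x : ℝ, ∀ t ∈ Ioo t₁ t₂, |vt x t - vxx x t| ≤ C * |v x t|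

lemma isOpen_strip (t₁ t₂ : ℝ) : IsOpen ((univ : Set ℝ) ×ˢ Ioo t₁ t₂) := isOpen_univ.prod isOpen_Ioo

variable {V Vt Vx Vxx v vt vx vxx : ℝ → ℝ → ℝ} {t₁ t₂ B C : ℝ}

lemma C21.hasFDerivAt (h : C21 V Vt Vx Vxx t₁ t₂) (x : ℝ) {t : ℝ} (ht : t ∈ Ioo t₁ t₂) :
    HasFDerivAt (fun p : ℝ × ℝ => V p.1 p.2)
      ((ContinuousLinearMap.toSpanSingleton ℝ (Vx x t)).coprod
        (ContinuousLinearMap.toSpanSingleton ℝ (Vt x t))) (x, t) := by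
  have hn : univ ×ˢ Ioo t₁ t₂ ∈ 𝓝 (x, t) := (isOpen_strip t₁ t₂).mem_nhds ⟨mem_univ _, ht⟩
  refine (hasStrictFDerivAt_uncurry_coprod (𝕜 := ℝ) (u := (x, t)) (f := V)
    (f₁ := fun x t => ContinuousLinearMap.toSpanSingleton ℝ (Vx x t))
    (f₂ := fun x t => ContinuousLinearMap.toSpanSingleton ℝ (Vt x t)) ?_ ?_ ?_ ?_).hasFDerivAt
  · filter_upwards [hn] with p hp
    exact (h.dx p.1 p.2 hp.2).hasFDerivAt
  · filter_upwards [hn] with p hp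
    exact (h.dt p.1 p.2 hp.2).hasFDerivAt
  · exact ((ContinuousLinearMap.toSpanSingletonLE ℝ ℝ ℝ).continuous_of_finiteDimensional.continuousAt).comp
      (h.cx.continuousAt hn)
  · exact ((ContinuousLinearMap.toSpanSingletonLE ℝ ℝ ℝ).continuous_of_finiteDimensional.continuousAt).comp
      (h.ct.continuousAt hn)

lemma C21.cont (h : C21 V Vt Vx Vxx t₁ t₂) :
    ContinuousOn (fun p : ℝ × ℝ => V p.1 p.2) (univ ×ˢ Ioo t₁ t₂) := fun p hp =>
  (h.hasFDerivAt p.1 hp.2).continuousAt.continuousWithinAt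

lemma C21.chain (h : C21 V Vt Vx Vxx t₁ t₂) {a b : ℝ → ℝ} {a' b' s : ℝ}
    (ha : HasDerivAt a a' s) (hb : HasDerivAt b b' s) (ht : b s ∈ Ioo t₁ t₂) :
    HasDerivAt (fun s => V (a s) (b s)) (a' * Vx (a s) (b s) + b' * Vt (a s) (b s)) s := by
  have := (h.hasFDerivAt (a s) ht).comp_hasDerivAt_of_eq s (ha.prodMk hb) rfl
  exact this.congr_deriv (by simp)

lemma C21.neg (h : C21 V Vt Vx Vxx t₁ t₂) :
    C21 (fun x t => -V x t) (fun x t => -Vt x t) (fun x t => -Vx x t) (fun x t => -Vxx x t) t₁ t₂ :=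
  ⟨fun x t ht => (h.dt x t ht).neg, fun x t ht => (h.dx x t ht).neg, fun x t ht => (h.dxx x t ht).neg,
    h.ct.neg, h.cx.neg, h.cxx.neg⟩

lemma Sol.neg (h : Sol v vt vx vxx t₁ t₂ B C) :
    Sol (fun x t => -v x t) (fun x t => -vt x t) (fun x t => -vx x t) (fun x t => -vxx x t)
      t₁ t₂ B C :=
  { h.toC21.neg with
    bd := fun x t ht => by rw [abs_neg]; exact h.bd x t ht
    hC := h.hC
    eq := fun x t ht => by
      rw [abs_neg, show -vt x t - -vxx x t = -(vt x t - vxx x t) by ring, abs_neg]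
      exact h.eq x t ht }

/-- At a local maximum the second derivative is nonpositive. -/
lemma second_deriv_nonpos {g g' : ℝ → ℝ} {g'' x : ℝ} (h1 : ∀ y, HasDerivAt g (g' y) y)
    (h2 : HasDerivAt g' g'' x) (hmax : IsLocalMax g x) : g'' ≤ 0 := by
  by_contra! hpos
  have h0 : g' x = 0 := hmax.hasDerivAt_eq_zero (h1 x)
  have hd : deriv g = g' := funext fun y => (h1 y).deriv
  have hmin := isLocalMin_of_deriv_deriv_pos (f := g) (x₀ := x)
    (by rw [hd, h2.deriv]; exact hpos) (by rw [hd, h0]) (h1 x).continuousAt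
  have hc : ∀ᶠ y in 𝓝 x, g y = g x := by
    filter_upwards [hmax, hmin] with y h h'
    exact le_antisymm h h'
  have hg' : ∀ᶠ y in 𝓝 x, g' y = 0 := by
    filter_upwards [hc.eventually_nhds] with y hy
    exact (h1 y).unique ((hasDerivAt_const y (g x)).congr_of_eventuallyEq hy)
  have := h2.unique ((hasDerivAt_const x (0:ℝ)).congr_of_eventuallyEq hg')
  linarith

end ZN

/-! ### Curves of constant sign -/

namespace ZN
variable {V Vt Vx Vxx v vt vx vxx : ℝ → ℝ → ℝ} {t₁ t₂ B C : ℝ}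

lemma deriv_nonneg_of_left_max {g : ℝ → ℝ} {g' t : ℝ} (h : HasDerivAt g g' t)
    (hl : ∀ᶠ s in 𝓝[<] t, g s ≤ g t) : 0 ≤ g' := by
  have := (hasDerivWithinAt_iff_tendsto_slope' (by simp)).1 (h.hasDerivWithinAt (s := Iio t))
  refine ge_of_tendsto this ?_
  filter_upwards [hl, self_mem_nhdsWithin] with s hs hst
  rw [slope_def_field]
  exact div_nonneg_of_nonpos (by linarith) (by simpa using (le_of_lt hst))

/-- Points `(y,s)` joined to `(x,t')` by the graph of a continuous curve along which `v > 0`. -/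
def Reach (v : ℝ → ℝ → ℝ) (x t'' t' : ℝ) : Set (ℝ × ℝ) :=
  {p | p.2 ∈ Icc t'' t' ∧ ∃ γ : ℝ → ℝ, Continuous γ ∧ γ t' = x ∧ γ p.2 = p.1 ∧
    ∀ t ∈ Icc p.2 t', 0 < v (γ t) t}

/-- If a reachable point `q` lies in a ball where `v > 0`, so is every earlier point `z` of the
ball: prolong the curve by the segment from `q` to `z`. -/
lemma Reach.extend {x t'' t' : ℝ} {q z p : ℝ × ℝ} {r : ℝ} (hq : q ∈ Reach v x t'' t')
    (hr : ∀ a ∈ Metric.ball p r, 0 < v a.1 a.2) (hqb : q ∈ Metric.ball p r)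
    (hzb : z ∈ Metric.ball p r) (hz : t'' ≤ z.2) (hzq : z.2 < q.2) : z ∈ Reach v x t'' t' := by
  obtain ⟨⟨hq1, hq2⟩, γ, hγ, hγx, hγq, hpos⟩ := hq
  refine ⟨⟨hz, by linarith⟩, fun t => γ (max t q.2) +
    (q.1 - z.1) / (q.2 - z.2) * (min t q.2 - q.2), by fun_prop, ?_, ?_, ?_⟩
  · simp only; rw [max_eq_left hq2, min_eq_right hq2, hγx]; ring
  · simp only; rw [max_eq_right hzq.le, min_eq_left hzq.le, hγq]
    have : q.2 - z.2 ≠ 0 := by linarith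
    field_simp; ring
  · intro t ht
    rcases le_total q.2 t with h | h
    · simp only; rw [max_eq_left h, min_eq_right h]
      simpa using hpos t ⟨h, ht.2⟩
    · simp only; rw [max_eq_right h, min_eq_left h, hγq]
      have hd : 0 < q.2 - z.2 := by linarith
      have hc := (convex_ball p r) hqb hzb (a := (t - z.2) / (q.2 - z.2))
        (b := (q.2 - t) / (q.2 - z.2)) (div_nonneg (by linarith [ht.1]) hd.le)
        (div_nonneg (by linarith) hd.le) (by field_simp; ring)
      have := hr _ hc
      convert this using 2
      · simp; field_simp; ring
      · simp; field_simp; ring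

/-- A point where `v > 0` is joined to the earlier time `t''` by a curve along which `v > 0`.
Otherwise the penalised function `e^{-C(t-t'')} v - δ (x² + 3 (t-t''))` attains a positive maximum
over the closure of the reachable set at some point `p` later than `t''`. A small half-ball of
points earlier than `p` is reachable as well, so the first and second derivative tests apply at `p`
and contradict `v_t - v_xx ≤ C v`. -/
theorem exists_path (h : Sol v vt vx vxx t₁ t₂ B C) {x t'' t' : ℝ} (h1 : t₁ < t'') (h2 : t' < t₂)
    (hlt : t'' < t') (hpos : 0 < v x t') :
    ∃ γ : ℝ → ℝ, Continuous γ ∧ γ t' = x ∧ ∀ t ∈ Icc t'' t', 0 < v (γ t) t := by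
  by_contra hcon
  set A := Reach v x t'' t' with hA
  have hno : ∀ p ∈ A, t'' < p.2 := by
    intro p hp
    rcases hp with ⟨⟨hp1, hp2⟩, γ, hγ, hγx, hγq, hpos⟩
    refine lt_of_le_of_ne hp1 fun he => hcon ⟨γ, hγ, hγx, ?_⟩
    rw [he]; exact hpos
  have hstart : (x, t') ∈ A := ⟨⟨hlt.le, le_rfl⟩, fun _ => x, continuous_const, rfl, rfl, fun t ht => by
    have : t = t' := le_antisymm ht.2 ht.1
    rw [this]; exact hpos⟩
  have hsub : closure A ⊆ univ ×ˢ Icc t'' t' :=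
    closure_minimal (fun p hp => ⟨mem_univ _, hp.1⟩) (isClosed_univ.prod isClosed_Icc)
  have hIcc : ∀ {t}, t ∈ Icc t'' t' → t ∈ Ioo t₁ t₂ := fun ht => ⟨by linarith [ht.1], by linarith [ht.2]⟩
  -- `δ` is chosen so that the penalty takes away only half of the value at `(x, t')`
  set S := rexp (-C * (t' - t'')) * v x t' with hS
  have hSpos : 0 < S := by positivity
  set δ := S / (2 * (x ^ 2 + 3 * (t' - t''))) with hδ
  have hden : 0 < x ^ 2 + 3 * (t' - t'') := by nlinarith [sq_nonneg x]
  have hδpos : 0 < δ := by positivity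
  set w : ℝ × ℝ → ℝ := fun p => rexp (-C * (p.2 - t'')) * v p.1 p.2 - δ * (p.1 ^ 2 + 3 * (p.2 - t''))
    with hw
  have hw0 : 0 < w (x, t') := by
    have : δ * (x ^ 2 + 3 * (t' - t'')) = S / 2 := by rw [hδ]; field_simp
    simp only [hw]; rw [this, ← hS]; linarith
  have hB : 0 ≤ B := (abs_nonneg _).trans (h.bd x t' ⟨by linarith, h2⟩)
  set R := |x| + B / δ + 1 with hR
  have hBδ : 0 ≤ B / δ := by positivity
  have hR1 : 1 ≤ R := by have := abs_nonneg x; linarith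
  -- beyond radius `R` the penalty exceeds the bound `B` of the solution
  have hwout : ∀ p ∈ closure A, R < |p.1| → w p < 0 := by
    intro p hp hpR
    have hpt := (hsub hp).2
    have hv := (abs_le.1 (h.bd p.1 p.2 (hIcc hpt))).2
    have he : rexp (-C * (p.2 - t'')) ≤ 1 := by
      apply Real.exp_le_one_iff.2
      nlinarith [h.hC, hpt.1]
    have e1 : rexp (-C * (p.2 - t'')) * v p.1 p.2 ≤ B := by
      calc _ ≤ rexp (-C * (p.2 - t'')) * B := by gcongr
        _ ≤ 1 * B := by gcongr
        _ = B := one_mul B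
    have e2 : B / δ < p.1 ^ 2 := by
      rw [← sq_abs]
      have := abs_nonneg x
      nlinarith
    have e3 : B < δ * p.1 ^ 2 := by
      have := (div_lt_iff₀ hδpos).1 e2; linarith
    have e4 : 0 ≤ δ * (3 * (p.2 - t'')) := by
      have : 0 ≤ p.2 - t'' := by linarith [hpt.1]
      positivity
    simp only [hw]; nlinarith
  have hwc : ContinuousOn w (univ ×ˢ Ioo t₁ t₂) := by
    apply ContinuousOn.sub
    · exact ContinuousOn.mul (by fun_prop) h.cont
    · fun_prop
  have hKc : IsCompact (closure A ∩ (Icc (-R) R ×ˢ Icc t'' t')) :=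
    (isCompact_Icc.prod isCompact_Icc).inter_left isClosed_closure
  obtain ⟨p, hpK, hpmax⟩ := hKc.exists_isMaxOn
    ⟨(x, t'), subset_closure hstart, abs_le.1 (by linarith), hlt.le, le_rfl⟩
    (hwc.mono fun q hq => ⟨mem_univ _, hIcc (hsub hq.1).2⟩)
  have hwp : 0 < w p := hw0.trans_le
    (hpmax ⟨subset_closure hstart, abs_le.1 (by linarith), hlt.le, le_rfl⟩)
  have hmax : ∀ q ∈ closure A, w q ≤ w p := by
    intro q hq
    rcases le_or_gt |q.1| R with hqR | hqR
    · exact hpmax ⟨hq, abs_le.1 hqR, (hsub hq).2⟩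
    · linarith [hwout q hq hqR]
  have hpt := (hsub hpK.1).2
  have hpv : 0 < v p.1 p.2 := by
    have h3 : 0 ≤ p.2 - t'' := by linarith [hpt.1]
    have h4 : 0 ≤ δ * (p.1 ^ 2 + 3 * (p.2 - t'')) := by positivity
    simp only [hw] at hwp
    have : 0 < rexp (-C * (p.2 - t'')) * v p.1 p.2 := by linarith
    exact pos_of_mul_pos_right this (exp_pos _).le
  have hpn : univ ×ˢ Ioo t₁ t₂ ∈ 𝓝 p := (isOpen_strip t₁ t₂).mem_nhds ⟨mem_univ _, hIcc hpt⟩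
  have hnear : ∀ᶠ q in 𝓝 p, 0 < v q.1 q.2 := (h.cont.continuousAt hpn).eventually_const_lt hpv
  obtain ⟨r, hr0, hr⟩ := Metric.eventually_nhds_iff_ball.1 hnear
  have key : ∀ z ∈ Metric.ball p r, t'' ≤ z.2 → z.2 < p.2 → z ∈ A := by
    intro z hz hz1 hz2
    obtain ⟨q, hq, hpq⟩ := Metric.mem_closure_iff.1 hpK.1 (min r (p.2 - z.2))
      (lt_min hr0 (by linarith))
    rw [lt_min_iff] at hpq
    have : |p.2 - q.2| ≤ dist p q := by
      rw [← Real.dist_eq]; exact le_max_right _ _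
    refine Reach.extend hq hr (by rw [Metric.mem_ball, dist_comm]; exact hpq.1) hz hz1 ?_
    linarith [(abs_le.1 (this.trans hpq.2.le)).2, (abs_lt.1 (this.trans_lt hpq.2)).2]
  have hpt'' : t'' < p.2 := by
    refine lt_of_le_of_ne hpt.1 fun he => ?_
    obtain ⟨q, hq, hpq⟩ := Metric.mem_closure_iff.1 hpK.1 r hr0
    have := Reach.extend hq hr (by rw [Metric.mem_ball, dist_comm]; exact hpq)
      (Metric.mem_ball_self hr0) hpt.1 (by rw [← he]; exact hno q hq)
    exact (hno p this).ne he
  -- the horizontal slice through `p` lies in the closure, as a limit of earlier reachable points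
  have hleft : ∀ y, |y - p.1| < r → (y, p.2) ∈ closure A := by
    intro y hy
    have ht : Tendsto (fun s : ℝ => (y, s)) (𝓝[<] p.2) (𝓝 (y, p.2)) :=
      (Continuous.prodMk_right y).continuousAt.tendsto.mono_left nhdsWithin_le_nhds
    refine mem_closure_of_tendsto ht ?_
    have e1 : ∀ᶠ s in 𝓝[<] p.2, p.2 - r < s := (eventually_gt_nhds (by linarith)).filter_mono nhdsWithin_le_nhds
    have e2 : ∀ᶠ s in 𝓝[<] p.2, t'' < s := (eventually_gt_nhds (by linarith)).filter_mono nhdsWithin_le_nhds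
    filter_upwards [e1, e2, self_mem_nhdsWithin] with s hs1 hs2 hs3
    refine key _ ?_ hs2.le hs3
    rw [Metric.mem_ball, Prod.dist_eq, max_lt_iff, Real.dist_eq, Real.dist_eq]
    have := mem_Iio.1 hs3
    exact ⟨hy, abs_lt.2 ⟨by simp; linarith, by simp; linarith⟩⟩
  set e := rexp (-C * (p.2 - t'')) with he
  have hepos : 0 < e := exp_pos _
  have hxx : e * vxx p.1 p.2 - δ * 2 ≤ 0 := by
    refine second_deriv_nonpos (g := fun y => w (y, p.2)) (g' := fun y => e * vx y p.2 - δ * (2 * y))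
      (x := p.1) ?_ ?_ ?_
    · intro y
      have := ((h.dx y p.2 (hIcc hpt)).const_mul e).sub
        (((hasDerivAt_pow 2 y).add_const (3 * (p.2 - t''))).const_mul δ)
      exact this.congr_deriv (by norm_num)
    · have := ((h.dxx p.1 p.2 (hIcc hpt)).const_mul e).sub
        (((hasDerivAt_id p.1).const_mul 2).const_mul δ)
      exact this.congr_deriv (by norm_num)
    · have : ∀ᶠ y in 𝓝 p.1, |y - p.1| < r := Metric.ball_mem_nhds p.1 hr0
      filter_upwards [this] with y hy
      exact hmax _ (hleft y hy)
  have ht : 0 ≤ e * vt p.1 p.2 - C * e * v p.1 p.2 - δ * 3 := by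
    refine deriv_nonneg_of_left_max (g := fun s => w (p.1, s)) (t := p.2) ?_ ?_
    · have d1 : HasDerivAt (fun s => rexp (-C * (s - t''))) (e * (-C)) p.2 := by
        have := (((hasDerivAt_id p.2).sub_const t'').const_mul (-C)).exp
        exact this.congr_deriv (by simp [he])
      have := (d1.mul (h.dt p.1 p.2 (hIcc hpt))).sub
        (((((hasDerivAt_id p.2).sub_const t'').const_mul 3).const_add (p.1 ^ 2)).const_mul δ)
      exact this.congr_deriv (by simp [he]; ring)
    · have e1 : ∀ᶠ s in 𝓝[<] p.2, p.2 - r < s := (eventually_gt_nhds (by linarith)).filter_mono nhdsWithin_le_nhds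
      have e2 : ∀ᶠ s in 𝓝[<] p.2, t'' < s := (eventually_gt_nhds (by linarith)).filter_mono nhdsWithin_le_nhds
      filter_upwards [e1, e2, self_mem_nhdsWithin] with s hs1 hs2 hs3
      refine hmax _ (subset_closure (key _ ?_ hs2.le hs3))
      rw [Metric.mem_ball, Prod.dist_eq, max_lt_iff, Real.dist_eq, Real.dist_eq]
      have := mem_Iio.1 hs3
      exact ⟨by simpa using hr0, abs_lt.2 ⟨by simp; linarith, by simp; linarith⟩⟩
  have heq := (abs_le.1 (h.eq p.1 p.2 (hIcc hpt))).2
  rw [abs_of_pos hpv] at heq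
  nlinarith

end ZN

/-! ### Monotonicity of sign patterns -/

namespace ZN
variable {V Vt Vx Vxx v vt vx vxx : ℝ → ℝ → ℝ} {t₁ t₂ B C : ℝ}

lemma C21.cont_x (h : C21 V Vt Vx Vxx t₁ t₂) {t : ℝ} (ht : t ∈ Ioo t₁ t₂) :
    Continuous fun x => V x t :=
  continuous_iff_continuousAt.2 fun x => (h.dx x t ht).continuousAt

/-- For continuous functions, weakly increasing sample points suffice to realize a pattern: spread
them slightly. -/
lemma realizes_of_monotone {f : ℝ → ℝ} (hf : Continuous f) {m : ℕ} {ε : ℕ → ℝ} {M : ℕ → ℝ}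
    (hM : Monotone M) (h : ∀ i < m, 0 < ε i * f (M i)) : RealizesPattern f m ε := by
  have : ∀ᶠ η : ℝ in 𝓝[>] 0, ∀ i ∈ Finset.range m, 0 < ε i * f (M i + η * i) := by
    rw [Filter.eventually_all_finset]
    intro i hi
    have hc : ContinuousAt (fun η : ℝ => ε i * f (M i + η * i)) 0 := by fun_prop
    refine (hc.eventually_const_lt ?_).filter_mono nhdsWithin_le_nhds
    simpa using h i (Finset.mem_range.1 hi)
  obtain ⟨η, h1, h2⟩ := (this.and self_mem_nhdsWithin).exists
  refine ⟨fun i => M i + η * i, hM.add_strictMono ?_, fun i hi => h1 i (Finset.mem_range.2 hi)⟩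
  intro a b hab
  exact mul_lt_mul_of_pos_left (by exact_mod_cast hab) h2

lemma exists_path_sign (h : Sol v vt vx vxx t₁ t₂ B C) {x t'' t' e : ℝ} (h1 : t₁ < t'') (h2 : t' < t₂)
    (hlt : t'' < t') (he : e = 1 ∨ e = -1) (hpos : 0 < e * v x t') :
    ∃ γ : ℝ → ℝ, Continuous γ ∧ γ t' = x ∧ ∀ t ∈ Icc t'' t', 0 < e * v (γ t) t := by
  rcases he with rfl | rfl
  · simpa using exists_path h h1 h2 hlt (by simpa using hpos)
  · simpa using exists_path h.neg h1 h2 hlt (by simpa using hpos)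

/-- Sign patterns are inherited by earlier times. Follow each sample point back in time along a curve
of constant sign; curves of opposite signs cannot cross, and running maxima restore the order among
the others. -/
theorem pattern_mono (h : Sol v vt vx vxx t₁ t₂ B C) {t'' t' : ℝ} (h1 : t₁ < t'') (h2 : t' < t₂)
    (hlt : t'' < t') {m : ℕ} {ε : ℕ → ℝ} (hε : ∀ i < m, ε i = 1 ∨ ε i = -1)
    (hp : RealizesPattern (fun x => v x t') m ε) : RealizesPattern (fun x => v x t'') m ε := by
  obtain ⟨x, hx, hxp⟩ := hp
  have hex : ∀ i, ∃ γ : ℝ → ℝ, Continuous γ ∧ (i < m → γ t' = x i ∧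
      ∀ t ∈ Icc t'' t', 0 < ε i * v (γ t) t) := by
    intro i
    by_cases hi : i < m
    · obtain ⟨γ, a, b, c⟩ := exists_path_sign h h1 h2 hlt (hε i hi) (hxp i hi)
      exact ⟨γ, a, fun _ => ⟨b, c⟩⟩
    · exact ⟨fun _ => 0, continuous_const, fun h => absurd h hi⟩
  choose γ hγ hγp using hex
  have hord : ∀ i j, i < j → j < m → ε i ≠ ε j → γ i t'' < γ j t'' := by
    intro i j hij hj hne
    have hi : i < m := hij.trans hj
    by_contra! hle
    have hcont : ContinuousOn (fun t => γ j t - γ i t) (Icc t'' t') :=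
      ((hγ j).sub (hγ i)).continuousOn
    have := intermediate_value_Icc hlt.le hcont
    have h0 : (0:ℝ) ∈ Icc (γ j t'' - γ i t'') (γ j t' - γ i t') := by
      rw [(hγp i hi).1, (hγp j hj).1]
      exact ⟨by linarith, by linarith [hx hij]⟩
    obtain ⟨t, ht, ht0⟩ := this h0
    have e : γ j t = γ i t := by simp only at ht0; linarith
    have p1 := (hγp i hi).2 t ht
    have p2 := (hγp j hj).2 t ht
    rw [e] at p2
    rcases hε i hi with h | h <;> rcases hε j hj with h' | h' <;> rw [h] at p1 hne <;>
      rw [h'] at p2 hne <;> first | exact hne rfl | linarith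
  have ht'' : t'' ∈ Ioo t₁ t₂ := ⟨h1, by linarith⟩
  refine realizes_of_monotone (h.cont_x ht'') (partialSups fun i => γ i t'').monotone ?_
  intro i hi
  obtain ⟨j, hj, hje⟩ := exists_partialSups_eq (fun i => γ i t'') i
  have hle := le_partialSups (fun i => γ i t'') i
  have hee : ε i = ε j := by
    by_contra hne
    have hji : j < i := lt_of_le_of_ne hj fun h => hne (by rw [h])
    have := hord j i hji hi (Ne.symm hne)
    simp only at hje hle
    rw [hje] at hle
    linarith
  rw [hje, hee]
  exact (hγp j (by omega)).2 t'' ⟨le_rfl, hlt.le⟩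

/-- `m ≥ 1` sign changes amount to an alternating pattern of length `m + 1`, starting with a sign
`e`. -/
lemma pattern_of_signChanges {f : ℝ → ℝ} {m : ℕ} (hm : 1 ≤ m) (h : SignChanges f m) :
    ∃ e : ℝ, (e = 1 ∨ e = -1) ∧ RealizesPattern f (m + 1) (fun i => (-1) ^ i * e) := by
  obtain ⟨x, hx, hc⟩ := h
  have h0 : f (x 0) ≠ 0 := fun h => by have := hc 0 hm; rw [h] at this; simp at this
  refine ⟨if 0 < f (x 0) then 1 else -1, by split_ifs <;> simp, x, hx, ?_⟩
  intro i
  induction i with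
  | zero =>
    intro _
    split_ifs with hp
    · simpa using hp
    · have : f (x 0) < 0 := lt_of_le_of_ne (not_lt.1 hp) h0
      simp; exact this
  | succ i ih =>
    intro hi
    have h1 := ih (by omega)
    have h2 := hc i (by omega)
    set s : ℝ := (-1) ^ i * (if 0 < f (x 0) then 1 else -1) with hs
    have hs2 : (-1 : ℝ) ^ (i + 1) * (if 0 < f (x 0) then 1 else -1) = - s := by
      rw [hs, pow_succ]; ring
    simp only at h1
    rw [← hs] at h1
    simp only [hs2]
    rcases lt_trichotomy (f (x i)) 0 with hlt | heq | hgt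
    · have : 0 < f (x (i+1)) := by nlinarith
      have : s < 0 := by nlinarith
      nlinarith
    · rw [heq] at h1; simp at h1
    · have : f (x (i+1)) < 0 := by nlinarith
      have : 0 < s := by nlinarith
      nlinarith

lemma signChanges_of_pattern {f : ℝ → ℝ} {m : ℕ} {e : ℝ} (h : RealizesPattern f (m + 1) (fun i => (-1) ^ i * e)) :
    SignChanges f m := by
  obtain ⟨x, hx, hc⟩ := h
  refine ⟨x, hx, fun i hi => ?_⟩
  have h1 := hc i (by omega)
  have h2 := hc (i + 1) (by omega)
  simp only at h1 h2
  have := mul_pos h1 h2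
  have e2 : (-1 : ℝ) ^ i * e * f (x i) * ((-1) ^ (i + 1) * e * f (x (i + 1)))
    = - ((((-1) ^ i) * e) ^ 2 * (f (x i) * f (x (i + 1)))) := by rw [pow_succ]; ring
  rw [e2] at this
  by_contra! hn
  have := mul_nonneg (sq_nonneg (((-1 : ℝ) ^ i) * e)) hn
  linarith

lemma alt_sign {e : ℝ} (he : e = 1 ∨ e = -1) (i : ℕ) : (-1 : ℝ) ^ i * e = 1 ∨ (-1 : ℝ) ^ i * e = -1 := by
  rcases neg_one_pow_eq_or ℝ i with h | h <;> rcases he with h' | h' <;> rw [h, h'] <;> simp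

lemma signChanges_mono (h : Sol v vt vx vxx t₁ t₂ B C) {t'' t' : ℝ} (h1 : t₁ < t'') (h2 : t' < t₂)
    (hlt : t'' < t') {m : ℕ} (hm : 1 ≤ m) (hp : SignChanges (fun x => v x t') m) :
    SignChanges (fun x => v x t'') m := by
  obtain ⟨e, he, hp⟩ := pattern_of_signChanges hm hp
  exact signChanges_of_pattern (pattern_mono h h1 h2 hlt (fun i _ => alt_sign he i) hp)

lemma ne_zero_mono (h : Sol v vt vx vxx t₁ t₂ B C) {t'' t' : ℝ} (h1 : t₁ < t'') (h2 : t' < t₂)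
    (hlt : t'' ≤ t') (hx : ∃ x, v x t' ≠ 0) : ∃ x, v x t'' ≠ 0 := by
  obtain ⟨x, hx⟩ := hx
  rcases hlt.eq_or_lt with rfl | hlt
  · exact ⟨x, hx⟩
  have : ∃ e : ℝ, (e = 1 ∨ e = -1) ∧ 0 < e * v x t' := by
    rcases lt_or_gt_of_ne hx with h | h
    · exact ⟨-1, by simp, by linarith⟩
    · exact ⟨1, by simp, by linarith⟩
  obtain ⟨e, he, hp⟩ := this
  obtain ⟨γ, -, -, hγ⟩ := exists_path_sign h h1 h2 hlt he hp
  have := hγ t'' ⟨le_rfl, hlt.le⟩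
  exact ⟨γ t'', fun h0 => by rw [h0] at this; simp at this⟩

theorem zeroNumber_mono (h : Sol v vt vx vxx t₁ t₂ B C) {t'' t' : ℝ} (h1 : t₁ < t'') (h2 : t' < t₂)
    (hlt : t'' < t') : zeroNumber (fun x => v x t') ≤ zeroNumber (fun x => v x t'') := by
  by_cases h0 : (fun x => v x t') = 0
  · rw [zeroNumber, if_pos h0]; exact bot_le
  · have hx : ∃ x, v x t' ≠ 0 := by
      by_contra! hh; exact h0 (funext hh)
    obtain ⟨x, hx⟩ := ne_zero_mono h h1 h2 hlt.le hx
    have h0' : (fun x => v x t'') ≠ 0 := fun hh => hx (congrFun hh x)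
    rw [zeroNumber, zeroNumber, if_neg h0, if_neg h0']
    refine WithBot.coe_le_coe.2 (sSup_le_sSup ?_)
    rintro k ⟨m, hk, hm, hs⟩
    exact ⟨m, hk, hm, signChanges_mono h h1 h2 hlt hm hs⟩

end ZN

/-! ### Parabolic rescaling -/

namespace ZN
open MeasureTheory ProbabilityTheory Polynomial
variable {V Vt Vx Vxx v vt vx vxx : ℝ → ℝ → ℝ} {t₁ t₂ B x₀ t₀ L : ℝ}

/-- The parabolic rescaling `y ↦ W(x₀ + ℓ y, t₀ - ℓ²/2)`. -/
def par (W : ℝ → ℝ → ℝ) (x₀ t₀ ℓ y : ℝ) : ℝ := W (x₀ + ℓ * y) (t₀ - ℓ ^ 2 / 2)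

lemma time_mem (h0 : t₀ ≤ t₂) (hL : t₁ ≤ t₀ - L ^ 2 / 2) {ℓ : ℝ} (hℓ : ℓ ∈ Ioo 0 L) :
    t₀ - ℓ ^ 2 / 2 ∈ Ioo t₁ t₂ := by
  have h1 := hℓ.1
  have h2 := hℓ.2
  constructor <;> nlinarith

lemma continuous_par {W : ℝ → ℝ → ℝ}
    (hW : ContinuousOn (fun p : ℝ × ℝ => W p.1 p.2) (univ ×ˢ Ioo t₁ t₂)) {ℓ : ℝ}
    (hℓ : t₀ - ℓ ^ 2 / 2 ∈ Ioo t₁ t₂) : Continuous (par W x₀ t₀ ℓ) := by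
  have := hW.comp_continuous (f := fun y : ℝ => (x₀ + ℓ * y, t₀ - ℓ ^ 2 / 2)) (by fun_prop)
    (fun y => ⟨mem_univ _, hℓ⟩)
  exact this

lemma continuousOn_par₂ {W : ℝ → ℝ → ℝ} (h0 : t₀ ≤ t₂) (hL : t₁ ≤ t₀ - L ^ 2 / 2)
    (hW : ContinuousOn (fun p : ℝ × ℝ => W p.1 p.2) (univ ×ˢ Ioo t₁ t₂)) :
    ContinuousOn (fun p : ℝ × ℝ => par W x₀ t₀ p.1 p.2) (Ioo 0 L ×ˢ univ) := by
  have := hW.comp (f := fun p : ℝ × ℝ => (x₀ + p.1 * p.2, t₀ - p.1 ^ 2 / 2)) (s := Ioo 0 L ×ˢ univ)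
    (by fun_prop) (fun p hp => ⟨mem_univ _, time_mem h0 hL hp.1⟩)
  exact this

/-- Derivative in `ℓ` of a Gaussian average over `[-R, R]` against a polynomial `p` that vanishes to
second order at `±R`, so that two integrations by parts leave no boundary terms. -/
lemma hasDerivAt_local (h : C21 V Vt Vx Vxx t₁ t₂) (h0 : t₀ ≤ t₂) (hL : t₁ ≤ t₀ - L ^ 2 / 2)
    {R : ℝ} (hR : 0 ≤ R) {p : ℝ[X]} (hp1 : p.eval R = 0) (hp2 : p.eval (-R) = 0)
    (hp3 : (derivative p).eval R = 0) (hp4 : (derivative p).eval (-R) = 0)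
    {ℓ : ℝ} (hℓ : ℓ ∈ Ioo 0 L) :
    HasDerivAt (fun ℓ => ∫ y in (-R)..R, gaussianPDFReal 0 1 y * (p.eval y * par V x₀ t₀ ℓ y))
      (-(1 / ℓ) * (∫ y in (-R)..R, gaussianPDFReal 0 1 y *
          ((derivative (derivative p) - X * derivative p).eval y * par V x₀ t₀ ℓ y))
        - ℓ * ∫ y in (-R)..R, gaussianPDFReal 0 1 y *
          (p.eval y * (par Vt x₀ t₀ ℓ y - par Vxx x₀ t₀ ℓ y))) ℓ := by
  set ρ := gaussianPDFReal 0 1 with hρ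
  have cρ : Continuous ρ := continuous_pdf
  have hℓ0 : 0 < ℓ := hℓ.1
  have htℓ := time_mem h0 hL hℓ
  have cV := continuous_par (x₀ := x₀) h.cont htℓ
  have cVx := continuous_par (x₀ := x₀) h.cx htℓ
  have cVt := continuous_par (x₀ := x₀) h.ct htℓ
  have cVxx := continuous_par (x₀ := x₀) h.cxx htℓ
  -- differentiate under the integral sign
  have key : HasDerivAt (fun ℓ => ∫ y in (-R)..R, ρ y * (p.eval y * par V x₀ t₀ ℓ y))
      (∫ y in (-R)..R, ρ y * (p.eval y * (y * par Vx x₀ t₀ ℓ y + (-ℓ) * par Vt x₀ t₀ ℓ y))) ℓ := by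
    obtain ⟨δ, hδ, hδs⟩ : ∃ δ > 0, Icc (ℓ - δ) (ℓ + δ) ⊆ Ioo 0 L := by
      refine ⟨min (ℓ / 2) ((L - ℓ) / 2), lt_min (by linarith) (by linarith [hℓ.2]), ?_⟩
      intro s hs
      have a1 := min_le_left (ℓ / 2) ((L - ℓ) / 2)
      have a2 := min_le_right (ℓ / 2) ((L - ℓ) / 2)
      have a3 := hℓ.2
      exact ⟨by linarith [hs.1], by linarith [hs.2]⟩
    have cF' : ContinuousOn (fun q : ℝ × ℝ => ρ q.2 * (p.eval q.2 * (q.2 * par Vx x₀ t₀ q.1 q.2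
        + (-q.1) * par Vt x₀ t₀ q.1 q.2))) (Icc (ℓ - δ) (ℓ + δ) ×ˢ Icc (-R) R) := by
      have a1 := (continuousOn_par₂ (x₀ := x₀) h0 hL h.cx).mono
        (prod_mono hδs (subset_univ (Icc (-R) R)))
      have a2 := (continuousOn_par₂ (x₀ := x₀) h0 hL h.ct).mono
        (prod_mono hδs (subset_univ (Icc (-R) R)))
      have a3 : Continuous fun q : ℝ × ℝ => p.eval q.2 := p.continuous.comp continuous_snd
      fun_prop
    obtain ⟨M, hM⟩ := (isCompact_Icc.prod isCompact_Icc).exists_bound_of_continuousOn cF'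
    refine (intervalIntegral.hasDerivAt_integral_of_dominated_loc_of_deriv_le
      (F' := fun ℓ y => ρ y * (p.eval y * (y * par Vx x₀ t₀ ℓ y + (-ℓ) * par Vt x₀ t₀ ℓ y)))
      (bound := fun _ => M) (s := Icc (ℓ - δ) (ℓ + δ)) (Icc_mem_nhds (by linarith) (by linarith))
      ?_ ?_ ?_ ?_ ?_ ?_).2
    · filter_upwards [Ioo_mem_nhds hℓ.1 hℓ.2] with s hs
      have := continuous_par (x₀ := x₀) h.cont (time_mem h0 hL hs)
      exact (by fun_prop : Continuous fun y => ρ y * (p.eval y * par V x₀ t₀ s y)).aestronglyMeasurable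
    · exact (by fun_prop : Continuous fun y => ρ y * (p.eval y * par V x₀ t₀ ℓ y)).intervalIntegrable _ _
    · exact (by fun_prop : Continuous fun y => ρ y * (p.eval y * (y * par Vx x₀ t₀ ℓ y
        + (-ℓ) * par Vt x₀ t₀ ℓ y))).aestronglyMeasurable
    · refine ae_of_all _ fun y hy s hs => hM (s, y) ⟨hs, ?_⟩
      rw [uIoc_of_le (by linarith)] at hy
      exact ⟨hy.1.le, hy.2⟩
    · exact intervalIntegrable_const
    · refine ae_of_all _ fun y _ s hs => ?_
      have d1 : HasDerivAt (fun s => x₀ + s * y) y s :=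
        (((hasDerivAt_id s).mul_const y).const_add x₀).congr_deriv (by simp)
      have d2 : HasDerivAt (fun s => t₀ - s ^ 2 / 2) (-s) s :=
        (((hasDerivAt_pow 2 s).div_const 2).const_sub t₀).congr_deriv (by norm_num)
      exact ((h.chain d1 d2 (time_mem h0 hL (hδs hs))).const_mul _).const_mul _
  -- integrate by parts
  have hz : ∫ y in (-R)..R, (ρ y * (p.eval y * (-y * par Vx x₀ t₀ ℓ y + ℓ * par Vxx x₀ t₀ ℓ y)) -
      (1 / ℓ) * (ρ y * ((derivative (derivative p) - X * derivative p).eval y * par V x₀ t₀ ℓ y))) = 0 := by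
    have d0 : ∀ y, HasDerivAt (fun y => x₀ + ℓ * y) ℓ y := fun y =>
        (((hasDerivAt_id y).const_mul ℓ).const_add x₀).congr_deriv (by simp)
    have d1 : ∀ y, HasDerivAt (par V x₀ t₀ ℓ) (ℓ * par Vx x₀ t₀ ℓ y) y := fun y => by
      have := HasDerivAt.comp y (h₂ := fun z => V z (t₀ - ℓ ^ 2 / 2)) (h.dx (x₀ + ℓ * y) _ htℓ) (d0 y)
      exact this.congr_deriv (mul_comm _ _)
    have d2 : ∀ y, HasDerivAt (par Vx x₀ t₀ ℓ) (ℓ * par Vxx x₀ t₀ ℓ y) y := fun y => by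
      have := HasDerivAt.comp y (h₂ := fun z => Vx z (t₀ - ℓ ^ 2 / 2)) (h.dxx (x₀ + ℓ * y) _ htℓ) (d0 y)
      exact this.congr_deriv (mul_comm _ _)
    rw [intervalIntegral.integral_eq_sub_of_hasDerivAt (f := fun y => ρ y * (p.eval y * par Vx x₀ t₀ ℓ y)
      - (1 / ℓ) * (ρ y * ((derivative p).eval y * par V x₀ t₀ ℓ y)))]
    · simp [hp1, hp2, hp3, hp4]
    · intro y _
      have e1 := (hasDerivAt_pdf y).mul ((p.hasDerivAt y).mul (d2 y))
      have e2 := ((hasDerivAt_pdf y).mul (((derivative p).hasDerivAt y).mul (d1 y))).const_mul (1 / ℓ)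
      refine (e1.sub e2).congr_deriv ?_
      simp only [eval_sub, eval_mul, eval_X, ← hρ, Pi.mul_apply]
      field_simp
      ring
    · refine Continuous.intervalIntegrable ?_ _ _
      fun_prop
  have i1 : IntervalIntegrable (fun y => ρ y * (p.eval y * (y * par Vx x₀ t₀ ℓ y
      + (-ℓ) * par Vt x₀ t₀ ℓ y))) volume (-R) R :=
    Continuous.intervalIntegrable (by fun_prop) _ _
  have i2 : IntervalIntegrable (fun y => (1 / ℓ) * (ρ y * ((derivative (derivative p)
      - X * derivative p).eval y * par V x₀ t₀ ℓ y))) volume (-R) R :=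
    Continuous.intervalIntegrable (by fun_prop) _ _
  have i3 : IntervalIntegrable (fun y => ℓ * (ρ y *
          (p.eval y * (par Vt x₀ t₀ ℓ y - par Vxx x₀ t₀ ℓ y)))) volume (-R) R :=
    Continuous.intervalIntegrable (by fun_prop) _ _
  refine key.congr_deriv ?_
  have e : ∀ y, ρ y * (p.eval y * (y * par Vx x₀ t₀ ℓ y + (-ℓ) * par Vt x₀ t₀ ℓ y))
      + (1 / ℓ) * (ρ y * ((derivative (derivative p) - X * derivative p).eval y * par V x₀ t₀ ℓ y))
      + ℓ * (ρ y * (p.eval y * (par Vt x₀ t₀ ℓ y - par Vxx x₀ t₀ ℓ y)))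
      = -(ρ y * (p.eval y * (-y * par Vx x₀ t₀ ℓ y + ℓ * par Vxx x₀ t₀ ℓ y)) -
      (1 / ℓ) * (ρ y * ((derivative (derivative p) - X * derivative p).eval y * par V x₀ t₀ ℓ y))) := by
    intro y; ring
  have e2 := intervalIntegral.integral_add (i1.add i2) i3
  rw [intervalIntegral.integral_add i1 i2, intervalIntegral.integral_const_mul,
    intervalIntegral.integral_const_mul] at e2
  simp_rw [e] at e2
  rw [intervalIntegral.integral_neg, hz] at e2
  linarith

end ZN

/-! ### Cut-offs -/

namespace ZN
open MeasureTheory ProbabilityTheory Polynomial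
variable {V Vt Vx Vxx v vt vx vxx : ℝ → ℝ → ℝ} {t₁ t₂ B x₀ t₀ L : ℝ}

/-- The generator `q ↦ q'' - y q'` of the Ornstein–Uhlenbeck semigroup. -/
def ou (q : ℝ[X]) : ℝ[X] := derivative (derivative q) - X * derivative q

/-- A polynomial cut-off, `(1 - a² y²)²`, used on `|y| ≤ 1/a`. -/
def chi (a : ℝ) : ℝ[X] := (1 - Polynomial.C (a ^ 2) * X ^ 2) ^ 2

lemma eval_chi (a y : ℝ) : (chi a).eval y = (1 - a ^ 2 * y ^ 2) ^ 2 := by simp [chi]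

lemma deriv_chi (a : ℝ) : derivative (chi a) =
    Polynomial.C (-4 * a ^ 2) * X + Polynomial.C (4 * a ^ 4) * X ^ 3 := by
  simp only [chi, derivative_pow, derivative_sub, derivative_one, derivative_mul, derivative_C,
    derivative_X, map_mul, map_pow, map_neg, map_ofNat]
  norm_num [show (Polynomial.C (2:ℝ)) = 2 from rfl, show (Polynomial.C (3:ℝ)) = 3 from rfl]
  ring

lemma deriv2_chi (a : ℝ) : derivative (derivative (chi a)) =
    Polynomial.C (-4 * a ^ 2) + Polynomial.C (12 * a ^ 4) * X ^ 2 := by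
  rw [deriv_chi]
  simp only [derivative_add, derivative_pow, derivative_mul, derivative_C,
    derivative_X, map_mul, map_pow, map_neg, map_ofNat]
  norm_num [show (Polynomial.C (2:ℝ)) = 2 from rfl, show (Polynomial.C (3:ℝ)) = 3 from rfl]
  ring

lemma ou_chi_mul (a : ℝ) (q : ℝ[X]) (y : ℝ) : (ou (chi a * q)).eval y =
    (1 - a ^ 2 * y ^ 2) ^ 2 * (ou q).eval y
      + 2 * (-4 * a ^ 2 * y + 4 * a ^ 4 * y ^ 3) * (derivative q).eval y
      + (-4 * a ^ 2 + 12 * a ^ 4 * y ^ 2 - y * (-4 * a ^ 2 * y + 4 * a ^ 4 * y ^ 3)) * q.eval y := by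
  have : ou (chi a * q) = chi a * ou q + 2 * derivative (chi a) * derivative q
      + (derivative (derivative (chi a)) - X * derivative (chi a)) * q := by
    simp only [ou, derivative_mul, derivative_add]; ring
  rw [this, deriv2_chi, deriv_chi]
  simp [eval_chi]

lemma chi_bound {a y : ℝ} (h : |a * y| ≤ 1) : 0 ≤ (1 - a ^ 2 * y ^ 2) ^ 2 ∧ (1 - a ^ 2 * y ^ 2) ^ 2 ≤ 1 := by
  have h1 : a ^ 2 * y ^ 2 ≤ 1 := by
    rw [← mul_pow, ← sq_abs]; nlinarith [abs_nonneg (a * y)]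
  have h2 : 0 ≤ a ^ 2 * y ^ 2 := by positivity
  constructor <;> nlinarith

lemma ou_chi_bound {a y : ℝ} (ha0 : 0 ≤ a) (ha1 : a ≤ 1) (h : |a * y| ≤ 1) (q : ℝ[X]) :
    |(ou (chi a * q)).eval y| ≤ |(ou q).eval y| + 8 * |(derivative q).eval y| + 20 * |q.eval y| := by
  rw [ou_chi_mul]
  obtain ⟨c1, c2⟩ := chi_bound h
  have ha2 : a ^ 2 ≤ 1 := by nlinarith
  have h1 : a ^ 2 * y ^ 2 ≤ 1 := by
    rw [← mul_pow, ← sq_abs]; nlinarith [abs_nonneg (a * y)]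
  have h2 : 0 ≤ a ^ 2 * y ^ 2 := by positivity
  have b1 : |(1 - a ^ 2 * y ^ 2) ^ 2| ≤ 1 := by rw [abs_of_nonneg c1]; exact c2
  have b2 : |2 * (-4 * a ^ 2 * y + 4 * a ^ 4 * y ^ 3)| ≤ 8 := by
    have e : 2 * (-4 * a ^ 2 * y + 4 * a ^ 4 * y ^ 3) = (-8) * (a * ((a * y) * (1 - a ^ 2 * y ^ 2))) := by ring
    rw [e, abs_mul, abs_mul, abs_mul, abs_of_nonneg ha0, abs_of_nonneg (by linarith : 0 ≤ 1 - a ^ 2 * y ^ 2)]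
    have k1 : |a * y| * (1 - a ^ 2 * y ^ 2) ≤ 1 := mul_le_one₀ h (by linarith) (by linarith)
    have k2 : 0 ≤ |a * y| * (1 - a ^ 2 * y ^ 2) := mul_nonneg (abs_nonneg _) (by linarith)
    have k3 := mul_le_one₀ ha1 k2 k1
    rw [show |(-8:ℝ)| = 8 by norm_num]; linarith
  have b3 : |-4 * a ^ 2 + 12 * a ^ 4 * y ^ 2 - y * (-4 * a ^ 2 * y + 4 * a ^ 4 * y ^ 3)| ≤ 20 := by
    have e : -4 * a ^ 2 + 12 * a ^ 4 * y ^ 2 - y * (-4 * a ^ 2 * y + 4 * a ^ 4 * y ^ 3)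
      = -4 * a ^ 2 + 12 * (a ^ 2 * (a ^ 2 * y ^ 2)) + 4 * ((a ^ 2 * y ^ 2) * (1 - a ^ 2 * y ^ 2)) := by ring
    rw [e]
    have k1 := mul_le_one₀ ha2 h2 h1
    have k2 : 0 ≤ a ^ 2 * (a ^ 2 * y ^ 2) := by positivity
    have k3 : 0 ≤ a ^ 2 := by positivity
    rw [abs_le]; constructor <;> nlinarith
  calc _ ≤ |(1 - a ^ 2 * y ^ 2) ^ 2 * (ou q).eval y|
      + |2 * (-4 * a ^ 2 * y + 4 * a ^ 4 * y ^ 3) * (derivative q).eval y|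
      + |(-4 * a ^ 2 + 12 * a ^ 4 * y ^ 2 - y * (-4 * a ^ 2 * y + 4 * a ^ 4 * y ^ 3)) * q.eval y| :=
        abs_add_three _ _ _
    _ ≤ 1 * |(ou q).eval y| + 8 * |(derivative q).eval y| + 20 * |q.eval y| := by
        rw [abs_mul (_ ^ 2), abs_mul (2 * _), abs_mul (_ - _)]; gcongr
    _ = _ := by ring

/-- `1/(n+1)`, the inverse radius of the `n`-th cut-off. -/
def aa (n : ℕ) : ℝ := ((n : ℝ) + 1)⁻¹

lemma aa_pos (n : ℕ) : 0 < aa n := by unfold aa; positivity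
lemma aa_le (n : ℕ) : aa n ≤ 1 := inv_le_one_of_one_le₀ (le_add_of_nonneg_left n.cast_nonneg)
lemma aa_tendsto : Tendsto aa atTop (𝓝 0) := by
  have := tendsto_one_div_add_atTop_nhds_zero_nat (𝕜 := ℝ)
  refine this.congr fun n => ?_
  simp [aa]

/-- Restriction of a function to the interval of the `n`-th cut-off. -/
def cut (n : ℕ) (g : ℝ → ℝ) : ℝ → ℝ := (Ioc (-(aa n)⁻¹) (aa n)⁻¹).indicator g

lemma cut_mem {n : ℕ} {y : ℝ} (hy : y ∈ Ioc (-(aa n)⁻¹) (aa n)⁻¹) : |aa n * y| ≤ 1 := by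
  have ha := aa_pos n
  rw [abs_mul, abs_of_pos ha]
  have : |y| ≤ (aa n)⁻¹ := abs_le.2 ⟨hy.1.le, hy.2⟩
  calc aa n * |y| ≤ aa n * (aa n)⁻¹ := by gcongr
    _ = 1 := mul_inv_cancel₀ ha.ne'

lemma integral_cut (n : ℕ) (g : ℝ → ℝ) :
    ∫ y in (-(aa n)⁻¹)..(aa n)⁻¹, gaussianPDFReal 0 1 y * g y = ∫ y, cut n g y ∂gam := by
  have ha := inv_pos.2 (aa_pos n)
  rw [intervalIntegral.integral_of_le (by linarith), integral_gam, ← integral_indicator measurableSet_Ioc]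
  congr 1; ext y
  by_cases hy : y ∈ Ioc (-(aa n)⁻¹) (aa n)⁻¹ <;> simp [cut, hy]

lemma cut_eventually (g : ℕ → ℝ → ℝ) (y : ℝ) : ∀ᶠ n in atTop, cut n (g n) y = g n y := by
  have h1 : Tendsto (fun n : ℕ => (n : ℝ) + 1) atTop atTop :=
    tendsto_atTop_add_const_right _ _ tendsto_natCast_atTop_atTop
  filter_upwards [h1.eventually_gt_atTop |y|] with n hn
  have : y ∈ Ioc (-(aa n)⁻¹) (aa n)⁻¹ := by
    have := abs_lt.1 hn
    simp only [aa, inv_inv]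
    exact ⟨this.1, this.2.le⟩
  simp [cut, this]

lemma cut_L1 {g : ℕ → ℝ → ℝ} {g₀ G : ℝ → ℝ} (hm : ∀ n, Continuous (g n)) (hm0 : Continuous g₀)
    (hG : Integrable G gam) (hb : ∀ n y, |aa n * y| ≤ 1 → |g n y| ≤ G y)
    (hlim : ∀ y, Tendsto (fun n => g n y) atTop (𝓝 (g₀ y))) (hg0 : ∀ y, |g₀ y| ≤ G y) :
    Tendsto (fun n => ∫ y, |cut n (g n) y - g₀ y| ∂gam) atTop (𝓝 0) := by
  have hG0 : ∀ y, 0 ≤ G y := fun y => (abs_nonneg _).trans (hg0 y)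
  have := tendsto_integral_of_dominated_convergence (μ := gam)
    (F := fun n y => |cut n (g n) y - g₀ y|) (f := fun _ => 0) (fun y => 2 * G y) ?_ ?_ ?_ ?_
  · simpa using this
  · intro n
    have : Measurable (cut n (g n)) := (hm n).measurable.indicator measurableSet_Ioc
    exact ((this.sub hm0.measurable).abs).aestronglyMeasurable
  · exact hG.const_mul 2
  · intro n
    refine ae_of_all _ fun y => ?_
    have h1 : |cut n (g n) y| ≤ G y := by
      by_cases hy : y ∈ Ioc (-(aa n)⁻¹) (aa n)⁻¹
      · simp only [cut, indicator_of_mem hy]; exact hb n y (cut_mem hy)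
      · simp only [cut, indicator_of_notMem hy, abs_zero]; exact hG0 y
    rw [Real.norm_eq_abs, abs_abs]
    linarith [abs_sub (cut n (g n) y) (g₀ y), hg0 y]
  · refine ae_of_all _ fun y => ?_
    have h1 : Tendsto (fun n => |g n y - g₀ y|) atTop (𝓝 0) := by
      have := ((hlim y).sub_const (g₀ y)).abs
      simpa using this
    refine h1.congr' ?_
    filter_upwards [cut_eventually g y] with n hn
    rw [hn]

lemma chi_L1 (q : ℝ[X]) :
    Tendsto (fun n => ∫ y, |cut n (fun y => (chi (aa n) * q).eval y) y - q.eval y| ∂gam) atTop (𝓝 0) := by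
  refine cut_L1 (G := fun y => |q.eval y|) (fun n => Polynomial.continuous _) q.continuous
    (integrable_poly q).abs ?_ ?_ (fun y => le_rfl)
  · intro n y hy
    obtain ⟨c1, c2⟩ := chi_bound hy
    rw [eval_mul, eval_chi, abs_mul, abs_of_nonneg c1]
    exact mul_le_of_le_one_left (abs_nonneg _) c2
  · intro y
    have : ContinuousAt (fun a : ℝ => (1 - a ^ 2 * y ^ 2) ^ 2 * q.eval y) 0 := by fun_prop
    have := this.tendsto.comp aa_tendsto
    simp only [eval_mul, eval_chi]
    simpa [Function.comp_def] using this

lemma ou_L1 (q : ℝ[X]) :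
    Tendsto (fun n => ∫ y, |cut n (fun y => (ou (chi (aa n) * q)).eval y) y - (ou q).eval y| ∂gam)
      atTop (𝓝 0) := by
  refine cut_L1 (G := fun y => |(ou q).eval y| + 8 * |(derivative q).eval y| + 20 * |q.eval y|)
    (fun n => Polynomial.continuous _) (ou q).continuous
    (((integrable_poly _).abs.add ((integrable_poly _).abs.const_mul 8)).add
      ((integrable_poly _).abs.const_mul 20)) ?_ ?_ ?_
  · intro n y hy
    exact ou_chi_bound (aa_pos n).le (aa_le n) hy q
  · intro y
    simp_rw [ou_chi_mul]
    have : ContinuousAt (fun a : ℝ => (1 - a ^ 2 * y ^ 2) ^ 2 * (ou q).eval y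
      + 2 * (-4 * a ^ 2 * y + 4 * a ^ 4 * y ^ 3) * (derivative q).eval y
      + (-4 * a ^ 2 + 12 * a ^ 4 * y ^ 2 - y * (-4 * a ^ 2 * y + 4 * a ^ 4 * y ^ 3)) * q.eval y) 0 := by
      fun_prop
    have := this.tendsto.comp aa_tendsto
    simpa [Function.comp_def] using this
  · intro y
    have := abs_nonneg ((derivative q).eval y)
    have := abs_nonneg (q.eval y)
    linarith

end ZN

/-! ### Evolution of Gaussian averages -/

namespace ZN
open MeasureTheory ProbabilityTheory Polynomial
variable {V Vt Vx Vxx v vt vx vxx : ℝ → ℝ → ℝ} {t₁ t₂ B x₀ t₀ L : ℝ}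

lemma integrable_poly_mul (q : ℝ[X]) {w : ℝ → ℝ} (hw : Continuous w) (hB : ∀ y, |w y| ≤ B) :
    Integrable (fun y => q.eval y * w y) gam :=
  (integrable_poly q).mul_bdd (c := B) hw.aestronglyMeasurable (ae_of_all _ hB)

/-- Replacing a polynomial by a truncated one changes its average against a function bounded by `B`
by at most `B` times the `L¹(gam)` distance, uniformly in that function. -/
lemma cut_err (n : ℕ) (r r₀ : ℝ[X]) {w : ℝ → ℝ} (hw : Continuous w) (hB : ∀ y, |w y| ≤ B) :
    |∫ y, cut n (fun y => r.eval y * w y) y ∂gam - ∫ y, r₀.eval y * w y ∂gam|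
      ≤ B * ∫ y, |cut n (fun y => r.eval y) y - r₀.eval y| ∂gam := by
  have e : ∀ y, cut n (fun y => r.eval y * w y) y = cut n (fun y => r.eval y) y * w y := by
    intro y
    by_cases hy : y ∈ Ioc (-(aa n)⁻¹) (aa n)⁻¹ <;> simp [cut, hy]
  have i1 : Integrable (cut n (fun y => r.eval y * w y)) gam :=
    (integrable_poly_mul r hw hB).indicator measurableSet_Ioc
  have i2 : Integrable (cut n (fun y => r.eval y)) gam :=
    (integrable_poly r).indicator measurableSet_Ioc
  rw [← integral_sub i1 (integrable_poly_mul r₀ hw hB), ← integral_const_mul]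
  refine (abs_integral_le_integral_abs).trans ?_
  refine integral_mono_of_nonneg (ae_of_all _ fun y => abs_nonneg _)
    ((i2.sub (integrable_poly r₀)).abs.const_mul B) (ae_of_all _ fun y => ?_)
  simp only
  rw [e, ← sub_mul, abs_mul, mul_comm]
  exact mul_le_mul_of_nonneg_right (hB y) (abs_nonneg _)

lemma chi_ends (n : ℕ) (q : ℝ[X]) {y : ℝ} (hy : (aa n) ^ 2 * y ^ 2 = 1) :
    (chi (aa n) * q).eval y = 0 ∧ (derivative (chi (aa n) * q)).eval y = 0 := by
  have h1 : (chi (aa n)).eval y = 0 := by rw [eval_chi, hy]; ring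
  have h2 : (derivative (chi (aa n))).eval y = 0 := by
    rw [deriv_chi]; simp
    linear_combination 4 * (aa n) ^ 2 * y * hy
  constructor
  · rw [eval_mul, h1, zero_mul]
  · rw [derivative_mul, eval_add, eval_mul, eval_mul, h1, h2]; ring

lemma hasDerivAt_cut (h : C21 V Vt Vx Vxx t₁ t₂) (h0 : t₀ ≤ t₂) (hL : t₁ ≤ t₀ - L ^ 2 / 2)
    (n : ℕ) (q : ℝ[X]) {ℓ : ℝ} (hℓ : ℓ ∈ Ioo 0 L) :
    HasDerivAt (fun ℓ => ∫ y, cut n (fun y => (chi (aa n) * q).eval y * par V x₀ t₀ ℓ y) y ∂gam)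
      (-(1 / ℓ) * (∫ y, cut n (fun y => (ou (chi (aa n) * q)).eval y * par V x₀ t₀ ℓ y) y ∂gam)
        - ℓ * ∫ y, cut n (fun y => (chi (aa n) * q).eval y *
          (par Vt x₀ t₀ ℓ y - par Vxx x₀ t₀ ℓ y)) y ∂gam) ℓ := by
  have ha := (aa_pos n).ne'
  have e1 := chi_ends n q (y := (aa n)⁻¹) (by field_simp)
  have e2 := chi_ends n q (y := -(aa n)⁻¹) (by field_simp)
  have := hasDerivAt_local (x₀ := x₀) h h0 hL (inv_nonneg.2 (aa_pos n).le) e1.1 e2.1 e1.2 e2.2 hℓ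
  simp only [integral_cut] at this
  exact this

/-- Derivative in `ℓ` of the average of the rescaled profile against a polynomial `q`: the
Ornstein–Uhlenbeck operator acts on `q`, and `V_t - V_xx` enters as a forcing term. The localised
formulas for `q` times a cut-off converge locally uniformly in `ℓ`. -/
theorem hasDerivAt_avg (h : C21 V Vt Vx Vxx t₁ t₂) (h0 : t₀ ≤ t₂) (hL : t₁ ≤ t₀ - L ^ 2 / 2)
    (hB : ∀ x, ∀ t ∈ Ioo t₁ t₂, |V x t| ≤ B) {G : ℝ}
    (hG : ∀ x, ∀ t ∈ Ioo t₁ t₂, |Vt x t - Vxx x t| ≤ G) (q : ℝ[X]) {ℓ : ℝ} (hℓ : ℓ ∈ Ioo 0 L) :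
    HasDerivAt (fun ℓ => ∫ y, q.eval y * par V x₀ t₀ ℓ y ∂gam)
      (-(1 / ℓ) * (∫ y, (ou q).eval y * par V x₀ t₀ ℓ y ∂gam)
        - ℓ * ∫ y, q.eval y * (par Vt x₀ t₀ ℓ y - par Vxx x₀ t₀ ℓ y) ∂gam) ℓ := by
  have hs : ∀ s ∈ Ioo (ℓ / 2) L, s ∈ Ioo 0 L := fun s hs => ⟨by linarith [hs.1, hℓ.1], hs.2⟩
  have cV : ∀ s ∈ Ioo 0 L, Continuous (par V x₀ t₀ s) := fun s hs =>
    continuous_par h.cont (time_mem h0 hL hs)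
  have cf : ∀ s ∈ Ioo 0 L, Continuous (fun y => par Vt x₀ t₀ s y - par Vxx x₀ t₀ s y) := fun s hs =>
    (continuous_par h.ct (time_mem h0 hL hs)).sub (continuous_par h.cxx (time_mem h0 hL hs))
  have bV : ∀ s ∈ Ioo 0 L, ∀ y, |par V x₀ t₀ s y| ≤ B := fun s hs y => hB _ _ (time_mem h0 hL hs)
  have bf : ∀ s ∈ Ioo 0 L, ∀ y, |par Vt x₀ t₀ s y - par Vxx x₀ t₀ s y| ≤ G := fun s hs y =>
    hG _ _ (time_mem h0 hL hs)
  refine hasDerivAt_of_tendstoLocallyUniformlyOn (l := atTop) (s := Ioo (ℓ / 2) L)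
    (f := fun n ℓ => ∫ y, cut n (fun y => (chi (aa n) * q).eval y * par V x₀ t₀ ℓ y) y ∂gam)
    (f' := fun n ℓ =>
      -(1 / ℓ) * (∫ y, cut n (fun y => (ou (chi (aa n) * q)).eval y * par V x₀ t₀ ℓ y) y ∂gam)
        - ℓ * ∫ y, cut n (fun y => (chi (aa n) * q).eval y *
          (par Vt x₀ t₀ ℓ y - par Vxx x₀ t₀ ℓ y)) y ∂gam)
    (g' := fun ℓ => -(1 / ℓ) * (∫ y, (ou q).eval y * par V x₀ t₀ ℓ y ∂gam)
        - ℓ * ∫ y, q.eval y * (par Vt x₀ t₀ ℓ y - par Vxx x₀ t₀ ℓ y) ∂gam)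
    isOpen_Ioo (TendstoUniformlyOn.tendstoLocallyUniformlyOn ?_)
    (Eventually.of_forall fun n s hs' => hasDerivAt_cut h h0 hL n q (hs s hs')) ?_
    ⟨by linarith [hℓ.1], hℓ.2⟩
  · have hT : Tendsto (fun n => 2 / ℓ * (B * ∫ y, |cut n (fun y => (ou (chi (aa n) * q)).eval y) y
          - (ou q).eval y| ∂gam) + L * (G * ∫ y, |cut n (fun y => (chi (aa n) * q).eval y) y
          - q.eval y| ∂gam)) atTop (𝓝 0) := by
      have := (((ou_L1 q).const_mul B).const_mul (2 / ℓ)).add (((chi_L1 q).const_mul G).const_mul L)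
      simpa using this
    rw [Metric.tendstoUniformlyOn_iff]
    intro ε hε
    filter_upwards [hT.eventually_lt_const hε] with n hn s hs'
    refine lt_of_le_of_lt ?_ hn
    have hs0 := hs s hs'
    have hsp : 0 < s := hs0.1
    have hℓp : 0 < ℓ := hℓ.1
    have k1 := cut_err n (ou (chi (aa n) * q)) (ou q) (cV s hs0) (bV s hs0)
    have k2 := cut_err n (chi (aa n) * q) q (cf s hs0) (bf s hs0)
    rw [dist_comm, Real.dist_eq]
    set I1 := ∫ y, cut n (fun y => (ou (chi (aa n) * q)).eval y * par V x₀ t₀ s y) y ∂gam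
    set I2 := ∫ y, (ou q).eval y * par V x₀ t₀ s y ∂gam
    set I3 := ∫ y, cut n (fun y => (chi (aa n) * q).eval y *
          (par Vt x₀ t₀ s y - par Vxx x₀ t₀ s y)) y ∂gam
    set I4 := ∫ y, q.eval y * (par Vt x₀ t₀ s y - par Vxx x₀ t₀ s y) ∂gam
    have e : -(1 / s) * I1 - s * I3 - (-(1 / s) * I2 - s * I4)
        = -(1 / s) * (I1 - I2) - s * (I3 - I4) := by ring
    rw [e]
    refine (abs_sub _ _).trans ?_
    rw [abs_mul, abs_mul, abs_neg, abs_of_pos hsp, abs_of_pos (by positivity : 0 < 1 / s)]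
    have hs1 : 1 / s ≤ 2 / ℓ := by
      rw [div_le_div_iff₀ hsp hℓp]; linarith [hs'.1]
    have := hs'.2.le
    gcongr
    linarith [hs'.1]
  · intro s hs'
    have hs0 := hs s hs'
    rw [tendsto_iff_dist_tendsto_zero]
    have hT := (chi_L1 q).const_mul B
    rw [mul_zero] at hT
    refine squeeze_zero (fun _ => dist_nonneg) (fun n => ?_) hT
    rw [Real.dist_eq]
    exact cut_err n (chi (aa n) * q) q (cV s hs0) (bV s hs0)

/-- Gaussian averages of a subsolution of the heat equation increase with the scale. -/
theorem avg_mono (h : C21 V Vt Vx Vxx t₁ t₂) (h0 : t₀ ≤ t₂) (hL : t₁ ≤ t₀ - L ^ 2 / 2)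
    (hB : ∀ x, ∀ t ∈ Ioo t₁ t₂, |V x t| ≤ B)
    (hsub : ∀ x, ∀ t ∈ Ioo t₁ t₂, Vt x t - Vxx x t ≤ 0) {a b : ℝ} (ha : 0 < a) (hab : a ≤ b) (hb : b < L) :
    ∫ y, par V x₀ t₀ a y ∂gam ≤ ∫ y, par V x₀ t₀ b y ∂gam := by
  have hs : ∀ s ∈ Icc a b, s ∈ Ioo 0 L := fun s hs => ⟨by linarith [hs.1], by linarith [hs.2]⟩
  have cV : ∀ s ∈ Ioo 0 L, Continuous (par V x₀ t₀ s) := fun s hs =>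
    continuous_par h.cont (time_mem h0 hL hs)
  have bV : ∀ s ∈ Ioo 0 L, ∀ y, |par V x₀ t₀ s y| ≤ B := fun s hs y => hB _ _ (time_mem h0 hL hs)
  set P : ℕ → ℝ → ℝ := fun n ℓ =>
    ∫ y, cut n (fun y => (chi (aa n) * 1).eval y * par V x₀ t₀ ℓ y) y ∂gam with hP
  set κ : ℕ → ℝ := fun n =>
    B * ∫ y, |cut n (fun y => (ou (chi (aa n) * 1)).eval y) y - (ou 1).eval y| ∂gam with hκ
  have hκ0 : Tendsto κ atTop (𝓝 0) := by
    have := (ou_L1 1).const_mul B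
    rw [mul_zero] at this
    exact this
  have hPl : ∀ s ∈ Icc a b, Tendsto (fun n => P n s) atTop (𝓝 (∫ y, par V x₀ t₀ s y ∂gam)) := by
    intro s hs'
    rw [tendsto_iff_dist_tendsto_zero]
    have hT := (chi_L1 1).const_mul B
    rw [mul_zero] at hT
    refine squeeze_zero (fun _ => dist_nonneg) (fun n => ?_) hT
    rw [Real.dist_eq]
    have := cut_err n (chi (aa n) * 1) 1 (cV s (hs s hs')) (bV s (hs s hs'))
    simpa [hP] using this
  have hmono : ∀ n, P n a ≤ P n b + κ n * (log b - log a) := by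
    intro n
    have hm : MonotoneOn (fun ℓ => P n ℓ + κ n * log ℓ) (Icc a b) := by
      have hd : ∀ s ∈ Icc a b, HasDerivAt (fun ℓ => P n ℓ + κ n * log ℓ) _ s := fun s hs' =>
        (hasDerivAt_cut (x₀ := x₀) h h0 hL n 1 (hs s hs')).add
          ((Real.hasDerivAt_log (hs s hs').1.ne').const_mul (κ n))
      refine monotoneOn_of_hasDerivWithinAt_nonneg (convex_Icc a b)
        (fun s hs' => (hd s hs').continuousAt.continuousWithinAt)
        (fun s hs' => (hd s (interior_subset hs')).hasDerivWithinAt) ?_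
      intro s hs'
      have hs0 := hs s (interior_subset hs')
      have hsp : 0 < s := hs0.1
      have k1 := cut_err n (ou (chi (aa n) * 1)) (ou 1) (cV s hs0) (bV s hs0)
      have z : (ou 1) = 0 := by simp [ou]
      have k2 : ∫ y, cut n (fun y => (ou (chi (aa n) * 1)).eval y * par V x₀ t₀ s y) y ∂gam ≤ κ n := by
        refine le_trans ?_ k1
        rw [z]; simpa using le_abs_self _
      have k3 : ∫ y, cut n (fun y => (chi (aa n) * 1).eval y *
          (par Vt x₀ t₀ s y - par Vxx x₀ t₀ s y)) y ∂gam ≤ 0 := by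
        refine integral_nonpos fun y => ?_
        by_cases hy : y ∈ Ioc (-(aa n)⁻¹) (aa n)⁻¹
        · simp only [cut, indicator_of_mem hy, mul_one, eval_chi, Pi.zero_apply]
          exact mul_nonpos_of_nonneg_of_nonpos (sq_nonneg _) (hsub _ _ (time_mem h0 hL hs0))
        · simp [cut, indicator_of_notMem hy]
      set I1 := ∫ y, cut n (fun y => (ou (chi (aa n) * 1)).eval y * par V x₀ t₀ s y) y ∂gam
      set I2 := ∫ y, cut n (fun y => (chi (aa n) * 1).eval y *
          (par Vt x₀ t₀ s y - par Vxx x₀ t₀ s y)) y ∂gam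
      have e1 : 0 ≤ (1 / s) * (κ n - I1) := mul_nonneg (by positivity) (by linarith)
      have e2 : 0 ≤ s * (-I2) := mul_nonneg hsp.le (by linarith)
      have : -(1 / s) * I1 - s * I2 + κ n * s⁻¹ = (1 / s) * (κ n - I1) + s * (-I2) := by ring
      show 0 ≤ -(1 / s) * I1 - s * I2 + κ n * s⁻¹
      rw [this]; linarith
    have := hm ⟨le_rfl, hab⟩ ⟨hab, le_rfl⟩ hab
    simp only at this
    linarith
  have hlim := ((hPl b ⟨hab, le_rfl⟩).add (hκ0.mul_const (log b - log a)))
  rw [zero_mul, add_zero] at hlim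
  exact le_of_tendsto_of_tendsto' (hPl a ⟨le_rfl, hab⟩) hlim hmono

end ZN

/-! ### Pointwise values and Gaussian averages -/

namespace ZN
open MeasureTheory ProbabilityTheory Polynomial
variable {V Vt Vx Vxx v vt vx vxx : ℝ → ℝ → ℝ} {t₁ t₂ B C x₀ t₀ L : ℝ}

/-- `√(z² + ε²)`, a smooth approximation of `|z|`. -/
def reg (ε z : ℝ) : ℝ := √(z ^ 2 + ε ^ 2)

lemma reg_pos {ε : ℝ} (hε : 0 < ε) (z : ℝ) : 0 < reg ε z := by unfold reg; positivity
lemma reg_sq (ε z : ℝ) : reg ε z ^ 2 = z ^ 2 + ε ^ 2 := Real.sq_sqrt (by positivity)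
lemma abs_le_reg (ε z : ℝ) : |z| ≤ reg ε z := Real.abs_le_sqrt (by nlinarith [sq_nonneg ε])
lemma reg_le {ε : ℝ} (hε : 0 < ε) (z : ℝ) : reg ε z ≤ |z| + ε := by
  unfold reg
  rw [Real.sqrt_le_left (by positivity)]
  nlinarith [sq_abs z, abs_nonneg z]

lemma hasDerivAt_reg {ε : ℝ} (hε : 0 < ε) (z : ℝ) : HasDerivAt (reg ε) (z / reg ε z) z := by
  have h := (((hasDerivAt_pow 2 z).add_const (ε ^ 2)).sqrt (by positivity))
  refine h.congr_deriv ?_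
  have := (reg_pos hε z).ne'
  unfold reg at *
  field_simp; norm_num

lemma continuous_reg (ε : ℝ) : Continuous (reg ε) := by unfold reg; fun_prop

lemma C21_reg (h : Sol v vt vx vxx t₁ t₂ B C) {ε : ℝ} (hε : 0 < ε) :
    C21 (fun x t => rexp (-C * t) * reg ε (v x t))
      (fun x t => rexp (-C * t) * (v x t * vt x t / reg ε (v x t) - C * reg ε (v x t)))
      (fun x t => rexp (-C * t) * (v x t * vx x t / reg ε (v x t)))
      (fun x t => rexp (-C * t) * ((vx x t ^ 2 + v x t * vxx x t) / reg ε (v x t)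
        - v x t ^ 2 * vx x t ^ 2 / reg ε (v x t) ^ 3)) t₁ t₂ := by
  have hr : ∀ z, reg ε z ≠ 0 := fun z => (reg_pos hε z).ne'
  have cv := h.cont
  have cx := h.cx
  have ct := h.ct
  have cxx := h.cxx
  have cr : ContinuousOn (fun p : ℝ × ℝ => reg ε (v p.1 p.2)) (univ ×ˢ Ioo t₁ t₂) :=
    (continuous_reg ε).comp_continuousOn cv
  have ce : ContinuousOn (fun p : ℝ × ℝ => rexp (-C * p.2)) (univ ×ˢ Ioo t₁ t₂) := by fun_prop
  refine ⟨?_, ?_, ?_, ?_, ?_, ?_⟩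
  · intro x t ht
    have d1 : HasDerivAt (fun s => rexp (-C * s)) (rexp (-C * t) * (-C)) t := by
      have := ((hasDerivAt_id t).const_mul (-C)).exp
      exact this.congr_deriv (by simp)
    have d2 := HasDerivAt.comp t (hasDerivAt_reg hε (v x t)) (h.dt x t ht)
    refine (d1.mul d2).congr_deriv ?_
    simp only [Function.comp]
    ring
  · intro x t ht
    have d2 := HasDerivAt.comp x (h₂ := reg ε) (hasDerivAt_reg hε (v x t)) (h.dx x t ht)
    exact (d2.const_mul _).congr_deriv (by ring)
  · intro x t ht
    have d2 := HasDerivAt.comp x (h₂ := reg ε) (hasDerivAt_reg hε (v x t)) (h.dx x t ht)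
    have d3 := (((h.dx x t ht).mul (h.dxx x t ht)).div d2 (hr _)).const_mul (rexp (-C * t))
    refine d3.congr_deriv ?_
    simp only [Function.comp, Pi.mul_apply]
    have := hr (v x t)
    field_simp
  · exact ce.mul (((cv.mul ct).div cr (fun _ _ => hr _)).sub (cr.const_mul C))
  · exact ce.mul ((cv.mul cx).div cr (fun _ _ => hr _))
  · exact ce.mul ((((cx.pow 2).add (cv.mul cxx)).div cr (fun _ _ => hr _)).sub
      (((cv.pow 2).mul (cx.pow 2)).div (cr.pow 3) (fun _ _ => pow_ne_zero _ (hr _))))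

/-- Kato's inequality in regularised form: `e^{-Ct} √(v² + ε²)` is a subsolution of the heat
equation. -/
lemma reg_sub (h : Sol v vt vx vxx t₁ t₂ B C) {ε : ℝ} (hε : 0 < ε) (x : ℝ) {t : ℝ} (ht : t ∈ Ioo t₁ t₂) :
    rexp (-C * t) * (v x t * vt x t / reg ε (v x t) - C * reg ε (v x t))
     - rexp (-C * t) * ((vx x t ^ 2 + v x t * vxx x t) / reg ε (v x t)
        - v x t ^ 2 * vx x t ^ 2 / reg ε (v x t) ^ 3) ≤ 0 := by
  have hS := reg_pos hε (v x t)
  have hS2 := reg_sq ε (v x t)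
  set S := reg ε (v x t)
  have hC := h.hC
  have e : rexp (-C * t) * (v x t * vt x t / S - C * S)
     - rexp (-C * t) * ((vx x t ^ 2 + v x t * vxx x t) / S - v x t ^ 2 * vx x t ^ 2 / S ^ 3)
     = rexp (-C * t) * ((v x t * (vt x t - vxx x t) - C * S ^ 2) / S - vx x t ^ 2 * (S ^ 2 - v x t ^ 2) / S ^ 3) := by
    field_simp; ring
  rw [e]
  have h1 : v x t * (vt x t - vxx x t) ≤ C * v x t ^ 2 := by
    calc _ ≤ |v x t * (vt x t - vxx x t)| := le_abs_self _
      _ = |v x t| * |vt x t - vxx x t| := abs_mul _ _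
      _ ≤ |v x t| * (C * |v x t|) := by gcongr; exact h.eq x t ht
      _ = C * v x t ^ 2 := by rw [← sq_abs]; ring
  have h2 : v x t * (vt x t - vxx x t) - C * S ^ 2 ≤ 0 := by
    rw [hS2]; nlinarith [mul_nonneg hC (sq_nonneg ε)]
  have h3 : 0 ≤ vx x t ^ 2 * (S ^ 2 - v x t ^ 2) / S ^ 3 := by
    rw [hS2];
    have : v x t ^ 2 + ε ^ 2 - v x t ^ 2 = ε ^ 2 := by ring
    rw [this]; positivity
  have h4 := div_nonpos_of_nonpos_of_nonneg h2 hS.le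
  exact mul_nonpos_of_nonneg_of_nonpos (exp_pos _).le (by linarith)

lemma integrable_bdd {w : ℝ → ℝ} (hw : Continuous w) (hB : ∀ y, |w y| ≤ B) : Integrable w gam :=
  (integrable_poly_mul 1 hw hB).congr (ae_of_all _ fun y => by simp)

/-- Gaussian averages of `|v|` at smaller scales (later times) are controlled by those at larger
ones, because `e^{-Ct} |v|` is a limit of subsolutions of the heat equation. -/
theorem kato (h : Sol v vt vx vxx t₁ t₂ B C) (h0 : t₀ ≤ t₂) (hL : t₁ ≤ t₀ - L ^ 2 / 2)
    {a b : ℝ} (ha : 0 < a) (hab : a ≤ b) (hb : b < L) :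
    ∫ y, |par v x₀ t₀ a y| ∂gam ≤ rexp (C * (b ^ 2 - a ^ 2) / 2) * ∫ y, |par v x₀ t₀ b y| ∂gam := by
  have hsa : a ∈ Ioo 0 L := ⟨ha, by linarith⟩
  have hsb : b ∈ Ioo 0 L := ⟨by linarith, hb⟩
  have cV : ∀ s ∈ Ioo 0 L, Continuous (par v x₀ t₀ s) := fun s hs =>
    continuous_par h.cont (time_mem h0 hL hs)
  have bV : ∀ s ∈ Ioo 0 L, ∀ y, |par v x₀ t₀ s y| ≤ B := fun s hs y => h.bd _ _ (time_mem h0 hL hs)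
  have iV : ∀ s ∈ Ioo 0 L, Integrable (fun y => |par v x₀ t₀ s y|) gam := fun s hs =>
    (integrable_bdd (cV s hs) (bV s hs)).abs
  have key : ∀ ε > 0, ∫ y, |par v x₀ t₀ a y| ∂gam ≤
      rexp (C * (b ^ 2 - a ^ 2) / 2) * (∫ y, |par v x₀ t₀ b y| ∂gam + ε) := by
    intro ε hε
    have hm := avg_mono (x₀ := x₀) (B := rexp (-C * t₁) * (B + ε)) (C21_reg h hε) h0 hL ?_
      (fun x t ht => reg_sub h hε x ht) ha hab hb
    · have e : ∀ s, ∫ y, par (fun x t => rexp (-C * t) * reg ε (v x t)) x₀ t₀ s y ∂gam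
          = rexp (-C * (t₀ - s ^ 2 / 2)) * ∫ y, reg ε (par v x₀ t₀ s y) ∂gam := fun s => by
        rw [← integral_const_mul]; rfl
      rw [e, e] at hm
      have iR : ∀ s ∈ Ioo 0 L, Integrable (fun y => reg ε (par v x₀ t₀ s y)) gam := fun s hs =>
        integrable_bdd (B := B + ε) ((continuous_reg ε).comp (cV s hs)) (fun y => by
          rw [abs_of_pos (reg_pos hε _)]; linarith [reg_le hε (par v x₀ t₀ s y), bV s hs y])
      have m1 : ∫ y, |par v x₀ t₀ a y| ∂gam ≤ ∫ y, reg ε (par v x₀ t₀ a y) ∂gam :=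
        integral_mono (iV a hsa) (iR a hsa) fun y => abs_le_reg _ _
      have m2 : ∫ y, reg ε (par v x₀ t₀ b y) ∂gam ≤ ∫ y, |par v x₀ t₀ b y| ∂gam + ε := by
        have : ∫ y, (|par v x₀ t₀ b y| + ε) ∂gam = ∫ y, |par v x₀ t₀ b y| ∂gam + ε := by
          rw [integral_add (iV b hsb) (integrable_const _)]; simp
        rw [← this]
        exact integral_mono (iR b hsb) ((iV b hsb).add (integrable_const _)) fun y => reg_le hε _
      have e2 : rexp (-C * (t₀ - b ^ 2 / 2)) = rexp (-C * (t₀ - a ^ 2 / 2)) * rexp (C * (b ^ 2 - a ^ 2) / 2) := by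
        rw [← Real.exp_add]; congr 1; ring
      rw [e2, mul_assoc] at hm
      have := le_of_mul_le_mul_left hm (exp_pos _)
      calc _ ≤ _ := m1
        _ ≤ _ := this
        _ ≤ _ := by gcongr
    · intro x t ht
      rw [abs_mul, abs_of_pos (exp_pos _), abs_of_pos (reg_pos hε _)]
      have : reg ε (v x t) ≤ B + ε := by linarith [reg_le hε (v x t), h.bd x t ht]
      have := (reg_pos hε (v x t)).le
      have : rexp (-C * t) ≤ rexp (-C * t₁) := Real.exp_le_exp.2 (by nlinarith [h.hC, ht.1])
      gcongr
  have hc : Tendsto (fun ε : ℝ => rexp (C * (b ^ 2 - a ^ 2) / 2) * (∫ y, |par v x₀ t₀ b y| ∂gam + ε))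
      (𝓝[>] 0) (𝓝 (rexp (C * (b ^ 2 - a ^ 2) / 2) * (∫ y, |par v x₀ t₀ b y| ∂gam + 0))) :=
    (by fun_prop : Continuous fun ε : ℝ => rexp (C * (b ^ 2 - a ^ 2) / 2) * (∫ y, |par v x₀ t₀ b y| ∂gam + ε)).continuousAt.tendsto.mono_left nhdsWithin_le_nhds
  rw [add_zero] at hc
  exact ge_of_tendsto hc (by filter_upwards [self_mem_nhdsWithin] with ε hε using key ε hε)

lemma avg_tendsto (h : Sol v vt vx vxx t₁ t₂ B C) (h0 : t₀ ∈ Ioo t₁ t₂) :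
    Tendsto (fun s => ∫ y, par v x₀ t₀ s y ∂gam) (𝓝[>] 0) (𝓝 (v x₀ t₀)) := by
  have hct : Tendsto (fun s : ℝ => t₀ - s ^ 2 / 2) (𝓝[>] 0) (𝓝 t₀) := by
    have : Continuous (fun s : ℝ => t₀ - s ^ 2 / 2) := by fun_prop
    have := this.continuousAt.tendsto (x := 0)
    simp only [ne_eq, OfNat.ofNat_ne_zero, not_false_eq_true, zero_pow, zero_div, sub_zero] at this
    exact this.mono_left nhdsWithin_le_nhds
  have hev : ∀ᶠ s in 𝓝[>] (0:ℝ), t₀ - s ^ 2 / 2 ∈ Ioo t₁ t₂ := hct.eventually (isOpen_Ioo.mem_nhds h0)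
  have := tendsto_integral_filter_of_dominated_convergence (μ := gam) (l := 𝓝[>] (0:ℝ))
    (F := fun s y => par v x₀ t₀ s y) (f := fun _ => v x₀ t₀) (fun _ => B) ?_ ?_ ?_ ?_
  · simpa using this
  · filter_upwards [hev] with s hs
    exact (continuous_par h.cont hs).aestronglyMeasurable
  · filter_upwards [hev] with s hs
    exact ae_of_all _ fun y => h.bd _ _ hs
  · exact integrable_const _
  · refine ae_of_all _ fun y => ?_
    have hc : ContinuousAt (fun p : ℝ × ℝ => v p.1 p.2) (x₀, t₀) :=
      h.cont.continuousAt ((isOpen_strip t₁ t₂).mem_nhds ⟨mem_univ _, h0⟩)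
    have hx : Tendsto (fun s : ℝ => x₀ + s * y) (𝓝[>] 0) (𝓝 x₀) := by
      have : Continuous (fun s : ℝ => x₀ + s * y) := by fun_prop
      have := this.continuousAt.tendsto (x := 0)
      simp only [zero_mul, add_zero] at this
      exact this.mono_left nhdsWithin_le_nhds
    exact hc.tendsto.comp (hx.prodMk_nhds hct)

/-- Comparison of a value of the solution with a Gaussian average at an earlier time. -/
theorem value_avg (h : Sol v vt vx vxx t₁ t₂ B C) (h0 : t₀ ∈ Ioo t₁ t₂) (hL : t₁ ≤ t₀ - L ^ 2 / 2)
    {ℓ : ℝ} (hℓ : ℓ ∈ Ioo 0 L) :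
    |v x₀ t₀ - ∫ y, par v x₀ t₀ ℓ y ∂gam| ≤
      C * ℓ ^ 2 / 2 * rexp (C * ℓ ^ 2 / 2) * ∫ y, |par v x₀ t₀ ℓ y| ∂gam := by
  have cV : ∀ s ∈ Ioo 0 L, Continuous (par v x₀ t₀ s) := fun s hs =>
    continuous_par h.cont (time_mem h0.2.le hL hs)
  have bV : ∀ s ∈ Ioo 0 L, ∀ y, |par v x₀ t₀ s y| ≤ B := fun s hs y => h.bd _ _ (time_mem h0.2.le hL hs)
  have hB : 0 ≤ B := (abs_nonneg _).trans (bV ℓ hℓ 0)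
  set A := ∫ y, |par v x₀ t₀ ℓ y| ∂gam with hA
  have hA0 : 0 ≤ A := integral_nonneg fun y => abs_nonneg _
  have hC := h.hC
  set K := C * rexp (C * ℓ ^ 2 / 2) * A with hK
  set c : ℝ → ℝ := fun s => ∫ y, par v x₀ t₀ s y ∂gam with hc
  set φ : ℝ → ℝ := fun s => ∫ y, (par vt x₀ t₀ s y - par vxx x₀ t₀ s y) ∂gam with hφ
  have hd : ∀ s ∈ Ioo 0 L, HasDerivAt c (-(s * φ s)) s := by
    intro s hs
    have := hasDerivAt_avg (x₀ := x₀) h.toC21 h0.2.le hL h.bd (G := C * B)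
      (fun x t ht => (h.eq x t ht).trans (by gcongr; exact h.bd x t ht)) 1 hs
    simpa [ou] using this
  have hφb : ∀ s, 0 < s → s ≤ ℓ → |φ s| ≤ K := by
    intro s hs hsl
    have hs0 : s ∈ Ioo 0 L := ⟨hs, by linarith [hℓ.2]⟩
    have hts := time_mem h0.2.le hL hs0
    calc |φ s| ≤ ∫ y, |par vt x₀ t₀ s y - par vxx x₀ t₀ s y| ∂gam := abs_integral_le_integral_abs
      _ ≤ ∫ y, C * |par v x₀ t₀ s y| ∂gam := by
        refine integral_mono_of_nonneg (ae_of_all _ fun y => abs_nonneg _)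
          ((integrable_bdd (cV s hs0) (bV s hs0)).abs.const_mul C) (ae_of_all _ fun y => h.eq _ _ hts)
      _ = C * ∫ y, |par v x₀ t₀ s y| ∂gam := integral_const_mul _ _
      _ ≤ C * (rexp (C * (ℓ ^ 2 - s ^ 2) / 2) * A) := by
        gcongr; exact kato h h0.2.le hL hs hsl hℓ.2
      _ ≤ C * (rexp (C * ℓ ^ 2 / 2) * A) := by
        gcongr; nlinarith [sq_nonneg s]
      _ = K := by rw [hK]; ring
  have hK0 : 0 ≤ K := by positivity
  have hdiff : ∀ s, 0 < s → s ≤ ℓ → |c s - c ℓ| ≤ K * ℓ ^ 2 / 2 := by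
    intro s hs hsl
    have hI : ∀ r ∈ Icc s ℓ, r ∈ Ioo 0 L := fun r hr => ⟨by linarith [hr.1], by linarith [hr.2, hℓ.2]⟩
    have dq : ∀ r, HasDerivAt (fun r : ℝ => K * (r ^ 2 / 2)) (K * r) r := fun r =>
      (((hasDerivAt_pow 2 r).div_const 2).const_mul K).congr_deriv (by norm_num)
    have m1 : MonotoneOn (fun r => K * (r ^ 2 / 2) + c r) (Icc s ℓ) := by
      have hd1 : ∀ r ∈ Icc s ℓ, HasDerivAt (fun r => K * (r ^ 2 / 2) + c r) (K * r + -(r * φ r)) r :=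
        fun r hr => (dq r).add (hd r (hI r hr))
      refine monotoneOn_of_hasDerivWithinAt_nonneg (convex_Icc s ℓ)
        (fun r hr => (hd1 r hr).continuousAt.continuousWithinAt)
        (fun r hr => (hd1 r (interior_subset hr)).hasDerivWithinAt) ?_
      intro r hr
      have hr' := interior_subset hr
      have := (abs_le.1 (hφb r (hI r hr').1 hr'.2)).2
      nlinarith [(hI r hr').1]
    have m2 : MonotoneOn (fun r => K * (r ^ 2 / 2) - c r) (Icc s ℓ) := by
      have hd1 : ∀ r ∈ Icc s ℓ, HasDerivAt (fun r => K * (r ^ 2 / 2) - c r) (K * r - -(r * φ r)) r :=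
        fun r hr => (dq r).sub (hd r (hI r hr))
      refine monotoneOn_of_hasDerivWithinAt_nonneg (convex_Icc s ℓ)
        (fun r hr => (hd1 r hr).continuousAt.continuousWithinAt)
        (fun r hr => (hd1 r (interior_subset hr)).hasDerivWithinAt) ?_
      intro r hr
      have hr' := interior_subset hr
      have := (abs_le.1 (hφb r (hI r hr').1 hr'.2)).1
      nlinarith [(hI r hr').1]
    have e1 := m1 ⟨le_rfl, hsl⟩ ⟨hsl, le_rfl⟩ hsl
    have e2 := m2 ⟨le_rfl, hsl⟩ ⟨hsl, le_rfl⟩ hsl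
    simp only at e1 e2
    have : 0 ≤ K * (s ^ 2 / 2) := by positivity
    rw [abs_le]; constructor <;> linarith
  have ht : Tendsto (fun s => |c s - c ℓ|) (𝓝[>] 0) (𝓝 |v x₀ t₀ - c ℓ|) :=
    ((avg_tendsto h h0).sub_const _).abs
  have := le_of_tendsto ht (b := K * ℓ ^ 2 / 2) (by
    filter_upwards [Ioc_mem_nhdsGT hℓ.1] with s hs using hdiff s hs.1 hs.2)
  refine this.trans (le_of_eq ?_)
  rw [hK]; ring

end ZN

/-! ### Dynamics of the modes: the weighted energy -/

namespace ZN
open MeasureTheory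

/-- Coefficients `c_j` of a perturbed linear system `ℓ c_j' = j c_j - ℓ² φ_j`, with energy
`H = ∑ c_j²` and forcing controlled by the energy. -/
structure Dyn (c φ : ℕ → ℝ → ℝ) (H : ℝ → ℝ) (L C : ℝ) : Prop where
  hC : 0 ≤ C
  d : ∀ j, ∀ ℓ ∈ Ioo 0 L, HasDerivAt (c j) (j / ℓ * c j ℓ - ℓ * φ j ℓ) ℓ
  p : ∀ ℓ ∈ Ioo 0 L, HasSum (fun j => c j ℓ ^ 2) (H ℓ)
  b : ∀ ℓ ∈ Ioo 0 L, ∀ S : Finset ℕ, ∑ j ∈ S, φ j ℓ ^ 2 ≤ C ^ 2 * H ℓ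
  cont : ContinuousOn H (Ioo 0 L)

variable {c φ : ℕ → ℝ → ℝ} {H : ℝ → ℝ} {L C : ℝ}

/-- The energy of the modes `0, …, n`. -/
def low (c : ℕ → ℝ → ℝ) (n : ℕ) (ℓ : ℝ) : ℝ := ∑ j ∈ Finset.range (n + 1), c j ℓ ^ 2

lemma Dyn.sum_le (h : Dyn c φ H L C) {ℓ : ℝ} (hℓ : ℓ ∈ Ioo 0 L) (S : Finset ℕ) :
    ∑ j ∈ S, c j ℓ ^ 2 ≤ H ℓ := sum_le_hasSum S (fun _ _ => sq_nonneg _) (h.p ℓ hℓ)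

lemma Dyn.H_nonneg (h : Dyn c φ H L C) {ℓ : ℝ} (hℓ : ℓ ∈ Ioo 0 L) : 0 ≤ H ℓ := by
  simpa using h.sum_le hℓ ∅

lemma Dyn.cross (h : Dyn c φ H L C) {ℓ : ℝ} (hℓ : ℓ ∈ Ioo 0 L) (S : Finset ℕ) :
    ∑ j ∈ S, |c j ℓ| * |φ j ℓ| ≤ C * H ℓ := by
  have h1 := Finset.sum_mul_sq_le_sq_mul_sq S (fun j => |c j ℓ|) (fun j => |φ j ℓ|)
  simp only [sq_abs] at h1
  have hH := h.H_nonneg hℓ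
  refine abs_le_of_sq_le_sq' ?_ (mul_nonneg h.hC hH) |>.2
  calc _ ≤ _ := h1
    _ ≤ H ℓ * (C ^ 2 * H ℓ) := by
      refine mul_le_mul (h.sum_le hℓ S) (h.b ℓ hℓ S) (Finset.sum_nonneg fun _ _ => sq_nonneg _) hH
    _ = _ := by ring

/-- The weights `-M` on the modes `≤ n`, `1` on the others. -/
def wt (n : ℕ) (M : ℝ) (j : ℕ) : ℝ := if j < n + 1 then -M else 1

lemma Dyn.hasSum_wt (h : Dyn c φ H L C) {ℓ : ℝ} (hℓ : ℓ ∈ Ioo 0 L) (n : ℕ) (M : ℝ) :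
    HasSum (fun j => wt n M j * c j ℓ ^ 2) (H ℓ - (1 + M) * low c n ℓ) := by
  have h1 : HasSum (fun j => if j < n + 1 then (1 + M) * c j ℓ ^ 2 else 0)
      (∑ j ∈ Finset.range (n + 1), (if j < n + 1 then (1 + M) * c j ℓ ^ 2 else 0)) :=
    hasSum_sum_of_ne_finset_zero (fun j hj => if_neg (by simpa using hj))
  have h2 := (h.p ℓ hℓ).sub h1
  have e : ∑ j ∈ Finset.range (n + 1), (if j < n + 1 then (1 + M) * c j ℓ ^ 2 else 0)
      = (1 + M) * low c n ℓ := by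
    rw [low, Finset.mul_sum]
    exact Finset.sum_congr rfl fun j hj => if_pos (Finset.mem_range.1 hj)
  rw [e] at h2
  refine h2.congr_fun ?_
  intro j
  unfold wt
  split_ifs <;> ring

/-- Growth of the weighted energy `(H - (1 + M) low_n) / ℓ ^ (2 n + 1)`. It puts weight `-M` on the
modes `≤ n`, which grow more slowly than `ℓ ^ (n + 1/2)`, and weight `1` on the modes `> n`, which
grow faster; at small scales the forcing does not spoil this. -/
lemma Dyn.growth (h : Dyn c φ H L C) (n : ℕ) {M a b : ℝ} (hM : 0 < M) (ha : 0 < a) (hab : a ≤ b)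
    (hb : b < L) (hsm : 4 * b ^ 2 * (C * (1 + M)) ≤ min 1 M) :
    min 1 M / 2 * ∫ s in a..b, H s / s ^ (2 * n + 2) ≤
      (H b - (1 + M) * low c n b) / b ^ (2 * n + 1) - (H a - (1 + M) * low c n a) / a ^ (2 * n + 1) := by
  set μ := min 1 M with hμ
  have hμ0 : 0 < μ := lt_min one_pos hM
  have hI : ∀ s ∈ Icc a b, s ∈ Ioo 0 L := fun s hs => ⟨by linarith [hs.1], by linarith [hs.2]⟩
  have hC := h.hC
  set D : ℕ → ℝ → ℝ := fun N s => ∑ j ∈ Finset.range N, wt n M j * c j s ^ 2 with hD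
  set ψ : ℕ → ℝ → ℝ := fun N s =>
    (μ * ∑ j ∈ Finset.range N, c j s ^ 2 - 2 * s ^ 2 * ((1 + M) * (C * H s))) / s ^ (2 * n + 2) with hψ
  have cc : ∀ j, ContinuousOn (c j) (Icc a b) := fun j s hs => (h.d j s (hI s hs)).continuousAt.continuousWithinAt
  have cH : ContinuousOn H (Icc a b) := h.cont.mono hI
  have cψ : ∀ N, ContinuousOn (ψ N) (Icc a b) := by
    intro N
    refine ContinuousOn.div ?_ (by fun_prop) (fun s hs => pow_ne_zero _ (hI s hs).1.ne')
    have : ContinuousOn (fun s => ∑ j ∈ Finset.range N, c j s ^ 2) (Icc a b) :=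
      continuousOn_finsetSum _ fun j _ => (cc j).pow 2
    fun_prop
  have step : ∀ N, ∫ s in a..b, ψ N s ≤ D N b / b ^ (2 * n + 1) - D N a / a ^ (2 * n + 1) := by
    intro N
    have hder : ∀ s ∈ Icc a b, HasDerivAt (fun s => D N s / s ^ (2 * n + 1))
        ((∑ j ∈ Finset.range N, wt n M j * ((2 * j - (2 * n + 1)) * c j s ^ 2 - 2 * s ^ 2 * (c j s * φ j s)))
          / s ^ (2 * n + 2)) s := by
      intro s hs
      have hs0 : s ≠ 0 := (hI s hs).1.ne'
      have d1 : HasDerivAt (D N) (∑ j ∈ Finset.range N, wt n M j *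
          (2 * c j s * (j / s * c j s - s * φ j s))) s := by
        refine HasDerivAt.fun_sum fun j _ => ?_
        exact (((h.d j s (hI s hs)).pow 2).const_mul _).congr_deriv (by norm_num)
      have d2 := hasDerivAt_pow (2 * n + 1) s
      refine (d1.div d2 (pow_ne_zero _ hs0)).congr_deriv ?_
      have e1 : ∑ j ∈ Finset.range N, wt n M j * ((2 * j - (2 * n + 1)) * c j s ^ 2 - 2 * s ^ 2 * (c j s * φ j s))
        = s * (∑ j ∈ Finset.range N, wt n M j * (2 * c j s * (j / s * c j s - s * φ j s)))
          - (2 * n + 1) * D N s := by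
        rw [hD, Finset.mul_sum, Finset.mul_sum, ← Finset.sum_sub_distrib]
        refine Finset.sum_congr rfl fun j _ => ?_
        field_simp
        ring
      rw [e1]
      simp only [Nat.add_sub_cancel]
      push_cast
      generalize ∑ j ∈ Finset.range N, wt n M j * (2 * c j s * (j / s * c j s - s * φ j s)) = S
      generalize D N s = T
      field_simp
      ring
    refine intervalIntegral.integral_le_sub_of_hasDeriv_right_of_le (g := fun s => D N s / s ^ (2 * n + 1)) hab
      (fun s hs => (hder s hs).continuousAt.continuousWithinAt)
      (fun s hs => (hder s (Ioo_subset_Icc_self hs)).hasDerivWithinAt)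
      (cψ N).integrableOn_Icc ?_
    intro s hs
    have hs' := hI s (Ioo_subset_Icc_self hs)
    simp only [hψ]
    have hsp : 0 < s := hs'.1
    gcongr
    have cr := h.cross hs' (Finset.range N)
    have e : μ * ∑ j ∈ Finset.range N, c j s ^ 2 - 2 * s ^ 2 * ((1 + M) * ∑ j ∈ Finset.range N, |c j s| * |φ j s|)
      = ∑ j ∈ Finset.range N, (μ * c j s ^ 2 - 2 * s ^ 2 * ((1 + M) * (|c j s| * |φ j s|))) := by
      rw [Finset.sum_sub_distrib, Finset.mul_sum, Finset.mul_sum, Finset.mul_sum]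
    calc _ ≤ μ * ∑ j ∈ Finset.range N, c j s ^ 2 - 2 * s ^ 2 * ((1 + M) * ∑ j ∈ Finset.range N, |c j s| * |φ j s|) := by
          gcongr
      _ = _ := e
      _ ≤ _ := by
          refine Finset.sum_le_sum fun j _ => ?_
          have w1 : μ * c j s ^ 2 ≤ wt n M j * ((2 * j - (2 * n + 1)) * c j s ^ 2) := by
            rw [← mul_assoc]
            refine mul_le_mul_of_nonneg_right ?_ (sq_nonneg _)
            unfold wt
            split_ifs with hj
            · have : (j : ℝ) ≤ n := by exact_mod_cast (by omega : j ≤ n)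
              have := min_le_right 1 M
              nlinarith
            · have : (n : ℝ) + 1 ≤ j := by exact_mod_cast (by omega : n + 1 ≤ j)
              have := min_le_left 1 M
              nlinarith
          have w2 : wt n M j * (c j s * φ j s) ≤ (1 + M) * (|c j s| * |φ j s|) := by
            refine (le_abs_self _).trans ?_
            rw [abs_mul, abs_mul]
            refine mul_le_mul_of_nonneg_right ?_ (by positivity)
            unfold wt
            split_ifs
            · rw [abs_neg, abs_of_pos hM]; linarith
            · rw [abs_one]; linarith
          have : wt n M j * (2 * s ^ 2 * (c j s * φ j s)) ≤ 2 * s ^ 2 * ((1 + M) * (|c j s| * |φ j s|)) := by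
            calc _ = 2 * s ^ 2 * (wt n M j * (c j s * φ j s)) := by ring
              _ ≤ _ := by gcongr
          linarith
  have hTr : ∀ s ∈ Ioo 0 L, Tendsto (fun N => D N s / s ^ (2 * n + 1)) atTop
      (𝓝 ((H s - (1 + M) * low c n s) / s ^ (2 * n + 1))) := fun s hs =>
    (h.hasSum_wt hs n M).tendsto_sum_nat.div_const _
  have hTl : Tendsto (fun N => ∫ s in a..b, ψ N s) atTop
      (𝓝 (∫ s in a..b, (μ * H s - 2 * s ^ 2 * ((1 + M) * (C * H s))) / s ^ (2 * n + 2))) := by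
    refine intervalIntegral.tendsto_integral_filter_of_dominated_convergence
      (fun s => (μ * H s + 2 * s ^ 2 * ((1 + M) * (C * H s))) / s ^ (2 * n + 2)) ?_ ?_ ?_ ?_
    · refine Eventually.of_forall fun N => ?_
      rw [uIoc_of_le hab]
      exact ((cψ N).mono Ioc_subset_Icc_self).aestronglyMeasurable measurableSet_Ioc
    · refine Eventually.of_forall fun N => ae_of_all _ fun s hs => ?_
      rw [uIoc_of_le hab] at hs
      have hs' := hI s (Ioc_subset_Icc_self hs)
      have hsp : 0 < s := hs'.1
      have hH := h.H_nonneg hs'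
      have hS := h.sum_le hs' (Finset.range N)
      have hS0 : 0 ≤ ∑ j ∈ Finset.range N, c j s ^ 2 := Finset.sum_nonneg fun _ _ => sq_nonneg _
      have k : 0 ≤ 2 * s ^ 2 * ((1 + M) * (C * H s)) := by positivity
      rw [hψ, Real.norm_eq_abs, abs_div, abs_of_pos (by positivity : 0 < s ^ (2 * n + 2))]
      gcongr
      rw [abs_le]
      have k2 : μ * ∑ j ∈ Finset.range N, c j s ^ 2 ≤ μ * H s := by gcongr
      have k3 : 0 ≤ μ * ∑ j ∈ Finset.range N, c j s ^ 2 := by positivity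
      constructor <;> linarith
    · refine ContinuousOn.intervalIntegrable ?_
      rw [uIcc_of_le hab]
      exact ContinuousOn.div (by fun_prop) (by fun_prop) (fun s hs => pow_ne_zero _ (hI s hs).1.ne')
    · refine ae_of_all _ fun s hs => ?_
      rw [uIoc_of_le hab] at hs
      have hs' := hI s (Ioc_subset_Icc_self hs)
      exact (((h.p s hs').tendsto_sum_nat.const_mul μ).sub_const _).div_const _
  have hlim := le_of_tendsto_of_tendsto' hTl
    ((hTr b (hI b ⟨hab, le_rfl⟩)).sub (hTr a (hI a ⟨le_rfl, hab⟩))) step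
  refine le_trans ?_ hlim
  rw [← intervalIntegral.integral_const_mul]
  refine intervalIntegral.integral_mono_on hab ?_ ?_ ?_
  · refine ContinuousOn.intervalIntegrable ?_
    rw [uIcc_of_le hab]
    exact (ContinuousOn.div (by fun_prop) (by fun_prop) (fun s hs => pow_ne_zero _ (hI s hs).1.ne')).const_mul _
  · refine ContinuousOn.intervalIntegrable ?_
    rw [uIcc_of_le hab]
    exact ContinuousOn.div (by fun_prop) (by fun_prop) (fun s hs => pow_ne_zero _ (hI s hs).1.ne')
  · intro s hs
    have hs' := hI s hs
    have hsp : 0 < s := hs'.1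
    have hH := h.H_nonneg hs'
    rw [← mul_div_assoc]
    gcongr
    have hs2 : s ^ 2 ≤ b ^ 2 := by have := hs.2; gcongr
    have k1 : 4 * s ^ 2 * (C * (1 + M)) ≤ μ := le_trans (by gcongr) hsm
    have := mul_le_mul_of_nonneg_right k1 hH
    nlinarith

end ZN

/-! ### Dynamics of the modes: the dominant mode -/

namespace ZN
open MeasureTheory
variable {c φ : ℕ → ℝ → ℝ} {H : ℝ → ℝ} {L C : ℝ}

/-- If the modes `≤ n` carry a definite share of the energy at one small scale `b`, then below `b`
the energy decays no faster than `ℓ ^ (2 n + 1)`. -/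
lemma Dyn.persist (h : Dyn c φ H L C) (n : ℕ) {M b : ℝ} (hM : 0 < M) (hb : b ∈ Ioo 0 L)
    (hsm : 4 * b ^ 2 * (C * (1 + M)) ≤ min 1 M) (hlt : H b < (1 + M) * low c n b) :
    ∃ κ > 0, ∀ ℓ ∈ Ioc 0 b, κ * ℓ ^ (2 * n + 1) ≤ H ℓ := by
  have hb0 : 0 < b := hb.1
  set e := -((H b - (1 + M) * low c n b) / b ^ (2 * n + 1)) with he
  have he0 : 0 < e := by
    rw [he, neg_pos]
    exact div_neg_of_neg_of_pos (by linarith) (by positivity)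
  refine ⟨e / (1 + M), by positivity, fun ℓ hℓ => ?_⟩
  have hl0 : 0 < ℓ := hℓ.1
  have hm : ℓ ∈ Ioo 0 L := ⟨hℓ.1, hℓ.2.trans_lt hb.2⟩
  have hg := h.growth n hM hℓ.1 hℓ.2 hb.2 hsm
  have hpos : 0 ≤ ∫ s in ℓ..b, H s / s ^ (2 * n + 2) := by
    refine intervalIntegral.integral_nonneg hℓ.2 fun s hs => ?_
    have hs' : s ∈ Ioo 0 L := ⟨hl0.trans_le hs.1, hs.2.trans_lt hb.2⟩
    have := h.H_nonneg hs'
    have := hs'.1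
    positivity
  have hμ : 0 < min 1 M := lt_min one_pos hM
  have h1 : (H ℓ - (1 + M) * low c n ℓ) / ℓ ^ (2 * n + 1) ≤ -e := by
    have : 0 ≤ min 1 M / 2 * ∫ s in ℓ..b, H s / s ^ (2 * n + 2) := by positivity
    linarith
  rw [div_le_iff₀ (by positivity)] at h1
  have h2 := h.sum_le hm (Finset.range (n + 1))
  have h3 : low c n ℓ ≤ H ℓ := h2
  have h4 := h.H_nonneg hm
  rw [div_mul_eq_mul_div, div_le_iff₀ (by linarith)]
  nlinarith

/-- A lower bound `κ ℓ ^ (2 n + 1)` for the energy makes the higher modes negligible: the integral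
in `Dyn.growth` then diverges logarithmically as `a → 0`, which makes the weighted energy at `a`
negative. -/
lemma Dyn.absorb (h : Dyn c φ H L C) (n : ℕ) {κ b₀ : ℝ} (hκ : 0 < κ) (hb₀ : b₀ ∈ Ioo 0 L)
    (hlow : ∀ ℓ ∈ Ioc 0 b₀, κ * ℓ ^ (2 * n + 1) ≤ H ℓ) {M : ℝ} (hM : 0 < M) :
    ∀ᶠ ℓ in 𝓝[>] (0 : ℝ), H ℓ < (1 + M) * low c n ℓ := by
  have hμ : 0 < min 1 M := lt_min one_pos hM
  have hsmall : ∀ᶠ b in 𝓝[>] (0 : ℝ), 4 * b ^ 2 * (C * (1 + M)) < min 1 M := by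
    have : Tendsto (fun b : ℝ => 4 * b ^ 2 * (C * (1 + M))) (𝓝 0) (𝓝 (4 * 0 ^ 2 * (C * (1 + M)))) :=
      Continuous.tendsto (by fun_prop) 0
    simp only [ne_eq, OfNat.ofNat_ne_zero, not_false_eq_true, zero_pow, mul_zero, zero_mul] at this
    exact nhdsWithin_le_nhds (this.eventually (gt_mem_nhds hμ))
  obtain ⟨b, hbs, hb⟩ := (hsmall.and (Ioo_mem_nhdsGT hb₀.1)).exists
  have hb0 : 0 < b := hb.1
  have hbL : b < L := hb.2.trans hb₀.2
  set E := (H b - (1 + M) * low c n b) / b ^ (2 * n + 1)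
  have hlog : Tendsto (fun a : ℝ => E - min 1 M / 2 * (κ * (Real.log b - Real.log a))) (𝓝[>] 0) atBot := by
    have h1 : Tendsto (fun a : ℝ => Real.log b - Real.log a) (𝓝[>] 0) atTop :=
      tendsto_atTop_add_const_left _ _ (tendsto_neg_atBot_atTop.comp Real.tendsto_log_nhdsGT_zero)
    have h2 := (h1.const_mul_atTop hκ).const_mul_atTop (by positivity : 0 < min 1 M / 2)
    exact tendsto_atBot_add_const_left _ _ (tendsto_neg_atTop_atBot.comp h2)
  filter_upwards [hlog.eventually (eventually_lt_atBot 0), Ioo_mem_nhdsGT hb0] with a ha1 ha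
  have ha0 : 0 < a := ha.1
  have hg := h.growth n hM ha.1 ha.2.le hbL hbs.le
  have hInt : κ * (Real.log b - Real.log a) ≤ ∫ s in a..b, H s / s ^ (2 * n + 2) := by
    rw [← Real.log_div hb0.ne' ha0.ne', ← integral_inv_of_pos ha0 hb0,
      ← intervalIntegral.integral_const_mul]
    have hne : ∀ s ∈ Icc a b, s ≠ 0 := fun s hs => (ha0.trans_le hs.1).ne'
    have cH : ContinuousOn H (Icc a b) :=
      h.cont.mono fun s hs => ⟨ha0.trans_le hs.1, hs.2.trans_lt hbL⟩
    refine intervalIntegral.integral_mono_on ha.2.le ?_ ?_ ?_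
    · refine ContinuousOn.intervalIntegrable ?_
      rw [uIcc_of_le ha.2.le]
      exact continuousOn_const.mul (continuousOn_id.inv₀ hne)
    · refine ContinuousOn.intervalIntegrable ?_
      rw [uIcc_of_le ha.2.le]
      exact cH.div (by fun_prop) (fun s hs => pow_ne_zero _ (hne s hs))
    · intro s hs
      have hs0 : 0 < s := ha0.trans_le hs.1
      have := hlow s ⟨hs0, hs.2.trans hb.2.le⟩
      rw [le_div_iff₀ (by positivity)]
      calc _ = κ * s ^ (2 * n + 1) := by field_simp; ring
        _ ≤ _ := this
  have : (H a - (1 + M) * low c n a) / a ^ (2 * n + 1) < 0 := by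
    have : min 1 M / 2 * (κ * (Real.log b - Real.log a))
      ≤ min 1 M / 2 * ∫ s in a..b, H s / s ^ (2 * n + 2) := by gcongr
    linarith
  rw [div_neg_iff] at this
  rcases this with h | h
  · exact absurd h.2 (by have : 0 < a ^ (2 * n + 1) := by positivity
                         linarith)
  · linarith [h.1]

/-- One mode asymptotically carries all of the energy. Its index is the least `n` such that the modes
`≤ n` hold more than half of the energy at some scale in `(0, b]`. -/
lemma Dyn.dominant (h : Dyn c φ H L C) {b : ℝ} (hb : b ∈ Ioo 0 L) (hsm : 8 * C * b ^ 2 ≤ 1)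
    (hH : 0 < H b) :
    ∃ n : ℕ, (∀ ε > 0, ∀ᶠ ℓ in 𝓝[>] (0 : ℝ), H ℓ - c n ℓ ^ 2 ≤ ε * H ℓ) ∧
      ∃ κ > 0, ∀ᶠ ℓ in 𝓝[>] (0 : ℝ), κ * ℓ ^ (2 * n + 1) ≤ H ℓ := by
  have hL : 0 < L := hb.1.trans hb.2
  let Good : ℕ → Prop := fun n => ∃ ℓ ∈ Ioc 0 b, H ℓ < 2 * low c n ℓ
  have ex : ∃ n, Good n := by
    have ht : Tendsto (fun n => 2 * low c n b) atTop (𝓝 (2 * H b)) :=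
      ((tendsto_add_atTop_iff_nat 1).2 (h.p b hb).tendsto_sum_nat).const_mul 2
    obtain ⟨n, hn⟩ := (ht.eventually (lt_mem_nhds (by linarith : H b < 2 * H b))).exists
    exact ⟨n, b, ⟨hb.1, le_rfl⟩, hn⟩
  classical
  obtain ⟨n, ⟨ℓ₀, hℓ₀, hlt⟩, hmin⟩ : ∃ n, Good n ∧ ∀ m < n, ¬ Good m :=
    ⟨Nat.find ex, Nat.find_spec ex, fun m hm => Nat.find_min ex hm⟩
  have hm₀ : ℓ₀ ∈ Ioo 0 L := ⟨hℓ₀.1, hℓ₀.2.trans_lt hb.2⟩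
  have hC := h.hC
  have hs0 : 4 * ℓ₀ ^ 2 * (C * (1 + 1)) ≤ min 1 1 := by
    have : ℓ₀ ^ 2 ≤ b ^ 2 := by
      have := hℓ₀.1.le
      have := hℓ₀.2
      gcongr
    rw [min_self]
    nlinarith
  obtain ⟨κ, hκ, hlow⟩ := h.persist n one_pos hm₀ hs0 (by linarith)
  have hev : ∀ᶠ ℓ in 𝓝[>] (0 : ℝ), ℓ ∈ Ioo 0 L := Ioo_mem_nhdsGT hL
  refine ⟨n, fun ε hε => ?_, κ, hκ, ?_⟩
  · have hA : ∀ᶠ ℓ in 𝓝[>] (0 : ℝ), H ℓ - low c n ℓ ≤ ε / 2 * H ℓ := by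
      filter_upwards [h.absorb n hκ hm₀ hlow (half_pos hε), hev] with ℓ h1 h2
      have : low c n ℓ ≤ H ℓ := h.sum_le h2 _
      nlinarith
    have hB : ∀ᶠ ℓ in 𝓝[>] (0 : ℝ), low c n ℓ - c n ℓ ^ 2 ≤ ε / 2 * H ℓ := by
      rcases n with _ | m
      · filter_upwards [hev] with ℓ h2
        have := h.H_nonneg h2
        simp only [low, zero_add, Finset.range_one, Finset.sum_singleton, sub_self]
        positivity
      · have key : ∀ᶠ ℓ in 𝓝[>] (0 : ℝ), (1 + 2 / ε) * low c m ℓ ≤ H ℓ := by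
          by_contra hcon
          have hM : 0 < 2 / ε := by positivity
          have hμ : 0 < min 1 (2 / ε) := lt_min one_pos hM
          have hsmall : ∀ᶠ b in 𝓝[>] (0 : ℝ), 4 * b ^ 2 * (C * (1 + 2 / ε)) < min 1 (2 / ε) := by
            have : Tendsto (fun b : ℝ => 4 * b ^ 2 * (C * (1 + 2 / ε))) (𝓝 0)
              (𝓝 (4 * 0 ^ 2 * (C * (1 + 2 / ε)))) := Continuous.tendsto (by fun_prop) 0
            simp only [ne_eq, OfNat.ofNat_ne_zero, not_false_eq_true, zero_pow, mul_zero, zero_mul] at this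
            exact nhdsWithin_le_nhds (this.eventually (gt_mem_nhds hμ))
          obtain ⟨ℓ, hl1, hl2, hl3⟩ := (not_eventually.1 hcon).and_eventually (hsmall.and hev) |>.exists
          obtain ⟨κ', hκ', hlow'⟩ := h.persist m hM hl3 hl2.le (not_le.1 hl1)
          obtain ⟨r, hr1, hr2⟩ := ((h.absorb m hκ' hl3 hlow' one_pos).and (Ioo_mem_nhdsGT hb.1)).exists
          exact hmin m (by omega) ⟨r, ⟨hr2.1, hr2.2.le⟩, by linarith⟩
        filter_upwards [key, hev] with ℓ h1 h2
        have e : low c (m + 1) ℓ = low c m ℓ + c (m + 1) ℓ ^ 2 := by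
          simp [low, Finset.sum_range_succ]
        have h0 : 0 ≤ low c m ℓ := Finset.sum_nonneg fun _ _ => sq_nonneg _
        have h3 : 2 / ε * low c m ℓ ≤ H ℓ := by nlinarith
        rw [e]
        calc _ = ε / 2 * (2 / ε * low c m ℓ) := by field_simp; ring
          _ ≤ _ := by gcongr
    filter_upwards [hA, hB] with ℓ h1 h2
    linarith
  · filter_upwards [Ioc_mem_nhdsGT hℓ₀.1] with ℓ hℓ using hlow ℓ hℓ

end ZN

/-! ### The dominant Hermite mode of a solution -/

namespace ZN
open MeasureTheory ProbabilityTheory Polynomial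
variable {v vt vx vxx : ℝ → ℝ → ℝ} {t₁ t₂ B C x₀ t₀ L : ℝ}

/-- Hermite coefficient of the rescaled profile `par v x₀ t₀ ℓ`. -/
def coef (v : ℝ → ℝ → ℝ) (x₀ t₀ : ℝ) (j : ℕ) (ℓ : ℝ) : ℝ := ∫ y, (he j).eval y * par v x₀ t₀ ℓ y ∂gam

/-- Gaussian `L²` energy of the rescaled profile `par v x₀ t₀ ℓ`. -/
def energy (v : ℝ → ℝ → ℝ) (x₀ t₀ ℓ : ℝ) : ℝ := ∫ y, par v x₀ t₀ ℓ y ^ 2 ∂gam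

lemma memLp_bdd {w : ℝ → ℝ} (hw : Continuous w) (hB : ∀ y, |w y| ≤ B) : MemLp w 2 gam :=
  MemLp.of_bound hw.aestronglyMeasurable B (ae_of_all _ hB)

/-- The Hermite coefficients of the rescaled profiles form a system of type `Dyn`. -/
lemma Sol.dyn (h : Sol v vt vx vxx t₁ t₂ B C) (h0 : t₀ ≤ t₂) (hL : t₁ ≤ t₀ - L ^ 2 / 2) :
    Dyn (coef v x₀ t₀) (coef (fun x t => vt x t - vxx x t) x₀ t₀) (energy v x₀ t₀) L C := by
  have hG : ∀ x, ∀ t ∈ Ioo t₁ t₂, |vt x t - vxx x t| ≤ C * B := fun x t ht =>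
    (h.eq x t ht).trans (mul_le_mul_of_nonneg_left (h.bd x t ht) h.hC)
  have cV : ∀ s ∈ Ioo 0 L, Continuous (par v x₀ t₀ s) := fun s hs =>
    continuous_par h.cont (time_mem h0 hL hs)
  have cF : ∀ s ∈ Ioo 0 L, Continuous (par (fun x t => vt x t - vxx x t) x₀ t₀ s) := fun s hs =>
    continuous_par (h.ct.sub h.cxx) (time_mem h0 hL hs)
  have bV : ∀ s ∈ Ioo 0 L, ∀ y, |par v x₀ t₀ s y| ≤ B := fun s hs y => h.bd _ _ (time_mem h0 hL hs)
  have bF : ∀ s ∈ Ioo 0 L, ∀ y, |par (fun x t => vt x t - vxx x t) x₀ t₀ s y| ≤ C * B :=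
    fun s hs y => hG _ _ (time_mem h0 hL hs)
  refine ⟨h.hC, fun j ℓ hℓ => ?_, fun ℓ hℓ => ?_, fun ℓ hℓ S => ?_, ?_⟩
  · refine (hasDerivAt_avg h.toC21 h0 hL h.bd hG (he j) hℓ).congr_deriv ?_
    have e1 : ∫ y, (ou (he j)).eval y * par v x₀ t₀ ℓ y ∂gam = - (j : ℝ) * coef v x₀ t₀ j ℓ := by
      rw [coef, ← integral_const_mul]
      congr 1; ext y
      rw [ou, he_ode]; ring
    rw [e1]
    simp only [coef, par]
    ring
  · have := parseval (memLp_bdd (cV ℓ hℓ) (bV ℓ hℓ))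
    simp_rw [mul_comm (par v x₀ t₀ ℓ _)] at this
    exact this
  · have := bessel (memLp_bdd (cF ℓ hℓ) (bF ℓ hℓ)) S
    simp_rw [mul_comm (par _ x₀ t₀ ℓ _)] at this
    refine this.trans ?_
    rw [energy, ← integral_const_mul]
    refine integral_mono (memLp_bdd (cF ℓ hℓ) (bF ℓ hℓ)).integrable_sq
      ((memLp_bdd (cV ℓ hℓ) (bV ℓ hℓ)).integrable_sq.const_mul _) fun y => ?_
    simp only
    rw [← mul_pow]
    refine sq_le_sq.2 ?_
    rw [abs_mul, abs_of_nonneg h.hC]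
    exact h.eq _ _ (time_mem h0 hL hℓ)
  · intro ℓ hℓ
    refine ContinuousAt.continuousWithinAt ?_
    have hn : Ioo 0 L ∈ 𝓝 ℓ := isOpen_Ioo.mem_nhds hℓ
    refine continuousAt_of_dominated (bound := fun _ => B ^ 2) ?_ ?_ (integrable_const _) ?_
    · filter_upwards [hn] with s hs
      exact ((cV s hs).pow 2).aestronglyMeasurable
    · filter_upwards [hn] with s hs
      refine ae_of_all _ fun y => ?_
      rw [norm_pow]
      exact pow_le_pow_left₀ (norm_nonneg _) (bV s hs y) 2
    · refine ae_of_all _ fun y => ?_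
      have h2 := (continuousOn_par₂ (x₀ := x₀) h0 hL h.cont).continuousAt
        (x := (ℓ, y)) ((isOpen_Ioo.prod isOpen_univ).mem_nhds ⟨hℓ, mem_univ _⟩)
      exact (ContinuousAt.comp (x := ℓ) (f := fun s : ℝ => (s, y)) h2 (by fun_prop)).pow 2

lemma gam_open_pos {U : Set ℝ} (hU : IsOpen U) (hne : U.Nonempty) : 0 < gam U := by
  rw [pos_iff_ne_zero]
  intro h0
  exact hU.measure_ne_zero volume hne (gaussianReal_absolutelyContinuous' 0 one_ne_zero h0)

lemma energy_pos (h : Sol v vt vx vxx t₁ t₂ B C) {r : ℝ} (hr : 0 < r) (ht : t₀ - r ^ 2 / 2 ∈ Ioo t₁ t₂)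
    (hx : ∃ x, v x (t₀ - r ^ 2 / 2) ≠ 0) : 0 < energy v x₀ t₀ r := by
  obtain ⟨x, hx⟩ := hx
  have cV : Continuous (par v x₀ t₀ r) := continuous_par h.cont ht
  refine (integral_pos_iff_support_of_nonneg (fun y => sq_nonneg _)
    (memLp_bdd cV fun y => h.bd _ _ ht).integrable_sq).2 ?_
  refine gam_open_pos (cV.pow 2).isOpen_support ⟨(x - x₀) / r, ?_⟩
  have : x₀ + r * ((x - x₀) / r) = x := by field_simp; ring
  simpa [par, this] using hx

/-- A profile that is `L²`-close to a multiple of a polynomial takes the sign of that multiple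
(times that of the polynomial) near any prescribed point where the polynomial does not vanish. -/
lemma near_sign (q : ℝ[X]) {a ρ : ℝ} (hq : q.eval a ≠ 0) (hρ : 0 < ρ) :
    ∃ ε > 0, ∀ (u : ℝ → ℝ) (c : ℝ), MemLp u 2 gam → c ≠ 0 →
      ∫ y, (u y - c * q.eval y) ^ 2 ∂gam < ε * c ^ 2 →
      ∃ y ∈ Ioo (a - ρ) (a + ρ), 0 < c * q.eval a * u y := by
  set U : Set ℝ := Ioo (a - ρ) (a + ρ) ∩ {y | q.eval a ^ 2 / 2 < q.eval y * q.eval a} with hU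
  have hUo : IsOpen U := isOpen_Ioo.inter (isOpen_lt continuous_const (by fun_prop))
  have hqa : 0 < q.eval a ^ 2 := by positivity
  have hUp := gam_open_pos hUo ⟨a, ⟨by linarith, by linarith⟩, by
    show q.eval a ^ 2 / 2 < q.eval a * q.eval a
    nlinarith⟩
  have hμ : 0 < gam.real U := ENNReal.toReal_pos hUp.ne' (measure_ne_top _ _)
  refine ⟨q.eval a ^ 2 / 4 * gam.real U, by positivity, fun u c hu hc hlt => ?_⟩
  by_contra! hcon
  refine absurd hlt (not_lt.2 ?_)
  have hInt : Integrable (fun y => (u y - c * q.eval y) ^ 2) gam :=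
    (hu.sub ((memLp_poly q).const_mul c)).integrable_sq
  calc q.eval a ^ 2 / 4 * gam.real U * c ^ 2 = ∫ y in U, q.eval a ^ 2 / 4 * c ^ 2 ∂gam := by
        rw [setIntegral_const, smul_eq_mul]; ring
    _ ≤ ∫ y in U, (u y - c * q.eval y) ^ 2 ∂gam := by
        refine setIntegral_mono_on (integrable_const _).integrableOn hInt.integrableOn
          hUo.measurableSet fun y hy => ?_
        have h1 := hcon y hy.1
        have h2 : q.eval a ^ 2 / 2 < q.eval y * q.eval a := hy.2
        -- `c q(y) u(y) ≤ 0` since `q y` and `q a` have the same sign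
        have h3 : c * q.eval y * u y ≤ 0 := by
          by_contra! h4
          nlinarith [mul_pos h4 (by linarith : 0 < q.eval y * q.eval a), mul_nonneg (sq_nonneg (q.eval y)) (neg_nonneg.2 h1)]
        have h5 : q.eval a ^ 2 / 4 ≤ q.eval y ^ 2 := by
          have := sq_nonneg (q.eval y - q.eval a / 2)
          nlinarith
        have h6 := mul_le_mul_of_nonneg_right h5 (sq_nonneg c)
        nlinarith [sq_nonneg (u y)]
    _ ≤ _ := setIntegral_le_integral hInt (ae_of_all _ fun y => sq_nonneg _)

lemma integral_resid {u : ℝ → ℝ} (hu : MemLp u 2 gam) (n : ℕ) :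
    ∫ y, (u y - (∫ z, (he n).eval z * u z ∂gam) * (he n).eval y) ^ 2 ∂gam
      = ∫ y, u y ^ 2 ∂gam - (∫ z, (he n).eval z * u z ∂gam) ^ 2 := by
  set c := ∫ z, (he n).eval z * u z ∂gam with hc
  have i1 : Integrable (fun y => (he n).eval y * u y) gam := (memLp_poly (he n)).integrable_mul hu
  have i2 : Integrable (fun y => (he n).eval y * (he n).eval y) gam :=
    (memLp_poly (he n)).integrable_mul (memLp_poly (he n))
  have e : ∀ y, (u y - c * (he n).eval y) ^ 2
      = u y ^ 2 - 2 * c * ((he n).eval y * u y) + c ^ 2 * ((he n).eval y * (he n).eval y) := by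
    intro y; ring
  have i3 : Integrable (fun y => u y ^ 2 - 2 * c * ((he n).eval y * u y)) gam :=
    hu.integrable_sq.sub (i1.const_mul _)
  simp_rw [e]
  rw [integral_add i3 (i2.const_mul _),
    integral_sub hu.integrable_sq (i1.const_mul _), integral_const_mul, integral_const_mul, ← hc,
    integral_he_mul_he, if_pos rfl]
  ring

/-- The local structure of `v` just before time `t₀` near `x₀`: the `n`-th Hermite mode carries
asymptotically all of the energy of the rescaled profiles, and the energy is at least a multiple of
`ℓ ^ (2 n + 1)`. -/
structure Mode (v : ℝ → ℝ → ℝ) (x₀ t₀ : ℝ) (n : ℕ) : Prop where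
  dom : ∀ ε > 0, ∀ᶠ ℓ in 𝓝[>] (0 : ℝ), energy v x₀ t₀ ℓ - coef v x₀ t₀ n ℓ ^ 2 ≤ ε * energy v x₀ t₀ ℓ
  lower : ∃ κ > 0, ∀ᶠ ℓ in 𝓝[>] (0 : ℝ), κ * ℓ ^ (2 * n + 1) ≤ energy v x₀ t₀ ℓ

lemma exists_mode (h : Sol v vt vx vxx t₁ t₂ B C) (h0 : t₀ ∈ Ioo t₁ t₂) {s : ℝ} (hs : s ∈ Ioo t₁ t₀)
    (hsm : 16 * C * (t₀ - s) ≤ 1) (hx : ∃ x, v x s ≠ 0) (x₀ : ℝ) : ∃ n, Mode v x₀ t₀ n := by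
  have hs1 := hs.1
  have hs2 := hs.2
  have hr2 : √(2 * (t₀ - s)) ^ 2 = 2 * (t₀ - s) := Real.sq_sqrt (by linarith)
  have hL2 : √(2 * (t₀ - t₁)) ^ 2 = 2 * (t₀ - t₁) := Real.sq_sqrt (by linarith)
  set r := √(2 * (t₀ - s))
  set L := √(2 * (t₀ - t₁)) with hLd
  have hr : r ∈ Ioo 0 L := ⟨Real.sqrt_pos.2 (by linarith), Real.sqrt_lt_sqrt (by linarith) (by linarith)⟩
  have hdyn : Dyn (coef v x₀ t₀) _ (energy v x₀ t₀) L C := h.dyn h0.2.le (by linarith)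
  have es : t₀ - r ^ 2 / 2 = s := by rw [hr2]; ring
  obtain ⟨n, h1, h2⟩ := hdyn.dominant hr (by rw [hr2]; linarith)
    (energy_pos h hr.1 (by rw [es]; exact ⟨hs1, hs2.trans h0.2⟩) (by rwa [es]))
  exact ⟨n, h1, h2⟩

end ZN

/-! ### Lower bound near a point -/

namespace ZN
open MeasureTheory ProbabilityTheory Polynomial
variable {v vt vx vxx : ℝ → ℝ → ℝ} {t₁ t₂ B C x₀ t₀ L : ℝ}

lemma cauchy_sqrt {u : ℝ → ℝ} (hu : MemLp u 2 gam) {η : ℝ} (hη : η ^ 2 = 1) :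
    |∫ y, u (y + η) ∂gam| ≤ √(rexp 1) * √(∫ y, u y ^ 2 ∂gam) := by
  rw [← Real.sqrt_mul (Real.exp_pos 1).le, integral_shift]
  refine Real.abs_le_sqrt ?_
  refine (cauchy_schwarz hu (memLp_shiftexp η)).trans ?_
  rw [integral_shiftexp_sq, hη, mul_comm]

lemma he_shift (n : ℕ) (η : ℝ) : ∫ y, (he n).eval (y + η) ∂gam = (√(n.factorial : ℝ))⁻¹ * η ^ n := by
  simp only [he, eval_mul, eval_C]
  rw [integral_const_mul, integral_He_shift]

/-- A profile close to its `n`-th Hermite mode has shifted mean of definite size. -/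
lemma shifted_mean {u : ℝ → ℝ} (hu : MemLp u 2 gam) (n : ℕ) {η : ℝ} (hη : η ^ 2 = 1) :
    (√(n.factorial : ℝ))⁻¹ * |∫ z, (he n).eval z * u z ∂gam|
      - √(rexp 1) * √(∫ y, u y ^ 2 ∂gam - (∫ z, (he n).eval z * u z ∂gam) ^ 2)
      ≤ |∫ y, u (y + η) ∂gam| := by
  have hr := integral_resid hu n
  set c := ∫ z, (he n).eval z * u z ∂gam
  have hm : MemLp (fun y => u y - c * (he n).eval y) 2 gam := hu.sub ((memLp_poly (he n)).const_mul c)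
  have h1 := cauchy_sqrt hm hη
  rw [hr] at h1
  have e : ∫ y, (u (y + η) - c * (he n).eval (y + η)) ∂gam
      = ∫ y, u (y + η) ∂gam - c * ((√(n.factorial : ℝ))⁻¹ * η ^ n) := by
    have hs : ∀ w : ℝ → ℝ, MemLp w 2 gam → Integrable (fun y => w y * rexp (η * y - η ^ 2 / 2)) gam :=
      fun w hw => hw.integrable_mul (memLp_shiftexp η)
    rw [integral_shift (u := fun y => u y - c * (he n).eval y), integral_shift (u := u), ← he_shift,
      integral_shift (u := fun y => (he n).eval y), ← integral_const_mul,
      ← integral_sub (hs u hu) ((hs _ (memLp_poly (he n))).const_mul c)]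
    congr 1; ext y; ring
  rw [e] at h1
  have h2 : |c * ((√(n.factorial : ℝ))⁻¹ * η ^ n)| = (√(n.factorial : ℝ))⁻¹ * |c| := by
    have hη1 : |η ^ n| = 1 := by
      have : |η| = 1 := by rw [← sq_eq_sq₀ (abs_nonneg _) zero_le_one, sq_abs, hη, one_pow]
      rw [abs_pow, this, one_pow]
    rw [abs_mul, abs_mul, hη1, abs_of_pos (inv_pos.2 (fact_sqrt_pos n))]
    ring
  have h3 := abs_sub_abs_le_abs_sub (c * ((√(n.factorial : ℝ))⁻¹ * η ^ n)) (∫ y, u (y + η) ∂gam)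
  rw [abs_sub_comm] at h3
  linarith

/-- Lower bound for `v` at time `t₀` near a point with dominant mode `n`. The value at `x₀ ± ℓ` is
close to the Gaussian average at scale `ℓ` centred there (`value_avg`), which is the shifted mean of
the profile centred at `x₀`. -/
theorem Mode.value_lower (h : Sol v vt vx vxx t₁ t₂ B C) (h0 : t₀ ∈ Ioo t₁ t₂) {n : ℕ}
    (hM : Mode v x₀ t₀ n) :
    ∃ κ > 0, ∀ᶠ ℓ in 𝓝[>] (0 : ℝ), ∀ η : ℝ, η ^ 2 = 1 →
      κ * ℓ ^ (2 * n + 1) ≤ v (x₀ + ℓ * η) t₀ ^ 2 := by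
  obtain ⟨κ, hκ, hlow⟩ := hM.lower
  set q := (√(n.factorial : ℝ))⁻¹ with hq
  have hq0 : 0 < q := inv_pos.2 (fact_sqrt_pos n)
  set L := √(2 * (t₀ - t₁)) with hLd
  have hL2 : L ^ 2 = 2 * (t₀ - t₁) := Real.sq_sqrt (by linarith [h0.1])
  have hL : t₁ ≤ t₀ - L ^ 2 / 2 := by rw [hL2]; linarith
  have hL0 : 0 < L := Real.sqrt_pos.2 (by linarith [h0.1])
  have hC := h.hC
  set E := √(rexp 1) with hE
  have hE0 : 0 < E := Real.sqrt_pos.2 (Real.exp_pos 1)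
  have hE2 : E ^ 2 = rexp 1 := Real.sq_sqrt (Real.exp_pos 1).le
  set ε := min (3 / 4) ((q / (8 * E)) ^ 2) with hε
  have hε0 : 0 < ε := lt_min (by norm_num) (by positivity)
  have hsm : ∀ᶠ ℓ in 𝓝[>] (0 : ℝ), C * ℓ ^ 2 / 2 * rexp (C * ℓ ^ 2 / 2) * E < q / 8 := by
    have : Tendsto (fun ℓ : ℝ => C * ℓ ^ 2 / 2 * rexp (C * ℓ ^ 2 / 2) * E) (𝓝 0)
        (𝓝 (C * 0 ^ 2 / 2 * rexp (C * 0 ^ 2 / 2) * E)) := Continuous.tendsto (by fun_prop) 0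
    simp only [ne_eq, OfNat.ofNat_ne_zero, not_false_eq_true, zero_pow, mul_zero, zero_mul, zero_div] at this
    exact nhdsWithin_le_nhds (this.eventually (gt_mem_nhds (by positivity)))
  refine ⟨q ^ 2 / 16 * κ, by positivity, ?_⟩
  filter_upwards [hM.dom ε hε0, hlow, hsm, Ioo_mem_nhdsGT hL0] with ℓ h1 h2 h3 hℓ η hη
  have ht := time_mem h0.2.le hL hℓ
  set u := par v x₀ t₀ ℓ with hu
  have cu : Continuous u := continuous_par h.cont ht
  have bu : ∀ y, |u y| ≤ B := fun y => h.bd _ _ ht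
  have mu := memLp_bdd cu bu
  have eu : ∀ y, par v (x₀ + ℓ * η) t₀ ℓ y = u (y + η) := by
    intro y
    simp only [hu, par]
    congr 1; ring
  have hv := value_avg (x₀ := x₀ + ℓ * η) h h0 hL hℓ
  simp_rw [eu] at hv
  have hmean := shifted_mean mu n hη
  have habs := cauchy_sqrt mu.abs hη
  simp only [Pi.abs_apply, sq_abs] at habs
  change energy v x₀ t₀ ℓ - (∫ z, (he n).eval z * u z ∂gam) ^ 2 ≤ _ at h1
  have eE : energy v x₀ t₀ ℓ = ∫ y, u y ^ 2 ∂gam := rfl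
  rw [eE] at h1 h2
  set c := ∫ z, (he n).eval z * u z ∂gam
  set H := ∫ y, u y ^ 2 ∂gam with hH
  have hH0 : 0 ≤ H := integral_nonneg fun y => sq_nonneg _
  set s := √H with hs
  have hs2 : s ^ 2 = H := Real.sq_sqrt hH0
  have hs0 : 0 ≤ s := Real.sqrt_nonneg _
  have hc : s / 2 ≤ |c| := by
    refine abs_le_of_sq_le_sq' ?_ (abs_nonneg _) |>.2
    have : ε * H ≤ 3 / 4 * H := mul_le_mul_of_nonneg_right (min_le_left _ _) hH0
    rw [sq_abs, div_pow, hs2]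
    linarith
  have hres : E * √(H - c ^ 2) ≤ q / 8 * s := by
    have : √(H - c ^ 2) ≤ q / (8 * E) * s := by
      rw [Real.sqrt_le_left (by positivity), mul_pow, hs2]
      exact h1.trans (mul_le_mul_of_nonneg_right (min_le_right _ _) hH0)
    calc _ ≤ E * (q / (8 * E) * s) := by gcongr
      _ = _ := by field_simp
  have habs' : ∫ y, |u (y + η)| ∂gam ≤ E * s := (le_abs_self _).trans habs
  have herr : C * ℓ ^ 2 / 2 * rexp (C * ℓ ^ 2 / 2) * ∫ y, |u (y + η)| ∂gam ≤ q / 8 * s := by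
    calc _ ≤ C * ℓ ^ 2 / 2 * rexp (C * ℓ ^ 2 / 2) * (E * s) := by gcongr
      _ = C * ℓ ^ 2 / 2 * rexp (C * ℓ ^ 2 / 2) * E * s := by ring
      _ ≤ _ := by gcongr
  have hfin : q / 4 * s ≤ |v (x₀ + ℓ * η) t₀| := by
    have := abs_sub_abs_le_abs_sub (∫ y, u (y + η) ∂gam) (v (x₀ + ℓ * η) t₀)
    rw [abs_sub_comm] at this
    have : q * (s / 2) ≤ q * |c| := by gcongr
    linarith
  calc q ^ 2 / 16 * κ * ℓ ^ (2 * n + 1) = q ^ 2 / 16 * (κ * ℓ ^ (2 * n + 1)) := by ring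
    _ ≤ q ^ 2 / 16 * H := by gcongr
    _ = (q / 4 * s) ^ 2 := by rw [← hs2]; ring
    _ ≤ _ := by rw [← sq_abs (v _ _)]; gcongr

end ZN

/-! ### Isolated zeros, persistence and sign pairs -/

namespace ZN
open MeasureTheory ProbabilityTheory Polynomial
variable {v vt vx vxx : ℝ → ℝ → ℝ} {t₁ t₂ B C x₀ t₀ L : ℝ}

lemma Mode.eventually_ne (h : Sol v vt vx vxx t₁ t₂ B C) (h0 : t₀ ∈ Ioo t₁ t₂) {n : ℕ}
    (hM : Mode v x₀ t₀ n) : ∀ᶠ x in 𝓝[≠] x₀, v x t₀ ≠ 0 := by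
  obtain ⟨κ, hκ, hlow⟩ := hM.value_lower h h0
  have ht : Tendsto (fun x => |x - x₀|) (𝓝[≠] x₀) (𝓝[>] 0) := by
    refine tendsto_nhdsWithin_iff.2 ⟨?_, ?_⟩
    · have : Tendsto (fun x => |x - x₀|) (𝓝 x₀) (𝓝 |x₀ - x₀|) := Continuous.tendsto (by fun_prop) x₀
      rw [sub_self, abs_zero] at this
      exact this.mono_left nhdsWithin_le_nhds
    · filter_upwards [self_mem_nhdsWithin] with x hx
      exact abs_pos.2 (sub_ne_zero.2 hx)
  filter_upwards [ht.eventually hlow, self_mem_nhdsWithin] with x hx hne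
  have hp : 0 < |x - x₀| := abs_pos.2 (sub_ne_zero.2 hne)
  have h1 := hx ((x - x₀) / |x - x₀|) (by rw [div_pow, sq_abs, div_self (by
    have := sub_ne_zero.2 hne; positivity)])
  rw [mul_div_cancel₀ _ hp.ne', add_sub_cancel] at h1
  intro h2
  rw [h2] at h1
  have : 0 < κ * |x - x₀| ^ (2 * n + 1) := by positivity
  linarith

lemma ne_zero_step (h : Sol v vt vx vxx t₁ t₂ B C) {s t : ℝ} (ht : t ∈ Ioo t₁ t₂) (hs : s ∈ Ioc t₁ t)
    (hsm : 16 * C * (t - s) ≤ 1) (hx : ∃ x, v x s ≠ 0) : ∃ x, v x t ≠ 0 := by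
  rcases hs.2.eq_or_lt with rfl | hlt
  · exact hx
  obtain ⟨n, hM⟩ := exists_mode h ht ⟨hs.1, hlt⟩ hsm hx 0
  exact (hM.eventually_ne h ht).exists

/-- A solution that is nonzero somewhere is nonzero at every time. -/
theorem ne_zero_all (h : Sol v vt vx vxx t₁ t₂ B C) {s : ℝ} (hs : s ∈ Ioo t₁ t₂) (hx : ∃ x, v x s ≠ 0)
    {t : ℝ} (ht : t ∈ Ioo t₁ t₂) : ∃ x, v x t ≠ 0 := by
  rcases le_total t s with hts | hst
  · exact ne_zero_mono h ht.1 hs.2 hts hx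
  have hC := h.hC
  -- forwards in time, `ne_zero_step` reaches only a bounded distance and is iterated
  obtain ⟨N, hN⟩ := exists_nat_gt (16 * C * (t - s))
  have hN0 : (0 : ℝ) < N := lt_of_le_of_lt (by have := sub_nonneg.2 hst; positivity) hN
  have hst' := sub_nonneg.2 hst
  have key : ∀ k : ℕ, k ≤ N → ∃ x, v x (s + k / N * (t - s)) ≠ 0 := by
    intro k
    induction k with
    | zero => intro _; simpa using hx
    | succ k ih =>
      intro hk
      have h1 := ih (by omega)
      have hk' : ((k + 1 : ℕ) : ℝ) / N ≤ 1 := (div_le_one hN0).2 (by exact_mod_cast hk)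
      have hd : ((k + 1 : ℕ) : ℝ) / N = k / N + 1 / N := by push_cast; ring
      have hk0 : 0 ≤ (k : ℝ) / N := by positivity
      have hN1 : 0 < 1 / (N : ℝ) := by positivity
      have m1 := mul_nonneg hk0 hst'
      have m2 := mul_nonneg hN1.le hst'
      have m3 := mul_le_mul_of_nonneg_right hk' hst'
      have e1 := congrArg (· * (t - s)) hd
      simp only [add_mul] at e1
      refine ne_zero_step h ⟨by linarith [hs.1], by linarith [ht.2]⟩
        ⟨by linarith [hs.1], by linarith⟩ ?_ h1
      have : s + ((k + 1 : ℕ) : ℝ) / N * (t - s) - (s + k / N * (t - s)) = (t - s) / N := by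
        rw [hd]; ring
      rw [this, ← mul_div_assoc, div_le_one hN0]
      exact hN.le
  have := key N le_rfl
  rwa [div_self hN0.ne', one_mul, add_sub_cancel] at this

lemma exists_mode_all (h : Sol v vt vx vxx t₁ t₂ B C) {s : ℝ} (hs : s ∈ Ioo t₁ t₂) (hx : ∃ x, v x s ≠ 0)
    (h0 : t₀ ∈ Ioo t₁ t₂) (x₀ : ℝ) : ∃ n, Mode v x₀ t₀ n := by
  have hC := h.hC
  have hev : ∀ᶠ r in 𝓝[<] t₀, 16 * C * (t₀ - r) < 1 := by
    have : Tendsto (fun r : ℝ => 16 * C * (t₀ - r)) (𝓝 t₀) (𝓝 (16 * C * (t₀ - t₀))) :=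
      Continuous.tendsto (by fun_prop) t₀
    rw [sub_self, mul_zero] at this
    exact nhdsWithin_le_nhds (this.eventually (gt_mem_nhds one_pos))
  obtain ⟨r, hr1, hr2⟩ := (hev.and (Ioo_mem_nhdsLT h0.1)).exists
  exact exists_mode h h0 hr2 hr1.le (ne_zero_all h hs hx ⟨hr2.1, hr2.2.trans h0.2⟩) x₀

/-- At a multiple zero the dominant mode has degree at least two: `v(x₀ + ℓ, t₀)` is `O(ℓ²)` there,
which is too small for `n ≤ 1` in `Mode.value_lower`. -/
lemma Mode.two_le (h : Sol v vt vx vxx t₁ t₂ B C) (h0 : t₀ ∈ Ioo t₁ t₂) {n : ℕ}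
    (hM : Mode v x₀ t₀ n) (hv : v x₀ t₀ = 0) (hvx : vx x₀ t₀ = 0) : 2 ≤ n := by
  by_contra! hn
  obtain ⟨κ, hκ, hlow⟩ := hM.value_lower h h0
  have hcont : ContinuousOn (fun y => vxx y t₀) (Icc x₀ (x₀ + 1)) :=
    h.cxx.comp (f := fun y : ℝ => (y, t₀)) (by fun_prop) (fun y _ => ⟨mem_univ _, h0⟩)
  obtain ⟨K, hK⟩ := isCompact_Icc.exists_bound_of_continuousOn hcont
  have hK0 : 0 ≤ K := (norm_nonneg _).trans (hK x₀ ⟨le_rfl, by linarith⟩)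
  have b1 : ∀ y ∈ Icc x₀ (x₀ + 1), |vx y t₀| ≤ K * (y - x₀) := by
    intro y hy
    have := (convex_Icc x₀ (x₀ + 1)).norm_image_sub_le_of_norm_hasDerivWithin_le
      (fun z _ => (h.dxx z t₀ h0).hasDerivWithinAt) hK (left_mem_Icc.2 (by linarith)) hy
    rw [hvx, sub_zero, Real.norm_eq_abs, Real.norm_eq_abs, abs_of_nonneg (sub_nonneg.2 hy.1)] at this
    exact this
  have b2 : ∀ ℓ ∈ Ioo (0 : ℝ) 1, |v (x₀ + ℓ) t₀| ≤ K * ℓ ^ 2 := by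
    intro ℓ hℓ
    have := (convex_Icc x₀ (x₀ + ℓ)).norm_image_sub_le_of_norm_hasDerivWithin_le (C := K * ℓ)
      (fun z _ => (h.dx z t₀ h0).hasDerivWithinAt) (fun z hz => by
        refine (b1 z ⟨hz.1, hz.2.trans (by linarith [hℓ.2])⟩).trans ?_
        have := hz.2
        gcongr
        linarith) (left_mem_Icc.2 (by linarith [hℓ.1])) (right_mem_Icc.2 (by linarith [hℓ.1]))
    rw [hv, sub_zero, Real.norm_eq_abs, Real.norm_eq_abs, add_sub_cancel_left, abs_of_pos hℓ.1] at this
    linarith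
  have hsm : ∀ᶠ ℓ in 𝓝[>] (0 : ℝ), K ^ 2 * ℓ < κ := by
    have : Tendsto (fun ℓ : ℝ => K ^ 2 * ℓ) (𝓝 0) (𝓝 (K ^ 2 * 0)) := Continuous.tendsto (by fun_prop) 0
    rw [mul_zero] at this
    exact nhdsWithin_le_nhds (this.eventually (gt_mem_nhds hκ))
  obtain ⟨ℓ, h1, h2, h3⟩ := (hlow.and (hsm.and (Ioo_mem_nhdsGT one_pos))).exists
  have hℓ := h3.1
  have c1 := h1 1 (by norm_num)
  rw [mul_one] at c1
  have c2 := pow_le_pow_left₀ (abs_nonneg _) (b2 ℓ h3) 2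
  rw [sq_abs] at c2
  have c3 : ℓ ^ 3 ≤ ℓ ^ (2 * n + 1) := pow_le_pow_of_le_one hℓ.le h3.2.le (by omega)
  have c4 : κ * ℓ ^ 3 ≤ κ * ℓ ^ (2 * n + 1) := by gcongr
  have c5 : K ^ 2 * ℓ * ℓ ^ 3 < κ * ℓ ^ 3 := by gcongr
  nlinarith

/-- If the dominant mode at `(x₀, t₀)` has degree at least two, then just before `t₀` both sign
patterns `(+,-)` and `(-,+)` occur arbitrarily close to `x₀`. -/
lemma Mode.pairs (h : Sol v vt vx vxx t₁ t₂ B C) (h0 : t₀ ∈ Ioo t₁ t₂) {n : ℕ}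
    (hM : Mode v x₀ t₀ n) (hn : 2 ≤ n) {δ e : ℝ} (hδ : 0 < δ) (he1 : e = 1 ∨ e = -1) :
    ∀ᶠ ℓ in 𝓝[>] (0 : ℝ), ∃ z₁ z₂, x₀ - δ < z₁ ∧ z₁ < z₂ ∧ z₂ < x₀ + δ ∧
      0 < e * v z₁ (t₀ - ℓ ^ 2 / 2) ∧ e * v z₂ (t₀ - ℓ ^ 2 / 2) < 0 := by
  have he2 : e ^ 2 = 1 := by rcases he1 with h | h <;> rw [h] <;> norm_num
  set L := √(2 * (t₀ - t₁)) with hLd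
  have hL2 : L ^ 2 = 2 * (t₀ - t₁) := Real.sq_sqrt (by linarith [h0.1])
  have hL : t₁ ≤ t₀ - L ^ 2 / 2 := by rw [hL2]; linarith
  have hL0 : 0 < L := Real.sqrt_pos.2 (by linarith [h0.1])
  have hmem : ∀ ℓ ∈ Ioo 0 L, MemLp (par v x₀ t₀ ℓ) 2 gam := fun ℓ hℓ =>
    memLp_bdd (continuous_par h.cont (time_mem h0.2.le hL hℓ)) fun y => h.bd _ _ (time_mem h0.2.le hL hℓ)
  have hne : ∀ᶠ ℓ in 𝓝[>] (0 : ℝ), coef v x₀ t₀ n ℓ ≠ 0 := by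
    obtain ⟨κ, hκ, hlow⟩ := hM.lower
    filter_upwards [hlow, hM.dom (1 / 2) (by norm_num), self_mem_nhdsWithin] with ℓ h1 h2 h3 h4
    have h3' : 0 < ℓ := h3
    have : 0 < κ * ℓ ^ (2 * n + 1) := by positivity
    rw [h4] at h2
    linarith
  have hclose : ∀ ε > 0, ∀ᶠ ℓ in 𝓝[>] (0 : ℝ), coef v x₀ t₀ n ℓ ≠ 0 ∧
      ∫ y, (par v x₀ t₀ ℓ y - coef v x₀ t₀ n ℓ * (he n).eval y) ^ 2 ∂gam < ε * coef v x₀ t₀ n ℓ ^ 2 := by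
    intro ε hε
    filter_upwards [hne, hM.dom (min (1 / 2) (ε / 4)) (by positivity), Ioo_mem_nhdsGT hL0] with ℓ h1 h2 h3
    refine ⟨h1, ?_⟩
    have e1 : ∫ y, (par v x₀ t₀ ℓ y - coef v x₀ t₀ n ℓ * (he n).eval y) ^ 2 ∂gam
      = energy v x₀ t₀ ℓ - coef v x₀ t₀ n ℓ ^ 2 := integral_resid (hmem ℓ h3) n
    rw [e1]
    have hE : 0 ≤ energy v x₀ t₀ ℓ := integral_nonneg fun y => sq_nonneg _
    have k1 := mul_le_mul_of_nonneg_right (min_le_left (1 / 2) (ε / 4)) hE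
    have k2 := mul_le_mul_of_nonneg_right (min_le_right (1 / 2) (ε / 4)) hE
    have k3 : 0 < coef v x₀ t₀ n ℓ ^ 2 := by positivity
    nlinarith
  have hP : ∀ s : ℝ, (s = 1 ∨ s = -1) → ∀ᶠ ℓ in 𝓝[>] (0 : ℝ), 0 < coef v x₀ t₀ n ℓ * s * e →
      ∃ z₁ z₂, x₀ - δ < z₁ ∧ z₁ < z₂ ∧ z₂ < x₀ + δ ∧
      0 < e * v z₁ (t₀ - ℓ ^ 2 / 2) ∧ e * v z₂ (t₀ - ℓ ^ 2 / 2) < 0 := by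
    intro s hs
    have hs2 : s ^ 2 = 1 := by rcases hs with h | h <;> rw [h] <;> norm_num
    obtain ⟨a, b, hab, ha, hb⟩ := he_pattern hn s hs
    have hρ : 0 < (b - a) / 2 := by linarith
    obtain ⟨ε₁, hε₁, H₁⟩ := near_sign (he n) (right_ne_zero_of_mul ha.ne') hρ
    obtain ⟨ε₂, hε₂, H₂⟩ := near_sign (he n) (right_ne_zero_of_mul hb.ne) hρ
    set R := |a| + |b| + (b - a) / 2 with hR
    have hR0 : 0 ≤ R := by positivity
    have hsm : ∀ᶠ ℓ in 𝓝[>] (0 : ℝ), ℓ * R < δ := by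
      have : Tendsto (fun ℓ : ℝ => ℓ * R) (𝓝 0) (𝓝 (0 * R)) := Continuous.tendsto (by fun_prop) 0
      rw [zero_mul] at this
      exact nhdsWithin_le_nhds (this.eventually (gt_mem_nhds hδ))
    filter_upwards [hclose ε₁ hε₁, hclose ε₂ hε₂, hsm, Ioo_mem_nhdsGT hL0] with ℓ c1 c2 c3 hℓ hpos
    have hℓ0 : 0 < ℓ := hℓ.1
    obtain ⟨y₁, hy₁, k₁⟩ := H₁ _ _ (hmem ℓ hℓ) c1.1 c1.2
    obtain ⟨y₂, hy₂, k₂⟩ := H₂ _ _ (hmem ℓ hℓ) c2.1 c2.2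
    have hlt : y₁ < y₂ := by linarith [hy₁.2, hy₂.1]
    have l1 : -R < y₁ := by linarith [neg_abs_le a, abs_nonneg b, hy₁.1]
    have l2 : y₂ < R := by linarith [le_abs_self b, abs_nonneg a, hy₂.2]
    refine ⟨x₀ + ℓ * y₁, x₀ + ℓ * y₂, by nlinarith, by nlinarith, by nlinarith, ?_, ?_⟩
    · change 0 < e * par v x₀ t₀ ℓ y₁
      have : 0 < (coef v x₀ t₀ n ℓ * s * e) * (s * (he n).eval a) * (e * par v x₀ t₀ ℓ y₁) := by
        calc 0 < coef v x₀ t₀ n ℓ * (he n).eval a * par v x₀ t₀ ℓ y₁ := k₁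
          _ = s ^ 2 * e ^ 2 * (coef v x₀ t₀ n ℓ * (he n).eval a * par v x₀ t₀ ℓ y₁) := by
            rw [hs2, he2]; ring
          _ = _ := by ring
      exact (mul_pos_iff_of_pos_left (mul_pos hpos ha)).1 this
    · change e * par v x₀ t₀ ℓ y₂ < 0
      have : 0 < (coef v x₀ t₀ n ℓ * s * e) * (s * (he n).eval b) * (e * par v x₀ t₀ ℓ y₂) := by
        calc 0 < coef v x₀ t₀ n ℓ * (he n).eval b * par v x₀ t₀ ℓ y₂ := k₂
          _ = s ^ 2 * e ^ 2 * (coef v x₀ t₀ n ℓ * (he n).eval b * par v x₀ t₀ ℓ y₂) := by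
            rw [hs2, he2]; ring
          _ = _ := by ring
      by_contra! hcon
      have := mul_nonpos_of_nonpos_of_nonneg (mul_neg_of_pos_of_neg hpos hb).le hcon
      linarith
  filter_upwards [hP 1 (Or.inl rfl), hP (-1) (Or.inr rfl), hne] with ℓ h1 h2 h3
  have he0 : e ≠ 0 := by rintro rfl; norm_num at he2
  rcases (mul_ne_zero h3 he0).lt_or_gt with hlt | hgt
  · exact h2 (by linarith)
  · exact h1 (by linarith)

end ZN

/-! ### Loss of sign changes at a multiple zero -/

namespace ZN
open MeasureTheory ProbabilityTheory Polynomial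
variable {v vt vx vxx : ℝ → ℝ → ℝ} {t₁ t₂ B C x₀ t₀ L : ℝ}

/-- Passing a multiple zero backwards in time, an alternating pattern gains two entries: a pair of
suitable signs is inserted near `x₀` between the points to the left and to the right of it. -/
lemma pattern_gain (h : Sol v vt vx vxx t₁ t₂ B C) (h0 : t₀ ∈ Ioo t₁ t₂) {n : ℕ}
    (hM : Mode v x₀ t₀ n) (hv : v x₀ t₀ = 0) (hvx : vx x₀ t₀ = 0) {k : ℕ} {e : ℝ} (he : e = 1 ∨ e = -1)
    (hp : RealizesPattern (fun x => v x t₀) (k + 1) (fun i => (-1) ^ i * e)) {t : ℝ} (ht : t ∈ Ioo t₁ t₀) :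
    RealizesPattern (fun x => v x t) (k + 3) (fun i => (-1) ^ i * e) := by
  obtain ⟨y, hy, hyp⟩ := hp
  simp only at hyp
  have hyne : ∀ i < k + 1, y i ≠ x₀ := by
    intro i hi hh
    have := hyp i hi
    rw [hh, hv, mul_zero] at this
    exact this.false
  -- `p` is the number of points of the pattern to the left of `x₀`
  obtain ⟨p, hp, hpl, hpr⟩ : ∃ p ≤ k + 1, (∀ i < p, y i < x₀) ∧ ∀ i, p ≤ i → i < k + 1 → x₀ < y i := by
    have ex : ∃ i, k + 1 ≤ i ∨ x₀ ≤ y i := ⟨k + 1, Or.inl le_rfl⟩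
    refine ⟨Nat.find ex, Nat.find_min' ex (Or.inl le_rfl), fun i hi => ?_, fun i hi hk => ?_⟩
    · have := Nat.find_min ex hi
      push Not at this
      exact this.2
    · rcases Nat.find_spec ex with h1 | h1
      · omega
      · exact lt_of_le_of_ne (h1.trans (hy.monotone hi)) (hyne i hk).symm
  obtain ⟨δ, hδ, hδ0⟩ : ∃ δ : ℝ, (∀ i ∈ Finset.range (k + 1), δ < |y i - x₀|) ∧ 0 < δ := by
    have : ∀ᶠ δ : ℝ in 𝓝[>] 0, ∀ i ∈ Finset.range (k + 1), δ < |y i - x₀| := by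
      rw [Filter.eventually_all_finset]
      intro i hi
      exact nhdsWithin_le_nhds (gt_mem_nhds (abs_pos.2 (sub_ne_zero.2 (hyne i (Finset.mem_range.1 hi)))))
    exact (this.and self_mem_nhdsWithin).exists
  have hct : Tendsto (fun ℓ : ℝ => t₀ - ℓ ^ 2 / 2) (𝓝[>] 0) (𝓝 t₀) := by
    have : Tendsto (fun ℓ : ℝ => t₀ - ℓ ^ 2 / 2) (𝓝 0) (𝓝 (t₀ - 0 ^ 2 / 2)) :=
      Continuous.tendsto (by fun_prop) 0
    simp only [ne_eq, OfNat.ofNat_ne_zero, not_false_eq_true, zero_pow, zero_div, sub_zero] at this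
    exact this.mono_left nhdsWithin_le_nhds
  have hpts : ∀ᶠ ℓ in 𝓝[>] (0 : ℝ), ∀ i ∈ Finset.range (k + 1),
      0 < (-1) ^ i * e * v (y i) (t₀ - ℓ ^ 2 / 2) := by
    rw [Filter.eventually_all_finset]
    intro i hi
    have hc : ContinuousAt (fun s => (-1) ^ i * e * v (y i) s) t₀ :=
      (h.dt (y i) t₀ h0).continuousAt.const_mul _
    exact (hc.tendsto.comp hct).eventually (lt_mem_nhds (hyp i (Finset.mem_range.1 hi)))
  obtain ⟨ℓ, ⟨z₁, z₂, hz1, hz12, hz2, s1, s2⟩, hs, htt, hℓ⟩ :=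
    ((hM.pairs h h0 (hM.two_le h h0 hv hvx) hδ0 (alt_sign he p)).and
      (hpts.and ((hct.eventually (lt_mem_nhds ht.2)).and self_mem_nhdsWithin))).exists
  have hℓ0 : 0 < ℓ := hℓ
  set τ := t₀ - ℓ ^ 2 / 2 with hτ
  have hτ0 : τ < t₀ := by have : 0 < ℓ ^ 2 := by positivity
                          linarith
  have hτm : τ ∈ Ioo t₁ t₂ := ⟨ht.1.trans htt, hτ0.trans h0.2⟩
  have hl : ∀ i < p, y i < z₁ := by
    intro i hi
    have h1 := hδ i (Finset.mem_range.2 (by omega))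
    have h2 := hpl i hi
    rw [abs_of_neg (by linarith)] at h1
    linarith
  have hr : ∀ i, p ≤ i → i < k + 1 → z₂ < y i := by
    intro i hi hk
    have h1 := hδ i (Finset.mem_range.2 hk)
    have h2 := hpr i hi hk
    rw [abs_of_pos (by linarith)] at h1
    linarith
  set M : ℕ → ℝ := fun j => if j < p then y j else if j = p then z₁ else if j = p + 1 then z₂
    else max (y (j - 2)) z₂ with hMd
  have hMm : Monotone M := by
    refine monotone_nat_of_le_succ fun j => ?_
    simp only [hMd]
    rcases lt_trichotomy j p with hj | hj | hj
    · rw [if_pos hj]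
      split_ifs with h1 h2
      · exact hy.monotone (Nat.le_succ j)
      · exact (hl j hj).le
      · omega
      · omega
    · subst hj
      simp [hz12.le]
    · split_ifs <;> first
        | omega
        | exact le_max_right _ _
        | exact max_le_max_right _ (hy.monotone (by omega))
  have hfin : RealizesPattern (fun x => v x τ) (k + 3) (fun i => (-1) ^ i * e) := by
    refine realizes_of_monotone (h.cont_x hτm) hMm fun i hi => ?_
    simp only [hMd]
    split_ifs with h1 h2 h3
    · exact hs i (Finset.mem_range.2 (by omega))
    · rw [h2]; exact s1
    · rw [h3, pow_succ]
      linarith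
    · obtain ⟨j, rfl⟩ : ∃ j, i = j + 2 := ⟨i - 2, by omega⟩
      rw [Nat.add_sub_cancel, max_eq_left (hr j (by omega) (by omega)).le, pow_add]
      simpa using hs j (Finset.mem_range.2 (by omega))
  exact pattern_mono h ht.1 hτm.2 htt (fun i _ => alt_sign he i) hfin

lemma signChanges_gain (h : Sol v vt vx vxx t₁ t₂ B C) (h0 : t₀ ∈ Ioo t₁ t₂) {n : ℕ}
    (hM : Mode v x₀ t₀ n) (hv : v x₀ t₀ = 0) (hvx : vx x₀ t₀ = 0) {m : ℕ} (hm : 1 ≤ m)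
    (hc : SignChanges (fun x => v x t₀) m) {t : ℝ} (ht : t ∈ Ioo t₁ t₀) :
    SignChanges (fun x => v x t) (m + 2) := by
  obtain ⟨e, he, hp⟩ := pattern_of_signChanges hm hc
  exact signChanges_of_pattern (pattern_gain h h0 hM hv hvx he hp ht)

lemma signChanges_two (h : Sol v vt vx vxx t₁ t₂ B C) (h0 : t₀ ∈ Ioo t₁ t₂) {n : ℕ}
    (hM : Mode v x₀ t₀ n) (hv : v x₀ t₀ = 0) (hvx : vx x₀ t₀ = 0) {t : ℝ} (ht : t ∈ Ioo t₁ t₀) :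
    SignChanges (fun x => v x t) 2 := by
  obtain ⟨x, hx⟩ := (hM.eventually_ne h h0).exists
  have : ∃ e : ℝ, (e = 1 ∨ e = -1) ∧ 0 < e * v x t₀ := by
    rcases lt_or_gt_of_ne hx with h | h
    · exact ⟨-1, by simp, by linarith⟩
    · exact ⟨1, by simp, by linarith⟩
  obtain ⟨e, he, hpos⟩ := this
  refine signChanges_of_pattern (pattern_gain (k := 0) h h0 hM hv hvx he
    ⟨fun i => x + i, fun a b hab => by simpa using hab, fun i hi => ?_⟩ ht)
  obtain rfl : i = 0 := by omega
  simpa using hpos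

/-- A multiple zero at time `t₀` makes the zero number drop by at least two. -/
theorem zeroNumber_drop (h : Sol v vt vx vxx t₁ t₂ B C) (h0 : t₀ ∈ Ioo t₁ t₂) {n : ℕ}
    (hM : Mode v x₀ t₀ n) (hv : v x₀ t₀ = 0) (hvx : vx x₀ t₀ = 0) {t s : ℝ} (ht : t ∈ Ioo t₁ t₀)
    (hs : s ∈ Ioo t₀ t₂) (hnz : ∀ r ∈ Ioo t₁ t₂, ∃ x, v x r ≠ 0) :
    (0 : WithBot ℕ∞) ≤ zeroNumber (fun x => v x s) ∧
      zeroNumber (fun x => v x s) + 2 ≤ zeroNumber (fun x => v x t) := by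
  have hne : ∀ r ∈ Ioo t₁ t₂, (fun x => v x r) ≠ 0 := by
    intro r hr hh
    obtain ⟨x, hx⟩ := hnz r hr
    exact hx (congrFun hh x)
  rw [zeroNumber, zeroNumber, if_neg (hne s ⟨h0.1.trans hs.1, hs.2⟩),
    if_neg (hne t ⟨ht.1, ht.2.trans h0.2⟩)]
  set S := {k : ℕ∞ | ∃ m : ℕ, k = (m : ℕ∞) ∧ 1 ≤ m ∧ SignChanges (fun x => v x s) m}
  set T := {k : ℕ∞ | ∃ m : ℕ, k = (m : ℕ∞) ∧ 1 ≤ m ∧ SignChanges (fun x => v x t) m}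
  have h2 : (2 : ℕ∞) ≤ sSup T := le_sSup ⟨2, rfl, by norm_num, signChanges_two h h0 hM hv hvx ht⟩
  have hST : sSup S ≤ sSup T - 2 := by
    refine sSup_le ?_
    rintro _ ⟨m, rfl, hm, hc⟩
    refine ENat.le_sub_of_add_le_right (by decide) ?_
    have := signChanges_mono h h0.1 hs.2 hs.1 hm hc
    exact le_sSup ⟨m + 2, by push_cast; rfl, by omega, signChanges_gain h h0 hM hv hvx hm this ht⟩
  have hfin : sSup S + 2 ≤ sSup T := by
    calc _ ≤ sSup T - 2 + 2 := by gcongr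
      _ = _ := tsub_add_cancel_of_le h2
  constructor
  · exact_mod_cast zero_le (a := sSup S)
  · exact WithBot.coe_le_coe.2 hfin

end ZN

/-- **Lemma 2.2** (zero-number properties for linear parabolic equations). For a bounded,
not identically vanishing classical solution `v` of `v_t = v_xx + c(x,t) v` on `ℝ × (t₁,t₂)`
with bounded coefficient `c`: the zeros of `v(·,t)` do not accumulate; `Z[v(·,t)]` and the
realized sign patterns are nonincreasing in `t`; and a degenerate zero drops `Z` by at least 2. -/
theorem zero_number_linear_parabolic
    (t₁ t₂ : ℝ) (ht : t₁ < t₂) (c v : ℝ → ℝ → ℝ)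
    (hcbd : ∃ C : ℝ, ∀ x t : ℝ, t ∈ Set.Ioo t₁ t₂ → |c x t| ≤ C)
    (hvbd : ∃ C : ℝ, ∀ x t : ℝ, t ∈ Set.Ioo t₁ t₂ → |v x t| ≤ C)
    (hsol : ∃ vt vx vxx : ℝ → ℝ → ℝ,
      (∀ x : ℝ, ∀ t ∈ Set.Ioo t₁ t₂, HasDerivAt (fun s => v x s) (vt x t) t) ∧
      (∀ x : ℝ, ∀ t ∈ Set.Ioo t₁ t₂, HasDerivAt (fun y => v y t) (vx x t) x) ∧
      (∀ x : ℝ, ∀ t ∈ Set.Ioo t₁ t₂, HasDerivAt (fun y => vx y t) (vxx x t) x) ∧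
      ContinuousOn (fun p : ℝ × ℝ => vt p.1 p.2) (Set.univ ×ˢ Set.Ioo t₁ t₂) ∧
      ContinuousOn (fun p : ℝ × ℝ => vx p.1 p.2) (Set.univ ×ˢ Set.Ioo t₁ t₂) ∧
      ContinuousOn (fun p : ℝ × ℝ => vxx p.1 p.2) (Set.univ ×ˢ Set.Ioo t₁ t₂) ∧
      (∀ x : ℝ, ∀ t ∈ Set.Ioo t₁ t₂, vt x t = vxx x t + c x t * v x t))
    (hne : ∃ x t : ℝ, t ∈ Set.Ioo t₁ t₂ ∧ v x t ≠ 0) :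
    (∀ t ∈ Set.Ioo t₁ t₂, ∀ x₀ : ℝ, ¬ AccPt x₀ (Filter.principal {x : ℝ | v x t = 0})) ∧
    (∀ t'' ∈ Set.Ioo t₁ t₂, ∀ t' ∈ Set.Ioo t₁ t₂, t'' < t' →
      zeroNumber (fun x => v x t') ≤ zeroNumber (fun x => v x t'') ∧
      ∀ (m : ℕ) (ε : ℕ → ℝ), (∀ i < m, ε i = 1 ∨ ε i = -1) →
        RealizesPattern (fun x => v x t') m ε → RealizesPattern (fun x => v x t'') m ε) ∧
    (∀ x' : ℝ, ∀ t' ∈ Set.Ioo t₁ t₂, v x' t' = 0 → deriv (fun y => v y t') x' = 0 →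
      ∀ t ∈ Set.Ioo t₁ t', ∀ s ∈ Set.Ioo t' t₂,
        zeroNumber (fun x => v x t) ≠ ⊤ →
        (0 : WithBot ℕ∞) ≤ zeroNumber (fun x => v x s) ∧
        zeroNumber (fun x => v x s) + 2 ≤ zeroNumber (fun x => v x t)) := by
  obtain ⟨C, hC⟩ := hcbd
  obtain ⟨B, hB⟩ := hvbd
  obtain ⟨vt, vx, vxx, hdt, hdx, hdxx, hct, hcx, hcxx, heq⟩ := hsol
  obtain ⟨x₁, τ, hτ, hx₁⟩ := hne
  have h : ZN.Sol v vt vx vxx t₁ t₂ B |C| :=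
    { dt := hdt, dx := hdx, dxx := hdxx, ct := hct, cx := hcx, cxx := hcxx
      bd := fun x t ht => hB x t ht
      hC := abs_nonneg C
      eq := fun x t ht => by
        rw [heq x t ht, add_sub_cancel_left, abs_mul]
        exact mul_le_mul_of_nonneg_right ((hC x t ht).trans (le_abs_self C)) (abs_nonneg _) }
  refine ⟨fun t ht x₀ hacc => ?_, fun t'' h'' t' h' hlt => ⟨?_, fun m ε hε hp => ?_⟩, ?_⟩
  · obtain ⟨n, hM⟩ := ZN.exists_mode_all h hτ ⟨x₁, hx₁⟩ ht x₀
    have h1 := hM.eventually_ne h ht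
    rw [accPt_iff_frequently_nhdsNE] at hacc
    exact hacc h1
  · exact ZN.zeroNumber_mono h h''.1 h'.2 hlt
  · exact ZN.pattern_mono h h''.1 h'.2 hlt hε hp
  · intro x' t' ht' hv hd t hit s his _
    rw [(hdx x' t' ht').deriv] at hd
    obtain ⟨n, hM⟩ := ZN.exists_mode_all h hτ ⟨x₁, hx₁⟩ ht' x'
    exact ZN.zeroNumber_drop h ht' hM hv hd hit his
      fun r hr => ZN.ne_zero_all h hτ ⟨x₁, hx₁⟩ hr

end
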